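/- arXiv:2109.14179 — 4 statements merged into one kernel-verified Lean document; each statement's English description precedes it below -/
import Mathlib

section
/- Let p be a prime and let F ⊆ ℤ³ be an exact cluster with |F| = p². Then there exists a weakly periodic F-tiling of ℤ³, i.e., an F-tiling T ⊆ ℤ³ that can be partitioned into finitely many 1-periodic subsets. -/
/-!
A cluster `F ⊆ ℤ³` of size `p ^ 2` that tiles is shown to have a tiling `T` with a nonzero period,
which is in particular weakly periodic. A tiling is encoded by its indicator function `g`, satisfying
`∑ f ∈ F, g (x - f) = 1` for all `x`.

If `F` lies in a plane (`Planar`), repeating one layer of a given tiling gives a periodic one.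

*Structure of tilings.* Suppose that `F` is not planar. Reducing the `l`-th power of `∑ f ∈ F, X ^ f`
modulo a prime `l` shows that tilings survive dilation of `F` by numbers with large prime factors
(`Tile.dilate`), and after passing to a limit of translates also by a prescribed finite set of numbers
coprime to `p` (`exists_tile_dilate`). Let `P` be a prime ideal of the group algebra containing the
annihilator of `g - 1 / |F|`. The tiling identities for the dilates `1 + p k` and a Vandermonde argument
show that `p` divides the size of every class of `F` modulo `{u | X ^ (p u) = 1 mod P}`
(`dvd_card_idealPeriods`). Geometry in `ℤ³` and `|F| = p ^ 2` then show that this group contains a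
bounded multiple of a fixed line `ℤ b` or of one of finitely many planes not containing `b`
(`exists_line_and_planes`). Hence a product of difference operators lies in every such `P`, and by
boundedness of `g` it annihilates `g - 1 / |F|`. Averaging gives `g = h + ∑ K, k K` with `h` periodic
along `b` and `k K` periodic along `K` (`exists_decomp`).

*Elimination of planes.* The planes are removed one at a time (`eliminate`). Let `l = ker π` be one of
them, and `v` the mean of `g` over `q • l`, a function with values in `[0, 1]` which depends up to
finite index on the transversal coordinate only. Since `g` is integer-valued, `v` is modulo `1` a sum of
functions each with a transversal period, hence polynomial modulo `1` along the transversal. By Weyl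
equidistribution (`mean_eC_eq_zero`), its restriction to each progression of a suitable step is
constant modulo `1`, or else has mean `1/2` and avoids the value `1/2` almost always
(`unit_seq_dichotomy`). Averaging the identities for dilates `1 + q' m` shows that the sum of `v` over
each level of `π` in a translate of `-F` is constant along the transversal (`level_sum_invariant`), so
if one term moves, either two terms have mean `1/2` and the others mean `0`, or the moving terms have
values `0` and `1`; in both cases the sum is `1` and all terms outside this level vanish. Rounding
`v` at a generic height is therefore consistent (`rounding`, `exists_rounded`). Replacing `g` by
this rounding where `v` moves, and by a limit of translates of `g` that vanishes where `v` does
elsewhere, gives a tiling whose decomposition no longer involves `l`.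
-/

/-- `T` is an `F`-tiling of `ℤ³`: every point of `ℤ³` is uniquely expressible as `a + t`
with `a ∈ F`, `t ∈ T`. -/
def IsTiling (F T : Set (Fin 3 → ℤ)) : Prop :=
  ∀ q : Fin 3 → ℤ, ∃! p : (Fin 3 → ℤ) × (Fin 3 → ℤ), p.1 ∈ F ∧ p.2 ∈ T ∧ q = p.1 + p.2

/-- `S ⊆ ℤ³` is `i`-periodic: invariant under some rank-`i` subgroup of `ℤ³`. -/
def PeriodicOfRank (i : ℕ) (S : Set (Fin 3 → ℤ)) : Prop :=
  ∃ Λ : Submodule ℤ (Fin 3 → ℤ), Module.finrank ℤ Λ = i ∧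
    ∀ g ∈ Λ, (fun x => g + x) '' S = S

/-- `S` is weakly periodic: a finite partition into `1`-periodic subsets. -/
def WeaklyPeriodic (S : Set (Fin 3 → ℤ)) : Prop :=
  ∃ (k : ℕ) (parts : Fin k → Set (Fin 3 → ℤ)),
    (∀ i j, i ≠ j → Disjoint (parts i) (parts j)) ∧
    (⋃ i, parts i) = S ∧
    ∀ i, PeriodicOfRank 1 (parts i)

open Filter Topology

/-! ### Bounded functions and means of sequences -/

/-- Boundedness of a function with values in a normed group. -/
def Bdd {α E : Type*} [NormedAddCommGroup E] (f : α → E) : Prop := ∃ C : ℝ, ∀ x, ‖f x‖ ≤ C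

section BddLemmas
variable {α β E : Type*} [NormedAddCommGroup E]

theorem Bdd.comp {f : α → E} (hf : Bdd f) (u : β → α) : Bdd (fun x => f (u x)) :=
  hf.imp fun _ h x => h (u x)

theorem Bdd.const (c : E) : Bdd (fun _ : α => c) := ⟨‖c‖, fun _ => le_rfl⟩

theorem Bdd.add {f g : α → E} (hf : Bdd f) (hg : Bdd g) : Bdd (fun x => f x + g x) := by
  obtain ⟨C, hC⟩ := hf
  obtain ⟨D, hD⟩ := hg
  exact ⟨C + D, fun x => (norm_add_le _ _).trans (add_le_add (hC x) (hD x))⟩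

theorem Bdd.neg {f : α → E} (hf : Bdd f) : Bdd (fun x => - f x) := by
  simpa [Bdd] using hf

theorem Bdd.sub {f g : α → E} (hf : Bdd f) (hg : Bdd g) : Bdd (fun x => f x - g x) := by
  simpa [sub_eq_add_neg] using hf.add hg.neg

theorem Bdd.sum {ι : Type*} (s : Finset ι) {f : ι → α → E} (hf : ∀ i ∈ s, Bdd (f i)) :
    Bdd (fun x => ∑ i ∈ s, f i x) := by
  classical
  induction s using Finset.induction_on with
  | empty => simpa using Bdd.const (0 : E)
  | insert a s ha ih =>
    simp only [Finset.sum_insert ha]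
    exact (hf a (by simp)).add (ih fun i hi => hf i (by simp [hi]))

theorem Bdd.mul {R : Type*} [NormedRing R] {f g : α → R} (hf : Bdd f) (hg : Bdd g) :
    Bdd (fun x => f x * g x) := by
  obtain ⟨C, hC⟩ := hf
  obtain ⟨D, hD⟩ := hg
  exact ⟨C * D, fun x => (norm_mul_le _ _).trans
    (mul_le_mul (hC x) (hD x) (norm_nonneg _) ((norm_nonneg _).trans (hC x)))⟩

theorem Bdd.of_mem_Icc {f : α → ℝ} {a b : ℝ} (hf : ∀ x, f x ∈ Set.Icc a b) : Bdd f :=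
  ⟨max |a| |b|, fun x => by
    rw [Real.norm_eq_abs]
    exact abs_le_max_abs_abs (hf x).1 (hf x).2⟩

end BddLemmas

/-- The `n`-th Cesàro average of a two-sided sequence, over `0, …, n - 1`. -/
noncomputable def avg {E : Type*} [NormedAddCommGroup E] [NormedSpace ℝ E] (f : ℤ → E) (n : ℕ) : E :=
  (n : ℝ)⁻¹ • ∑ k ∈ Finset.range n, f k

/-- A shift-invariant mean of bounded sequences: the limit of Cesàro averages along a fixed
non-principal ultrafilter.  (Junk on unbounded sequences.) -/
noncomputable def mean {E : Type*} [NormedAddCommGroup E] [NormedSpace ℝ E] (f : ℤ → E) : E :=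
  limUnder (hyperfilter ℕ : Filter ℕ) (avg f)

section Mean
variable {E : Type*} [NormedAddCommGroup E] [NormedSpace ℝ E]

theorem norm_avg_le {f : ℤ → E} {C : ℝ} (hC : ∀ x, ‖f x‖ ≤ C) (n : ℕ) : ‖avg f n‖ ≤ C := by
  have hC0 : 0 ≤ C := (norm_nonneg _).trans (hC 0)
  rcases Nat.eq_zero_or_pos n with rfl | hn
  · simpa [avg] using hC0
  · rw [avg, norm_smul, norm_inv, Real.norm_natCast, inv_mul_le_iff₀ (by positivity)]
    calc ‖∑ k ∈ Finset.range n, f k‖ ≤ ∑ k ∈ Finset.range n, C := norm_sum_le_of_le _ fun i _ => hC i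
      _ = n * C := by simp

theorem mean_eq_of_tendsto {f : ℤ → E} {a : E}
    (h : Tendsto (avg f) (hyperfilter ℕ) (𝓝 a)) : mean f = a := h.limUnder_eq

theorem mean_congr {f g : ℤ → E} (h : ∀ n : ℕ, f n = g n) : mean f = mean g := by
  have : avg f = avg g := by
    funext n
    simp [avg, h]
  rw [mean, this, mean]

theorem mean_const (c : E) : mean (fun _ => c) = c := by
  apply mean_eq_of_tendsto
  refine tendsto_const_nhds.congr' ?_
  have : ∀ᶠ n : ℕ in hyperfilter ℕ, 1 ≤ n :=
    Nat.hyperfilter_le_atTop (eventually_ge_atTop 1)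
  filter_upwards [this] with n hn
  simp only [avg, Finset.sum_const, Finset.card_range]
  rw [← Nat.cast_smul_eq_nsmul ℝ, smul_smul, inv_mul_cancel₀ (by positivity), one_smul]

variable [ProperSpace E]

theorem tendsto_mean {f : ℤ → E} (hf : Bdd f) :
    Tendsto (avg f) (hyperfilter ℕ) (𝓝 (mean f)) := by
  obtain ⟨C, hC⟩ := hf
  apply tendsto_nhds_limUnder
  have hcomp : IsCompact (Metric.closedBall (0 : E) C) := isCompact_closedBall _ _
  obtain ⟨x, -, hx⟩ := hcomp.ultrafilter_le_nhds ((hyperfilter ℕ).map (avg f)) (by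
    simp only [le_principal_iff, Ultrafilter.coe_map, mem_map]
    exact univ_mem' fun n => by simpa using norm_avg_le hC n)
  exact ⟨x, hx⟩

theorem mean_add {f g : ℤ → E} (hf : Bdd f) (hg : Bdd g) :
    mean (fun n => f n + g n) = mean f + mean g := by
  apply mean_eq_of_tendsto
  convert (tendsto_mean hf).add (tendsto_mean hg) using 2 with n
  simp [avg, Finset.sum_add_distrib]

theorem mean_map {E' : Type*} [NormedAddCommGroup E'] [NormedSpace ℝ E']
    (L : E →L[ℝ] E') {f : ℤ → E} (hf : Bdd f) : mean (fun n => L (f n)) = L (mean f) := by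
  apply mean_eq_of_tendsto
  convert (L.continuous.tendsto _).comp (tendsto_mean hf) using 1
  funext n
  simp [avg]

theorem mean_neg {f : ℤ → E} (hf : Bdd f) : mean (fun n => - f n) = - mean f :=
  mean_map (-(ContinuousLinearMap.id ℝ E)) hf

theorem mean_sub {f g : ℤ → E} (hf : Bdd f) (hg : Bdd g) :
    mean (fun n => f n - g n) = mean f - mean g := by
  simpa [sub_eq_add_neg, mean_neg hg] using mean_add hf hg.neg

theorem mean_sum {ι : Type*} (s : Finset ι) {f : ι → ℤ → E} (hf : ∀ i ∈ s, Bdd (f i)) :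
    mean (fun n => ∑ i ∈ s, f i n) = ∑ i ∈ s, mean (f i) := by
  classical
  induction s using Finset.induction_on with
  | empty => simpa using mean_const (0 : E)
  | insert a s ha ih =>
    simp only [Finset.sum_insert ha]
    rw [mean_add (hf a (by simp)) (Bdd.sum s fun i hi => hf i (by simp [hi])),
      ih fun i hi => hf i (by simp [hi])]

theorem mean_shift_one {f : ℤ → E} (hf : Bdd f) : mean (fun n => f (n + 1)) = mean f := by
  rw [← sub_eq_zero, ← mean_sub (hf.comp _) hf]
  apply mean_eq_of_tendsto
  refine Tendsto.mono_left ?_ Nat.hyperfilter_le_atTop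
  obtain ⟨C, hC⟩ := hf
  have key : ∀ n : ℕ, avg (fun n => f (n + 1) - f n) n = (n : ℝ)⁻¹ • (f n - f 0) := by
    intro n
    simp only [avg]
    congr 1
    have := Finset.sum_range_sub (fun k : ℕ => f k) n
    simpa using this
  have h0 : Tendsto (fun n : ℕ => (n : ℝ)⁻¹ * (C + C)) atTop (𝓝 0) := by
    simpa using (tendsto_inv_atTop_nhds_zero_nat (𝕜 := ℝ)).mul_const (C + C)
  refine squeeze_zero_norm (fun n => ?_) h0
  rw [key, norm_smul, norm_inv, Real.norm_natCast]
  exact mul_le_mul_of_nonneg_left ((norm_sub_le _ _).trans (add_le_add (hC _) (hC _))) (by positivity)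

theorem mean_shift {f : ℤ → E} (hf : Bdd f) (m : ℤ) : mean (fun n => f (n + m)) = mean f := by
  induction m using Int.induction_on with
  | zero => simp
  | succ i ih =>
    rw [← ih, ← mean_shift_one (f := fun n => f (n + i)) (hf.comp _)]
    congr 1
    funext n
    ring_nf
  | pred i ih =>
    rw [← ih, ← mean_shift_one (f := fun n => f (n + (-(i : ℤ) - 1))) (hf.comp _)]
    congr 1
    funext n
    ring_nf

theorem norm_mean_le {f : ℤ → E} {C : ℝ} (hC : ∀ x, ‖f x‖ ≤ C) : ‖mean f‖ ≤ C :=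
  le_of_tendsto (tendsto_mean ⟨C, hC⟩).norm (Eventually.of_forall fun n => norm_avg_le hC n)

theorem mean_nonneg {f : ℤ → ℝ} (hf : Bdd f) (h : ∀ n, 0 ≤ f n) : 0 ≤ mean f :=
  ge_of_tendsto (tendsto_mean hf) (Eventually.of_forall fun n => by
    simp only [avg, smul_eq_mul]
    exact mul_nonneg (by positivity) (Finset.sum_nonneg fun i _ => h i))

theorem mean_mono {f g : ℤ → ℝ} (hf : Bdd f) (hg : Bdd g) (h : ∀ n, f n ≤ g n) :
    mean f ≤ mean g := by
  rw [← sub_nonneg, ← mean_sub hg hf]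
  exact mean_nonneg (hg.sub hf) fun n => sub_nonneg.2 (h n)

theorem mean_mul_left (c : ℝ) {f : ℤ → ℝ} (hf : Bdd f) : mean (fun n => c * f n) = c * mean f :=
  mean_map (c • ContinuousLinearMap.id ℝ ℝ) hf

theorem mean_mul_left_complex (c : ℂ) {f : ℤ → ℂ} (hf : Bdd f) :
    mean (fun n => c * f n) = c * mean f :=
  mean_map (ContinuousLinearMap.mul ℝ ℂ c) hf

theorem mean_ofReal {f : ℤ → ℝ} (hf : Bdd f) : mean (fun n => (f n : ℂ)) = ((mean f : ℝ) : ℂ) :=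
  mean_map Complex.ofRealCLM hf

theorem abs_mean_sub_le {f g h : ℤ → ℝ} (hf : Bdd f) (hg : Bdd g) (hh : Bdd h)
    (H : ∀ n, |f n - g n| ≤ h n) : |mean f - mean g| ≤ mean h := by
  rw [← mean_sub hf hg, abs_le]
  refine ⟨?_, mean_mono (hf.sub hg) hh fun n => (abs_le.1 (H n)).2⟩
  rw [← mean_neg hh]
  exact mean_mono hh.neg (hf.sub hg) fun n => (abs_le.1 (H n)).1

theorem norm_mean_sq_le {f : ℤ → ℂ} (hf : Bdd f) : ‖mean f‖ ^ 2 ≤ mean (fun n => ‖f n‖ ^ 2) := by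
  have hb : Bdd (fun n => ‖f n‖ ^ 2) := by
    obtain ⟨C, hC⟩ := hf
    exact ⟨C ^ 2, fun n => by
      rw [norm_pow, norm_norm]
      exact pow_le_pow_left₀ (norm_nonneg _) (hC n) 2⟩
  refine le_of_tendsto_of_tendsto ((tendsto_mean hf).norm.pow 2) (tendsto_mean hb)
    (Eventually.of_forall fun n => ?_)
  rcases Nat.eq_zero_or_pos n with rfl | hn
  · simp [avg]
  · simp only [avg, norm_smul, norm_inv, Real.norm_natCast, smul_eq_mul]
    have h1 : ‖∑ k ∈ Finset.range n, f k‖ ^ 2 ≤ n * ∑ k ∈ Finset.range n, ‖f k‖ ^ 2 := by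
      calc ‖∑ k ∈ Finset.range n, f k‖ ^ 2 ≤ (∑ k ∈ Finset.range n, ‖f k‖) ^ 2 :=
            pow_le_pow_left₀ (norm_nonneg _) (norm_sum_le _ _) 2
        _ ≤ _ := by simpa using sq_sum_le_card_mul_sum_sq (s := Finset.range n) (f := fun k : ℕ => ‖f k‖)
    have hn' : (0 : ℝ) < n := by exact_mod_cast hn
    rw [mul_pow, inv_pow, inv_mul_le_iff₀ (by positivity)]
    calc _ ≤ _ := h1
      _ = _ := by field_simp

/-- Orthogonality: if the `f i` are pairwise orthogonal for the mean, and of modulus one, then the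
mean of `‖∑ f i‖²` is the number of summands. -/
theorem mean_norm_sum_sq (H : ℕ) {f : ℕ → ℤ → ℂ} (hf : ∀ i n, ‖f i n‖ = 1)
    (horth : ∀ i j, i ≠ j → mean (fun n => f i n * (starRingEnd ℂ) (f j n)) = 0) :
    mean (fun n => ‖∑ i ∈ Finset.range H, f i n‖ ^ 2) = H := by
  have hb : ∀ i, Bdd (f i) := fun i => ⟨1, fun n => (hf i n).le⟩
  have hb2 : ∀ i, Bdd (fun n => (starRingEnd ℂ) (f i n)) := fun i => ⟨1, fun n => by simp [hf i n]⟩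
  have hbs : Bdd (fun n => ∑ i ∈ Finset.range H, f i n) := Bdd.sum _ fun i _ => hb i
  have hb3 : Bdd (fun n => ‖∑ i ∈ Finset.range H, f i n‖ ^ 2) := by
    obtain ⟨C, hC⟩ := hbs
    exact ⟨C ^ 2, fun n => by
      rw [norm_pow, norm_norm]
      exact pow_le_pow_left₀ (norm_nonneg _) (hC n) 2⟩
  have h1 : ((mean (fun n => ‖∑ i ∈ Finset.range H, f i n‖ ^ 2) : ℝ) : ℂ) = (H : ℂ) := by
    rw [← mean_ofReal hb3]
    have : (fun n : ℤ => ((‖∑ i ∈ Finset.range H, f i n‖ ^ 2 : ℝ) : ℂ)) =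
        fun n => ∑ i ∈ Finset.range H, ∑ j ∈ Finset.range H, f i n * (starRingEnd ℂ) (f j n) := by
      funext n
      rw [Complex.ofReal_pow, ← Complex.mul_conj', map_sum, Finset.sum_mul_sum]
    rw [this, mean_sum _ fun i _ => Bdd.sum _ fun j _ => (hb i).mul (hb2 j)]
    have h2 : ∀ i ∈ Finset.range H,
        mean (fun n => ∑ j ∈ Finset.range H, f i n * (starRingEnd ℂ) (f j n)) = 1 := by
      intro i hi
      rw [mean_sum _ fun j _ => (hb i).mul (hb2 j), Finset.sum_eq_single_of_mem i hi]
      · have : (fun n => f i n * (starRingEnd ℂ) (f i n)) = fun _ => (1 : ℂ) := by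
          funext n
          rw [Complex.mul_conj', hf]
          simp
        rw [this, mean_const]
      · intro j _ hj
        exact horth i j hj.symm
    rw [Finset.sum_congr rfl h2]
    simp
  exact_mod_cast h1

/-- Van der Corput's criterion for means: a unimodular sequence orthogonal to all its nontrivial
shifts has mean zero. -/
theorem mean_eq_zero_of_vdc {f : ℤ → ℂ} (hf : ∀ n, ‖f n‖ = 1)
    (h : ∀ m : ℤ, m ≠ 0 → mean (fun n => f (n + m) * (starRingEnd ℂ) (f n)) = 0) : mean f = 0 := by
  have hb : Bdd f := ⟨1, fun n => (hf n).le⟩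
  have hb2 : Bdd (fun n => (starRingEnd ℂ) (f n)) := ⟨1, fun n => by simp [hf n]⟩
  have key : ∀ H : ℕ, (H : ℝ) * ‖mean f‖ ^ 2 ≤ 1 := by
    intro H
    rcases Nat.eq_zero_or_pos H with rfl | hH
    · simp
    have h1 := mean_norm_sum_sq H (f := fun i n => f (n + i)) (fun i n => hf _) (by
      intro i j hij
      rw [← mean_shift (((hb.comp _).mul (hb2.comp _))) (-(j : ℤ))]
      rw [← h (i - j) (by omega)]
      congr 1
      funext n
      ring_nf)
    have h2 := norm_mean_sq_le (f := fun n => ∑ i ∈ Finset.range H, f (n + i))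
      (Bdd.sum _ fun i _ => hb.comp _)
    rw [h1, mean_sum _ fun i _ => hb.comp _] at h2
    simp only [mean_shift hb, Finset.sum_const, Finset.card_range, nsmul_eq_mul, norm_mul,
      RCLike.norm_natCast, mul_pow] at h2
    have hH' : (0 : ℝ) < H := by exact_mod_cast hH
    nlinarith
  by_contra hne
  have hpos : 0 < ‖mean f‖ ^ 2 := by positivity
  obtain ⟨H, hH⟩ := exists_nat_gt (1 / ‖mean f‖ ^ 2)
  rw [div_lt_iff₀ hpos] at hH
  linarith [key H]

end Mean

/-! ### Polynomial sequences and Weyl equidistribution -/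

/-- `PolySeq k θ`: all `k`-fold differences of the sequence `θ` vanish, i.e. `θ` is a polynomial
sequence of degree `< k`. -/
def PolySeq {H : Type*} [AddCommGroup H] : ℕ → (ℤ → H) → Prop
  | 0, θ => ∀ n, θ n = 0
  | k + 1, θ => ∀ h : ℤ, PolySeq k (fun n => θ (n + h) - θ n)

/-- The differences of `θ` are torsion of bounded exponent. -/
def TorsSeq {H : Type*} [AddCommGroup H] (θ : ℤ → H) : Prop :=
  ∃ M : ℕ, 0 < M ∧ ∀ n, M • (θ n - θ 0) = 0

section Poly
variable {H : Type*} [AddCommGroup H]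

theorem PolySeq.zsmul {k : ℕ} (m : ℤ) {θ : ℤ → H} (h : PolySeq k θ) :
    PolySeq k (fun n => m • θ n) := by
  induction k generalizing θ with
  | zero => intro n; simp [h n]
  | succ k ih =>
    intro j
    simpa [smul_sub] using ih (h j)

theorem PolySeq.affine {k : ℕ} (Q r : ℤ) {θ : ℤ → H} (h : PolySeq k θ) :
    PolySeq k (fun n => θ (Q * n + r)) := by
  induction k generalizing θ with
  | zero => intro n; exact h _
  | succ k ih =>
    intro j
    have := ih (h (Q * j))
    convert this using 2 with n
    ring_nf

theorem TorsSeq.of_zsmul {m : ℤ} (hm : m ≠ 0) {θ : ℤ → H} (h : TorsSeq (fun n => m • θ n)) :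
    TorsSeq θ := by
  obtain ⟨M, hM, h⟩ := h
  refine ⟨M * m.natAbs, Nat.mul_pos hM (Int.natAbs_pos.2 hm), fun n => ?_⟩
  have h1 := h n
  rw [← smul_sub, ← natCast_zsmul, smul_smul] at h1
  rcases Int.natAbs_eq m with h2 | h2
  · rw [← natCast_zsmul, Nat.cast_mul, ← h2, h1]
  · rw [← natCast_zsmul, Nat.cast_mul]
    have : ((m.natAbs : ℕ) : ℤ) = - m := by omega
    rw [this, mul_neg, neg_smul, h1, neg_zero]

theorem TorsSeq.of_shift {r : ℤ} {θ : ℤ → H} (h : TorsSeq (fun n => θ (n + r))) : TorsSeq θ := by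
  obtain ⟨M, hM, h⟩ := h
  refine ⟨M, hM, fun n => ?_⟩
  have h1 := h (n - r)
  have h2 := h (-r)
  simp only [sub_add_cancel, neg_add_cancel, zero_add] at h1 h2
  have : θ n - θ 0 = (θ n - θ r) - (θ 0 - θ r) := by abel
  rw [this, smul_sub, h1, h2, sub_zero]

theorem linear_of_diff_const {θ : ℤ → H} {c : H} {Q : ℤ} (h : ∀ n, θ (n + Q) - θ n = c) (r m : ℤ) :
    θ (r + m * Q) = θ r + m • c := by
  induction m using Int.induction_on with
  | zero => simp
  | succ i ih =>
    have := h (r + i * Q)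
    rw [ih] at this
    rw [add_mul, one_mul, ← add_assoc, add_smul, one_smul, ← add_assoc]
    rw [sub_eq_iff_eq_add] at this
    rw [this]; abel
  | pred i ih =>
    have := h (r + (-(i : ℤ) - 1) * Q)
    have h2 : r + (-(i : ℤ) - 1) * Q + Q = r + -(i : ℤ) * Q := by ring
    rw [h2, ih] at this
    rw [sub_eq_iff_eq_add] at this
    rw [sub_smul, one_smul, add_sub_assoc', this]; abel

/-- A periodic polynomial sequence is torsion up to a constant. -/
theorem TorsSeq.of_periodic {k : ℕ} {θ : ℤ → H} {Q : ℤ} (hQ : Q ≠ 0)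
    (hper : ∀ n, θ (n + Q) = θ n) (h : PolySeq k θ) : TorsSeq θ := by
  induction k generalizing θ with
  | zero => exact ⟨1, one_pos, fun n => by simp [h n, h 0]⟩
  | succ k ih =>
    obtain ⟨M, hM, hM'⟩ := ih (θ := fun n => θ (n + 1) - θ n) (fun n => by
      have : n + Q + 1 = n + 1 + Q := by ring
      simp only [this, hper]) (h 1)
    -- `M • θ` is an arithmetic progression, and periodic
    have hlin := linear_of_diff_const (θ := fun n => M • θ n) (c := M • (θ 1 - θ 0)) (Q := 1)
      (fun n => by
        have := hM' n
        simp only [zero_add] at this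
        rw [← smul_sub, ← sub_eq_zero, ← smul_sub, this]) 0
    simp only [mul_one, zero_add] at hlin
    have hQM : Q • (M • (θ 1 - θ 0)) = 0 := by
      have h1 := hlin Q
      have h2 := hper 0
      rw [zero_add] at h2
      rw [h2] at h1
      simpa using h1
    refine TorsSeq.of_zsmul hQ ⟨M, hM, fun n => ?_⟩
    rw [← smul_sub, smul_comm, smul_sub, hlin n, add_sub_cancel_left, smul_comm, hQM, smul_zero]

theorem TorsSeq.of_subseq {k : ℕ} {θ : ℤ → H} {Q : ℤ} (hQ : Q ≠ 0) (h : PolySeq k θ)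
    (ht : TorsSeq (fun n => θ (Q * n))) : TorsSeq θ := by
  induction k generalizing θ with
  | zero => exact ⟨1, one_pos, fun n => by simp [h n, h 0]⟩
  | succ k ih =>
    obtain ⟨M, hM, hM'⟩ := ht
    have hd : ∀ n, M • (θ (Q * n + Q) - θ (Q * n)) = 0 := by
      intro n
      have h1 := hM' (n + 1)
      have h2 := hM' n
      simp only [mul_zero, mul_add, mul_one] at h1 h2
      have : θ (Q * n + Q) - θ (Q * n) = (θ (Q * n + Q) - θ 0) - (θ (Q * n) - θ 0) := by abel
      rw [this, smul_sub, h1, h2, sub_zero]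
    obtain ⟨M', hM0, hM1⟩ := ih (h Q) ⟨M, hM, fun n => by
      have := hd 0
      simp only [mul_zero] at this ⊢
      rw [smul_sub, hd, this, sub_zero]⟩
    have hp : ∀ n, (M * M' : ℤ) • θ (n + Q) = (M * M' : ℤ) • θ n := by
      intro n
      have h1 := hM1 n
      have h2 := hd 0
      simp only [mul_zero] at h2
      rw [← sub_eq_zero, ← smul_sub, mul_smul]
      rw [smul_sub, sub_eq_zero] at h1
      rw [natCast_zsmul, natCast_zsmul, h1, smul_comm, h2, smul_zero]
    have hMM : (M * M' : ℤ) ≠ 0 := by positivity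
    exact TorsSeq.of_zsmul hMM (TorsSeq.of_periodic hQ hp (h.zsmul _))

theorem TorsSeq.exists_periodic {k : ℕ} {θ : ℤ → H} (h : PolySeq k θ) (ht : TorsSeq θ) :
    ∃ Q : ℕ, 0 < Q ∧ ∀ n, θ (n + Q) = θ n := by
  induction k generalizing θ with
  | zero => exact ⟨1, one_pos, fun n => by rw [h, h]⟩
  | succ k ih =>
    obtain ⟨M, hM, hM'⟩ := ht
    obtain ⟨Q, hQ, hper⟩ := ih (h 1) ⟨M, hM, fun n => by
      have h1 := hM' (n + 1)
      have h2 := hM' n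
      have h3 := hM' 1
      have : θ (n + 1) - θ n - (θ (0 + 1) - θ 0) = (θ (n + 1) - θ 0) - (θ n - θ 0) - (θ 1 - θ 0) := by
        rw [zero_add]; abel
      rw [this, smul_sub, smul_sub, h1, h2, h3]
      simp⟩
    have hc : ∀ n, θ (n + Q) - θ n = θ Q - θ 0 := by
      have h0 := linear_of_diff_const (θ := fun n => θ (n + Q) - θ n) (c := 0) (Q := 1) (fun n => by
        have h1 := hper n
        have : n + 1 + (Q : ℤ) = n + Q + 1 := by ring
        rw [this]
        rw [sub_eq_sub_iff_add_eq_add] at h1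
        rw [sub_sub_sub_eq, sub_eq_zero, h1]) 0
      intro n
      simpa using h0 n
    have hlin := linear_of_diff_const hc
    refine ⟨M * Q, Nat.mul_pos hM hQ, fun n => ?_⟩
    have := hlin n M
    push_cast
    rw [this, natCast_zsmul, hM', add_zero]

end Poly

/-- The standard character of the circle. -/
noncomputable def eC (x : UnitAddCircle) : ℂ := (AddCircle.toCircle x : ℂ)

theorem norm_eC (x : UnitAddCircle) : ‖eC x‖ = 1 := Circle.norm_coe _

theorem eC_add (x y : UnitAddCircle) : eC (x + y) = eC x * eC y := by
  simp [eC, AddCircle.toCircle_add]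

theorem eC_sub (x y : UnitAddCircle) : eC (x - y) = eC x * (starRingEnd ℂ) (eC y) := by
  rw [sub_eq_add_neg, eC_add]
  congr 1
  rw [eC, AddCircle.toCircle_neg, Circle.coe_inv_eq_conj, eC]

theorem bdd_eC {α : Type*} (θ : α → UnitAddCircle) : Bdd (fun n => eC (θ n)) :=
  ⟨1, fun _ => (norm_eC _).le⟩

theorem eC_ne_one {x : UnitAddCircle} (hx : x ≠ 0) : eC x ≠ 1 := by
  intro h
  apply hx
  apply AddCircle.injective_toCircle one_ne_zero
  rw [AddCircle.toCircle_zero]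
  ext
  simpa [eC] using h

/-- Weyl's theorem: a polynomial sequence on the circle whose differences are not torsion of
bounded exponent has vanishing exponential means. -/
theorem mean_eC_eq_zero {k : ℕ} {θ : ℤ → UnitAddCircle} (h : PolySeq k θ) (ht : ¬ TorsSeq θ) :
    mean (fun n => eC (θ n)) = 0 := by
  induction k generalizing θ with
  | zero => exact absurd ⟨1, one_pos, fun n => by simp [h n, h 0]⟩ ht
  | succ k ih =>
    by_cases hall : ∀ m : ℤ, m ≠ 0 → ¬ TorsSeq (fun n => θ (n + m) - θ n)
    · refine mean_eq_zero_of_vdc (fun n => norm_eC _) fun m hm => ?_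
      rw [← ih (h m) (hall m hm)]
      simp only [eC_sub]
    push Not at hall
    obtain ⟨m, hm, hmt⟩ := hall
    obtain ⟨Q, hQ, hper⟩ := hmt.exists_periodic (h m)
    -- with `R = m * Q`, the difference `θ (n + R) - θ n` depends only on `n` modulo `R`
    set R : ℤ := m * Q with hR
    have hR0 : R ≠ 0 := mul_ne_zero hm (by exact_mod_cast hQ.ne')
    have h1 : Function.Periodic (fun n => θ (n + m) - θ n) (Q : ℤ) := hper
    have h2 : ∀ n, θ (n + R + m) - θ (n + R) = θ (n + m) - θ n := fun n => h1.int_mul m n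
    have h3 : Function.Periodic (fun n => θ (n + R) - θ n) m := by
      intro n
      have := h2 n
      have e : n + m + R = n + R + m := by ring
      show θ (n + m + R) - θ (n + m) = θ (n + R) - θ n
      rw [e]
      rw [sub_eq_sub_iff_add_eq_add] at this ⊢
      rw [this]; abel
    have h4 : ∀ n, θ (n + R + R) - θ (n + R) = θ (n + R) - θ n := fun n => by
      have := h3.int_mul (Q : ℤ) n
      simpa [hR, mul_comm] using this
    have h5 : ∀ r i : ℤ, θ (r + i * R + R) - θ (r + i * R) = θ (r + R) - θ r := fun r i =>
      (show Function.Periodic (fun n => θ (n + R) - θ n) R from h4).int_mul i r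
    have hb : ∀ r, θ (r + R) - θ r ≠ 0 := by
      intro r hr
      apply ht
      apply TorsSeq.of_shift (r := r)
      have hp : PolySeq (k + 1) (fun n => θ (n + r)) := by simpa using h.affine 1 r
      refine TorsSeq.of_subseq hR0 hp ⟨1, one_pos, fun n => ?_⟩
      have := linear_of_diff_const (θ := fun i => θ (r + i * R)) (c := 0) (Q := 1)
        (fun i => by
          have := h5 r i
          rw [hr] at this
          rw [← this]
          ring_nf) 0 n
      simp only [zero_add, mul_one, zero_mul, add_zero, smul_zero] at this
      simp only [mul_zero, zero_add, one_smul]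
      rw [show R * n + r = r + n * R by ring, this, sub_self]
    have hsplit : ∀ n, eC (θ n) =
        ∑ r ∈ Finset.range R.natAbs, if n % R = r then eC (θ n) else 0 := by
      intro n
      have hn0 := Int.emod_nonneg n hR0
      have hn1 := Int.emod_lt_abs n hR0
      rw [Int.abs_eq_natAbs] at hn1
      rw [Finset.sum_eq_single_of_mem (n % R).toNat]
      · rw [if_pos (by omega)]
      · rw [Finset.mem_range]; omega
      · intro b _ hb
        rw [if_neg (by omega)]
    have hbd : ∀ r : ℕ, Bdd (fun n : ℤ => if n % R = r then eC (θ n) else 0) := fun r => by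
      refine ⟨1, fun n => ?_⟩
      dsimp only
      split_ifs
      · exact (norm_eC _).le
      · simp
    rw [show (fun n => eC (θ n)) = _ from funext hsplit]
    rw [mean_sum _ fun r _ => hbd r]
    refine Finset.sum_eq_zero fun r hr => ?_
    have hsh : ∀ n : ℤ, (if (n + R) % R = r then eC (θ (n + R)) else 0) =
        eC (θ (r + R) - θ r) * (if n % R = r then eC (θ n) else 0) := by
      intro n
      rw [Int.add_emod_right]
      split_ifs with hn
      · have : n = r + (n / R) * R := by
          rw [← hn]; exact (Int.emod_add_ediv_mul n R).symm
        have h6 := h5 r (n / R)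
        rw [← this] at h6
        rw [← h6, ← eC_add]
        congr 1; abel
      · simp
    have hm1 := mean_shift (hbd r) R
    simp_rw [hsh] at hm1
    rw [mean_mul_left_complex _ (hbd r)] at hm1
    have h7 : (eC (θ (r + R) - θ r) - 1) * mean (fun n : ℤ => if n % R = r then eC (θ n) else 0) = 0 := by
      rw [sub_mul, hm1, one_mul, sub_self]
    rcases mul_eq_zero.1 h7 with h8 | h8
    · exact absurd (sub_eq_zero.1 h8) (eC_ne_one (hb r))
    · exact h8

/-! ### Sequences in the unit interval that are polynomial modulo one -/

theorem continuous_eC : Continuous eC := by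
  unfold eC
  exact continuous_subtype_val.comp AddCircle.continuous_toCircle

/-- The Fejér kernel on the circle, normalised to have value `1` at `0`. -/
noncomputable def fejer (n : ℕ) (x : UnitAddCircle) : ℝ :=
  ‖∑ j ∈ Finset.range n, eC ((j : ℤ) • x)‖ ^ 2 / (n : ℝ) ^ 2

theorem continuous_fejer (n : ℕ) : Continuous (fejer n) := by
  unfold fejer
  have : ∀ j : ℤ, Continuous fun x : UnitAddCircle => eC (j • x) := fun j =>
    continuous_eC.comp (continuous_zsmul j)
  fun_prop

theorem fejer_nonneg (n : ℕ) (x : UnitAddCircle) : 0 ≤ fejer n x := by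
  unfold fejer; positivity

theorem fejer_le_one (n : ℕ) (x : UnitAddCircle) : fejer n x ≤ 1 := by
  unfold fejer
  apply div_le_one_of_le₀ _ (by positivity)
  apply pow_le_pow_left₀ (norm_nonneg _)
  refine (norm_sum_le _ _).trans ?_
  simp [norm_eC]

theorem fejer_zero {n : ℕ} (hn : 0 < n) : fejer n 0 = 1 := by
  have : eC 0 = 1 := by simp [eC]
  simp [fejer, this, hn.ne']

theorem bdd_fejer {α : Type*} (n : ℕ) (θ : α → UnitAddCircle) : Bdd (fun i => fejer n (θ i)) :=
  Bdd.of_mem_Icc (a := 0) (b := 1) fun _ => ⟨fejer_nonneg _ _, fejer_le_one _ _⟩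

/-- A sequence on the circle all of whose nontrivial exponential means vanish. -/
def Equidist (θ : ℤ → UnitAddCircle) : Prop :=
  ∀ m : ℤ, m ≠ 0 → mean (fun n => eC (m • θ n)) = 0

theorem Equidist.neg {θ : ℤ → UnitAddCircle} (h : Equidist θ) : Equidist (fun n => - θ n) := by
  intro m hm
  simpa using h (-m) (by simpa using hm)

theorem Equidist.add_const {θ : ℤ → UnitAddCircle} (h : Equidist θ) (c : UnitAddCircle) :
    Equidist (fun n => θ n + c) := by
  intro m hm
  simp only [smul_add, eC_add]
  have := mean_mul_left_complex (eC (m • c)) (bdd_eC fun n => m • θ n)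
  simp only [mul_comm (eC (m • c))] at this
  rw [this, h m hm, zero_mul]

theorem Equidist.mean_fejer {θ : ℤ → UnitAddCircle} (h : Equidist θ) {n : ℕ} (hn : 0 < n) :
    mean (fun i => fejer n (θ i)) = 1 / n := by
  have h1 := mean_norm_sum_sq n (f := fun j i => eC ((j : ℤ) • θ i)) (fun _ _ => norm_eC _) (by
    intro i j hij
    have := h (i - j) (by omega)
    simpa only [sub_smul, eC_sub] using this)
  have hn' : (n : ℝ) ≠ 0 := by positivity
  have h2 : mean (fun i => fejer n (θ i)) =
      ((n : ℝ) ^ 2)⁻¹ * mean (fun i => ‖∑ j ∈ Finset.range n, eC ((j : ℤ) • θ i)‖ ^ 2) := by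
    rw [← mean_mul_left]
    · congr 1
      funext i
      rw [fejer, div_eq_inv_mul]
    · have h3 := Bdd.sum (Finset.range n) fun j _ => bdd_eC fun i => (j : ℤ) • θ i
      obtain ⟨C, hC⟩ := h3
      exact ⟨C ^ 2, fun i => by
        rw [norm_pow, norm_norm]
        exact pow_le_pow_left₀ (norm_nonneg _) (hC i) 2⟩
  rw [h2, h1]
  field_simp

theorem bdd_continuousMap {α : Type*} (f : C(UnitAddCircle, ℂ)) (θ : α → UnitAddCircle) :
    Bdd (fun i => f (θ i)) := ⟨‖f‖, fun _ => f.norm_coe_le_norm _⟩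

/-- An equidistributed sequence and its negative give the same means of continuous functions. This is
clear for characters, and these are total in `C(ℝ/ℤ)`. -/
theorem Equidist.mean_neg_eq {θ : ℤ → UnitAddCircle} (h : Equidist θ) (f : C(UnitAddCircle, ℂ)) :
    mean (fun n => f (θ n)) = mean (fun n => f (- θ n)) := by
  have hspan : ∀ f ∈ Submodule.span ℂ (Set.range (fourier (T := (1 : ℝ)))),
      mean (fun n => f (θ n)) = mean (fun n => f (- θ n)) := by
    intro f hf
    induction hf using Submodule.span_induction with
    | mem x hx =>
      obtain ⟨m, rfl⟩ := hx
      by_cases hm : m = 0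
      · subst hm; simp
      · simp only [fourier_apply]
        exact (h m hm).trans (h.neg m hm).symm
    | zero => simp
    | add x y _ _ hx hy =>
      simp only [ContinuousMap.add_apply]
      rw [mean_add (bdd_continuousMap _ _) (bdd_continuousMap _ _),
        mean_add (bdd_continuousMap _ _) (bdd_continuousMap _ _), hx, hy]
    | smul a x _ hx =>
      simp only [ContinuousMap.smul_apply, smul_eq_mul]
      rw [mean_mul_left_complex _ (bdd_continuousMap _ _),
        mean_mul_left_complex _ (bdd_continuousMap _ _), hx]
  have hf : f ∈ (Submodule.span ℂ (Set.range (fourier (T := (1 : ℝ))))).topologicalClosure := by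
    rw [span_fourier_closure_eq_top]; trivial
  rw [← sub_eq_zero, ← norm_le_zero_iff]
  refine le_of_forall_pos_le_add fun ε hε => ?_
  rw [zero_add]
  obtain ⟨g, hg, hfg⟩ := Metric.mem_closure_iff.1 hf (ε / 2) (by positivity)
  have hb := fun (u : C(UnitAddCircle, ℂ)) (θ : ℤ → UnitAddCircle) => bdd_continuousMap u θ
  have key : ∀ θ : ℤ → UnitAddCircle,
      ‖mean (fun n => f (θ n)) - mean (fun n => g (θ n))‖ ≤ ε / 2 := by
    intro θ
    rw [← mean_sub (hb _ _) (hb _ _)]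
    refine norm_mean_le fun n => ?_
    rw [← dist_eq_norm]
    exact (ContinuousMap.dist_apply_le_dist _).trans hfg.le
  have h1 := key θ
  have h2 := key (fun n => - θ n)
  rw [hspan g hg] at h1
  calc _ = ‖(mean (fun n => f (θ n)) - mean (fun n => g (- θ n))) -
        (mean (fun n => f (- θ n)) - mean (fun n => g (- θ n)))‖ := by congr 1; ring
    _ ≤ _ := (norm_sub_le _ _).trans (by linarith)

/-- A `[0,1]`-valued sequence equidistributed modulo `1` has mean `1/2`, by the symmetry `x ↦ -x` of
the circle; the discontinuity at `0` and the value `1/2` are controlled by Fejér kernels. -/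
theorem Equidist.mean_half {a : ℤ → ℝ} (ha : ∀ n, a n ∈ Set.Icc (0 : ℝ) 1)
    (h : Equidist (fun n => (a n : UnitAddCircle))) :
    mean a = 1 / 2 ∧ mean (fun n => if a n = 1 / 2 then (1 : ℝ) else 0) = 0 := by
  have hba : Bdd a := Bdd.of_mem_Icc ha
  have hlim : ∀ x : ℝ, (∀ n : ℕ, 0 < n → |x| ≤ 2 / n) → x = 0 := by
    intro x hx
    by_contra hne
    have : 0 < |x| := abs_pos.2 hne
    obtain ⟨n, hn⟩ := exists_nat_gt (2 / |x|)
    have hn0 : (0 : ℝ) < n := lt_trans (by positivity) hn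
    have h1 := hx n (by exact_mod_cast hn0)
    rw [div_lt_iff₀ this] at hn
    rw [le_div_iff₀ hn0] at h1
    linarith
  constructor
  · have key : ∀ n : ℕ, 0 < n → |2 * mean a - 1| ≤ 2 / n := by
      intro n hn
      have : Fact (0 < (1 : ℝ)) := ⟨one_pos⟩
      -- `φ` is a continuous approximation of the fractional part
      set u : ℝ → ℝ := fun t => t * (1 - fejer n (t : UnitAddCircle)) with hu
      have hcu : Continuous u := by
        have : Continuous fun t : ℝ => fejer n (t : UnitAddCircle) :=
          (continuous_fejer n).comp (AddCircle.continuous_mk' 1)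
        fun_prop
      have hone : ((1 : ℝ) : UnitAddCircle) = 0 := AddCircle.coe_period 1
      have hφc : Continuous (AddCircle.liftIco 1 0 u) := by
        apply AddCircle.liftIco_continuous
        · simp [hu, hone, fejer_zero hn]
        · exact hcu.continuousOn
      set φ := AddCircle.liftIco 1 0 u with hφ
      have hval : ∀ t ∈ Set.Icc (0 : ℝ) 1,
          |t - φ (t : UnitAddCircle)| ≤ fejer n (t : UnitAddCircle) := by
        intro t ht
        rcases eq_or_lt_of_le ht.2 with h1 | h1
        · subst h1
          have : φ ((1 : ℝ) : UnitAddCircle) = 0 := by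
            have h2 := AddCircle.liftIco_coe_apply (p := (1 : ℝ)) (a := 0) (f := u) (x := 0) (by simp)
            rw [hone, hφ, ← AddCircle.coe_zero, h2]
            simp [hu]
          rw [this, hone, fejer_zero hn]; simp
        · rw [hφ, AddCircle.liftIco_coe_apply (by simpa using ⟨ht.1, h1⟩)]
          have e : t - u t = t * fejer n (t : UnitAddCircle) := by simp only [hu]; ring
          rw [e, abs_of_nonneg (mul_nonneg ht.1 (fejer_nonneg _ _))]
          exact mul_le_of_le_one_left (fejer_nonneg _ _) ht.2
      have hbφ : ∀ θ : ℤ → UnitAddCircle, Bdd (fun n => φ (θ n)) := by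
        intro θ
        have hφ' : Continuous fun x => (φ x : ℂ) := Complex.continuous_ofReal.comp hφc
        obtain ⟨C, hC⟩ := bdd_continuousMap ⟨_, hφ'⟩ θ
        exact ⟨C, fun n => by simpa using hC n⟩
      have h1 := abs_mean_sub_le hba (hbφ _) (bdd_fejer n _) fun i => hval (a i) (ha i)
      have h2 := abs_mean_sub_le ((Bdd.const 1).sub hba) (hbφ _) (bdd_fejer n _)
        fun i => hval (1 - a i) ⟨by linarith [(ha i).2], by linarith [(ha i).1]⟩
      rw [h.mean_fejer hn] at h1
      have e : ∀ i, ((1 - a i : ℝ) : UnitAddCircle) = - (a i : UnitAddCircle) := by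
        intro i
        rw [AddCircle.coe_sub, hone, zero_sub]
      simp only [e] at h2
      rw [h.neg.mean_fejer hn, mean_sub (Bdd.const 1) hba, mean_const] at h2
      have h3 : mean (fun i => φ (a i : UnitAddCircle)) = mean (fun i => φ (-(a i : UnitAddCircle))) := by
        have := h.mean_neg_eq ⟨fun x => (φ x : ℂ), Complex.continuous_ofReal.comp hφc⟩
        simp only [ContinuousMap.coe_mk] at this
        rw [mean_ofReal (hbφ _), mean_ofReal (hbφ _)] at this
        exact_mod_cast this
      rw [h3] at h1
      calc |2 * mean a - 1| = |(mean a - mean (fun i => φ (-(a i : UnitAddCircle)))) -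
            (1 - mean a - mean (fun i => φ (-(a i : UnitAddCircle))))| := by congr 1; ring
        _ ≤ 1 / n + 1 / n := (abs_sub _ _).trans (add_le_add h1 h2)
        _ = _ := by ring
    linarith [hlim _ key]
  · apply hlim
    intro n hn
    have hb : Bdd (fun n => if a n = 1 / 2 then (1 : ℝ) else 0) :=
      Bdd.of_mem_Icc (a := 0) (b := 1) fun i => by split_ifs <;> simp
    have h0 : 0 ≤ mean (fun n => if a n = 1 / 2 then (1 : ℝ) else 0) :=
      mean_nonneg hb fun i => by split_ifs <;> simp
    rw [abs_of_nonneg h0]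
    have h1 := h.add_const (-((1 / 2 : ℝ) : UnitAddCircle))
    have h2 := mean_mono hb (bdd_fejer n fun i => (a i : UnitAddCircle) + -((1 / 2 : ℝ) : UnitAddCircle))
      fun i => by
        split_ifs with hi
        · rw [hi, add_neg_cancel, fejer_zero hn]
        · exact fejer_nonneg _ _
    rw [h1.mean_fejer hn] at h2
    refine h2.trans ?_
    gcongr
    norm_num

/-- A `[0,1]`-valued sequence which is polynomial modulo `1` is either periodic modulo `1`, or
along every arithmetic progression it has mean `1/2` and takes the value `1/2` with frequency
zero. -/
theorem unit_seq_dichotomy {k : ℕ} {a : ℤ → ℝ} (ha : ∀ n, a n ∈ Set.Icc (0 : ℝ) 1)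
    (hp : PolySeq k (fun n => (a n : UnitAddCircle))) :
    (∃ Q : ℕ, 0 < Q ∧ ∀ n, (a (n + Q) : UnitAddCircle) = a n) ∨
    ∀ Q r : ℤ, Q ≠ 0 → mean (fun n => a (Q * n + r)) = 1 / 2 ∧
      mean (fun n => if a (Q * n + r) = 1 / 2 then (1 : ℝ) else 0) = 0 := by
  by_cases ht : TorsSeq (fun n => (a n : UnitAddCircle))
  · exact Or.inl (ht.exists_periodic hp)
  · right
    intro Q r hQ
    apply Equidist.mean_half (a := fun n => a (Q * n + r)) fun n => ha _
    intro m hm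
    refine mean_eC_eq_zero ((hp.affine Q r).zsmul m) fun h => ht ?_
    have h1 := TorsSeq.of_zsmul hm h
    apply TorsSeq.of_shift (r := r)
    refine TorsSeq.of_subseq (k := k) hQ ?_ h1
    simpa using hp.affine 1 r

/-! ### Means over subgroups, ultralimits, and dilation of tilings -/

section Periods
variable {G : Type*} [AddCommGroup G]

/-- The group of periods of a function on an abelian group. -/
def periods {α : Type*} (φ : G → α) : AddSubgroup G where
  carrier := {w | ∀ x, φ (x + w) = φ x}
  zero_mem' := by simp
  add_mem' := by
    intro a b ha hb x
    rw [← add_assoc, hb, ha]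
  neg_mem' := by
    intro a ha x
    have := ha (x + -a)
    rw [neg_add_cancel_right] at this
    exact this.symm

theorem mem_periods {α : Type*} {φ : G → α} {w : G} : w ∈ periods φ ↔ ∀ x, φ (x + w) = φ x :=
  Iff.rfl

/-- The mean of `φ` over the cosets of the group generated by the list `L`, as an iterated mean. -/
noncomputable def gmean : List G → (G → ℝ) → G → ℝ
  | [], φ => φ
  | w :: L, φ => fun x => mean (fun n => gmean L φ (x + n • w))

theorem bdd_gmean (L : List G) {φ : G → ℝ} (h : Bdd φ) : Bdd (gmean L φ) := by
  obtain ⟨C, hC⟩ := h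
  refine ⟨C, ?_⟩
  induction L with
  | nil => exact hC
  | cons w L ih => exact fun x => norm_mean_le fun n => ih _

theorem gmean_add (L : List G) {φ χ : G → ℝ} (h : Bdd φ) (h' : Bdd χ) :
    gmean L (fun x => φ x + χ x) = fun x => gmean L φ x + gmean L χ x := by
  induction L with
  | nil => rfl
  | cons w L ih =>
    funext x
    simp only [gmean, ih]
    exact mean_add ((bdd_gmean L h).comp _) ((bdd_gmean L h').comp _)

theorem gmean_sub (L : List G) {φ χ : G → ℝ} (h : Bdd φ) (h' : Bdd χ) :
    gmean L (fun x => φ x - χ x) = fun x => gmean L φ x - gmean L χ x := by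
  induction L with
  | nil => rfl
  | cons w L ih =>
    funext x
    simp only [gmean, ih]
    exact mean_sub ((bdd_gmean L h).comp _) ((bdd_gmean L h').comp _)

theorem gmean_const (L : List G) (c : ℝ) : gmean L (fun _ => c) = fun _ => c := by
  induction L with
  | nil => rfl
  | cons w L ih =>
    funext x
    simp only [gmean, ih, mean_const]

theorem gmean_sum (L : List G) {ι : Type*} (s : Finset ι) {φ : ι → G → ℝ} (h : ∀ i ∈ s, Bdd (φ i)) :
    gmean L (fun x => ∑ i ∈ s, φ i x) = fun x => ∑ i ∈ s, gmean L (φ i) x := by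
  classical
  induction s using Finset.induction_on with
  | empty => simpa using gmean_const L 0
  | insert a s ha ih =>
    simp only [Finset.sum_insert ha]
    rw [gmean_add L (h a (by simp)) (Bdd.sum s fun i hi => h i (by simp [hi])),
      ih fun i hi => h i (by simp [hi])]

theorem gmean_translate (L : List G) (φ : G → ℝ) (h : G) :
    gmean L (fun x => φ (x + h)) = fun x => gmean L φ (x + h) := by
  induction L with
  | nil => rfl
  | cons w L ih =>
    funext x
    simp only [gmean, ih]
    congr 1
    funext n
    congr 1
    abel

theorem periods_le_gmean (L : List G) (φ : G → ℝ) : periods φ ≤ periods (gmean L φ) := by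
  intro w hw x
  have := congrFun (gmean_translate L φ w) x
  rw [← this]
  congr 1
  funext y
  exact hw y

theorem closure_le_periods_gmean (L : List G) {φ : G → ℝ} (hφ : Bdd φ) :
    AddSubgroup.closure {w | w ∈ L} ≤ periods (gmean L φ) := by
  rw [AddSubgroup.closure_le]
  induction L with
  | nil => simp
  | cons w L ih =>
    intro u hu
    rcases List.mem_cons.1 hu with rfl | hu
    · intro x
      have := mean_shift (f := fun n => gmean L φ (x + n • u)) ((bdd_gmean L hφ).comp _) 1
      simp only [gmean]
      rw [← this]
      congr 1
      funext n
      congr 1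
      rw [add_smul, one_smul]
      abel
    · intro x
      simp only [gmean]
      congr 1
      funext n
      have := ih hu (x + n • w)
      rw [← this]
      congr 1
      abel

theorem gmean_eq_self (L : List G) {φ : G → ℝ}
    (h : AddSubgroup.closure {w | w ∈ L} ≤ periods φ) : gmean L φ = φ := by
  rw [AddSubgroup.closure_le] at h
  induction L with
  | nil => rfl
  | cons w L ih =>
    have hL := ih fun u hu => h (List.mem_cons_of_mem _ hu)
    funext x
    simp only [gmean, hL]
    have : ∀ n : ℤ, φ (x + n • w) = φ x := fun n =>
      (zsmul_mem (h (show w ∈ {u | u ∈ w :: L} by simp) : w ∈ periods φ) n) x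
    simp only [this, mean_const]

theorem le_gmean (L : List G) {φ : G → ℝ} (hφ : Bdd φ) {c : ℝ} {x : G}
    (h : ∀ b ∈ AddSubgroup.closure {w | w ∈ L}, c ≤ φ (x + b)) : c ≤ gmean L φ x := by
  induction L generalizing x with
  | nil => simpa [gmean] using h 0 (zero_mem _)
  | cons w L ih =>
    rw [gmean, ← mean_const c]
    refine mean_mono (Bdd.const c) ((bdd_gmean L hφ).comp _) fun n => ih fun b hb => ?_
    rw [add_assoc]
    refine h _ (add_mem (zsmul_mem (AddSubgroup.subset_closure (by simp)) n) ?_)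
    exact AddSubgroup.closure_mono (fun u hu => List.mem_cons_of_mem _ hu) hb

theorem gmean_mem_Icc (L : List G) {φ : G → ℝ} {a b : ℝ} (h : ∀ x, φ x ∈ Set.Icc a b) (x : G) :
    gmean L φ x ∈ Set.Icc a b := by
  have hb : Bdd φ := Bdd.of_mem_Icc h
  refine ⟨le_gmean L hb fun u _ => (h _).1, ?_⟩
  have := le_gmean (φ := fun y => b - φ y) L ((Bdd.const b).sub hb) (c := 0) (x := x)
    fun u _ => sub_nonneg.2 (h _).2
  rw [gmean_sub L (Bdd.const b) hb, gmean_const] at this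
  linarith

/-- If a family of functions with values in `{0} ∪ [1, ∞)` has zero mean over a
subgroup, then its members vanish simultaneously along some ultrafilter on this subgroup. -/
theorem exists_ultrafilter {ι : Type*} (L : List G) (ψ : ι → G → ℝ)
    (hψ : ∀ i x, ψ i x = 0 ∨ 1 ≤ ψ i x) (hb : ∀ i, Bdd (ψ i)) (hm : ∀ i, gmean L (ψ i) 0 = 0) :
    ∃ 𝒱 : Ultrafilter G, (∀ᶠ b in 𝒱, b ∈ AddSubgroup.closure {w | w ∈ L}) ∧
      ∀ i, ∀ᶠ b in 𝒱, ψ i b = 0 := by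
  classical
  have h : ∀ s : Finset ι, ∃ b ∈ AddSubgroup.closure {w | w ∈ L}, ∀ i ∈ s, ψ i b = 0 := by
    intro s
    by_contra hcon
    push Not at hcon
    have h1 := le_gmean (φ := fun x => ∑ i ∈ s, ψ i x) L (Bdd.sum s fun i _ => hb i) (c := 1)
      (x := 0) (by
        intro b hb
        obtain ⟨i, hi, hne⟩ := hcon b hb
        rw [zero_add]
        have h2 : 1 ≤ ψ i b := (hψ i b).resolve_left hne
        refine h2.trans (Finset.single_le_sum (f := fun i => ψ i b) (fun j _ => ?_) hi)
        rcases hψ j b with h3 | h3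
        · exact h3.ge
        · linarith)
    rw [gmean_sum L s fun i _ => hb i] at h1
    simp only [hm, Finset.sum_const_zero] at h1
    linarith
  choose b hbW hb0 using h
  refine ⟨(Ultrafilter.of (atTop : Filter (Finset ι))).map b, ?_, fun i => ?_⟩
  · exact Filter.eventually_map.2 (Eventually.of_forall hbW)
  · refine Filter.eventually_map.2 (Ultrafilter.of_le _ ?_)
    filter_upwards [eventually_ge_atTop ({i} : Finset ι)] with s hs
    exact hb0 s i (hs (by simp))

/-- Ultralimit of the translates of a bounded function. -/
noncomputable def ulim (𝒱 : Ultrafilter G) (φ : G → ℝ) (y : G) : ℝ :=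
  limUnder (𝒱 : Filter G) (fun b => φ (y + b))

variable (𝒱 : Ultrafilter G)

theorem ulim_mem {φ : G → ℝ} {K : Set ℝ} (hK : IsCompact K) (h : ∀ x, φ x ∈ K) (y : G) :
    Tendsto (fun b => φ (y + b)) 𝒱 (𝓝 (ulim 𝒱 φ y)) ∧ ulim 𝒱 φ y ∈ K := by
  obtain ⟨x, hxK, hx⟩ := hK.ultrafilter_le_nhds (𝒱.map fun b => φ (y + b)) (by
    simp only [le_principal_iff, Ultrafilter.coe_map, mem_map]
    exact univ_mem' fun b => h _)
  have hx' : Tendsto (fun b => φ (y + b)) 𝒱 (𝓝 x) := hx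
  have : ulim 𝒱 φ y = x := hx'.limUnder_eq
  rw [this]
  exact ⟨hx', hxK⟩

theorem tendsto_ulim {φ : G → ℝ} (h : Bdd φ) (y : G) :
    Tendsto (fun b => φ (y + b)) 𝒱 (𝓝 (ulim 𝒱 φ y)) := by
  obtain ⟨C, hC⟩ := h
  exact (ulim_mem 𝒱 (isCompact_closedBall (0 : ℝ) C) (fun x => by simpa using hC x) y).1

theorem bdd_ulim {φ : G → ℝ} (h : Bdd φ) : Bdd (ulim 𝒱 φ) := by
  obtain ⟨C, hC⟩ := h
  refine ⟨C, fun y => ?_⟩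
  have := (ulim_mem 𝒱 (isCompact_closedBall (0 : ℝ) C) (fun x => by simpa using hC x) y).2
  simpa using this

theorem ulim_eq_of_tendsto {φ : G → ℝ} {y : G} {c : ℝ}
    (h : Tendsto (fun b => φ (y + b)) 𝒱 (𝓝 c)) : ulim 𝒱 φ y = c := h.limUnder_eq

theorem ulim_add {φ χ : G → ℝ} (h : Bdd φ) (h' : Bdd χ) (y : G) :
    ulim 𝒱 (fun x => φ x + χ x) y = ulim 𝒱 φ y + ulim 𝒱 χ y :=
  ulim_eq_of_tendsto 𝒱 ((tendsto_ulim 𝒱 h y).add (tendsto_ulim 𝒱 h' y))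

theorem ulim_sum {ι : Type*} (s : Finset ι) {φ : ι → G → ℝ} (h : ∀ i ∈ s, Bdd (φ i)) (y : G) :
    ulim 𝒱 (fun x => ∑ i ∈ s, φ i x) y = ∑ i ∈ s, ulim 𝒱 (φ i) y :=
  ulim_eq_of_tendsto 𝒱 (tendsto_finsetSum s fun i hi => tendsto_ulim 𝒱 (h i hi) y)

theorem ulim_eq_of_eventually {φ : G → ℝ} {y : G} {c : ℝ} (h : ∀ᶠ b in 𝒱, φ (y + b) = c) :
    ulim 𝒱 φ y = c :=
  ulim_eq_of_tendsto 𝒱 (tendsto_const_nhds.congr' (h.mono fun _ hb => hb.symm))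

theorem ulim_eq_self {φ : G → ℝ} (h : ∀ᶠ b in 𝒱, b ∈ periods φ) (y : G) : ulim 𝒱 φ y = φ y :=
  ulim_eq_of_eventually 𝒱 (h.mono fun _ hb => hb y)

theorem periods_le_ulim (φ : G → ℝ) : periods φ ≤ periods (ulim 𝒱 φ) := by
  intro w hw y
  simp only [ulim]
  congr 1
  funext b
  rw [add_right_comm]
  exact hw _

end Periods

/-- `g` takes the values `0` and `1` only. -/
def ZeroOne {G : Type*} (g : G → ℝ) : Prop := ∀ x, g x = 0 ∨ g x = 1

theorem ZeroOne.mem_Icc {G : Type*} {g : G → ℝ} (h : ZeroOne g) (x : G) : g x ∈ Set.Icc (0 : ℝ) 1 := by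
  rcases h x with h | h <;> simp [h]

theorem ZeroOne.bdd {G : Type*} {g : G → ℝ} (h : ZeroOne g) : Bdd g := Bdd.of_mem_Icc h.mem_Icc

section Tile
variable {G : Type*} [AddCommGroup G]

/-- For `g` with values in `{0, 1}`: `g` is the indicator function of a tiling by the dilated cluster
`r • F`. For real-valued `g` this is the corresponding fractional notion. -/
def Tile (F : Finset G) (r : ℕ) (g : G → ℝ) : Prop := ∀ x, ∑ f ∈ F, g (x - r • f) = 1

theorem ZeroOne.ulim {g : G → ℝ} (h : ZeroOne g) (𝒱 : Ultrafilter G) : ZeroOne (ulim 𝒱 g) := by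
  intro x
  have := (ulim_mem 𝒱 (K := {0, 1}) (Set.Finite.isCompact (by simp)) (fun x => by simpa using h x) x).2
  simpa using this

theorem Tile.ulim {F : Finset G} {r : ℕ} {g : G → ℝ} (h : Tile F r g) (hb : Bdd g)
    (𝒱 : Ultrafilter G) : Tile F r (ulim 𝒱 g) := by
  intro x
  have h1 : Tendsto (fun b => ∑ f ∈ F, g (x - r • f + b)) 𝒱 (𝓝 (∑ f ∈ F, _root_.ulim 𝒱 g (x - r • f))) :=
    tendsto_finsetSum F fun f _ => tendsto_ulim 𝒱 hb _
  have h2 : (fun b => ∑ f ∈ F, g (x - r • f + b)) = fun _ => (1 : ℝ) := by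
    funext b
    rw [← h (x + b)]
    refine Finset.sum_congr rfl fun f _ => ?_
    congr 1
    abel
  rw [h2] at h1
  exact (tendsto_nhds_unique h1 tendsto_const_nhds)

/-- The action of the group algebra on functions by translation. -/
noncomputable def act (R : Type*) [CommRing R] (G : Type*) [AddCommGroup G] :
    AddMonoidAlgebra R G →ₐ[R] Module.End R (G → R) :=
  AddMonoidAlgebra.lift R _ G
    { toFun := fun h =>
        { toFun := fun φ x => φ (x + h.toAdd)
          map_add' := fun _ _ => rfl
          map_smul' := fun _ _ => rfl }
      map_one' := by
        ext φ x
        simp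
      map_mul' := by
        intro a b
        ext φ x
        simp [add_assoc] }

theorem act_single {R : Type*} [CommRing R] (h : G) (φ : G → R) (x : G) :
    act R G (AddMonoidAlgebra.single h 1) φ x = φ (x + h) := by
  simp [act, AddMonoidAlgebra.lift_apply]

theorem sum_dilate_zmod {l : ℕ} (hl : l.Prime) (F : Finset G) (hF : ¬ l ∣ F.card) (r : ℕ)
    (γ : G → ZMod l) (hγ : ∀ x, ∑ f ∈ F, γ (x - r • f) = 1) (x : G) :
    ∑ f ∈ F, γ (x - (l * r) • f) = 1 := by
  have : Fact l.Prime := ⟨hl⟩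
  have : CharP (AddMonoidAlgebra (ZMod l) G) l :=
    charP_of_injective_algebraMap (algebraMap (ZMod l) _).injective l
  set A : AddMonoidAlgebra (ZMod l) G := ∑ f ∈ F, AddMonoidAlgebra.single (-(r • f)) 1 with hA
  have h1 : act (ZMod l) G A γ = fun _ => 1 := by
    funext x
    rw [← hγ x, hA, map_sum]
    simp only [LinearMap.sum_apply, Finset.sum_apply, act_single, sub_eq_add_neg]
  have h2 : ∀ c : ZMod l, act (ZMod l) G A (fun _ => c) = fun _ => (F.card : ZMod l) * c := by
    intro c
    funext x
    rw [hA, map_sum]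
    simp only [LinearMap.sum_apply, Finset.sum_apply, act_single]
    simp
  have h3 : ∀ k : ℕ, act (ZMod l) G (A ^ (k + 1)) γ = fun _ => (F.card : ZMod l) ^ k := by
    intro k
    induction k with
    | zero => simpa using h1
    | succ k ih =>
      rw [pow_succ', map_mul, Module.End.mul_apply, ih, h2]
      funext x
      ring
  have h4 : A ^ l = ∑ f ∈ F, AddMonoidAlgebra.single (-((l * r) • f)) 1 := by
    rw [hA, sum_pow_char]
    refine Finset.sum_congr rfl fun f _ => ?_
    rw [AddMonoidAlgebra.single_pow, one_pow, smul_neg, mul_smul]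
  have h5 := h3 (l - 1)
  rw [Nat.sub_add_cancel hl.one_le, h4, map_sum] at h5
  have h6 := congrFun h5 x
  simp only [LinearMap.sum_apply, Finset.sum_apply, act_single, ← sub_eq_add_neg] at h6
  rw [h6]
  apply ZMod.pow_card_sub_one_eq_one
  rwa [Ne, ZMod.natCast_eq_zero_iff]

/-- For a prime `l` not dividing `|F|`, dilating the cluster by `l` produces multiplicities which
are positive integers congruent to `1` modulo `l`. -/
theorem exists_dilate_sum {l : ℕ} (hl : l.Prime) {F : Finset G} (hF : ¬ l ∣ F.card) {r : ℕ}
    {g : G → ℝ} (hg : ZeroOne g) (h : Tile F r g) (x : G) :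
    ∃ m : ℕ, m ≤ F.card ∧ 1 ≤ m ∧ m % l = 1 % l ∧ ∑ f ∈ F, g (x - (l * r) • f) = m := by
  classical
  set c : G → ℕ := fun x => if g x = 1 then 1 else 0 with hc
  have hgc : ∀ x, g x = c x := by
    intro x
    rcases hg x with h | h <;> simp [hc, h]
  have hsum : ∀ (s : ℕ) (x : G), ∑ f ∈ F, g (x - s • f) = ((∑ f ∈ F, c (x - s • f) : ℕ) : ℝ) := by
    intro s x
    push_cast
    exact Finset.sum_congr rfl fun f _ => hgc _
  have hz := sum_dilate_zmod hl F hF r (fun x => (c x : ZMod l)) (by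
    intro x
    have h1 := h x
    rw [hsum] at h1
    have h2 : (∑ f ∈ F, c (x - r • f)) = 1 := by exact_mod_cast h1
    rw [← Nat.cast_sum, h2, Nat.cast_one]) x
  have hmod : (∑ f ∈ F, c (x - (l * r) • f)) % l = 1 % l := by
    rw [← Nat.cast_sum, ← Nat.cast_one, ZMod.natCast_eq_natCast_iff] at hz
    exact hz
  refine ⟨_, ?_, ?_, hmod, hsum _ _⟩
  · calc _ ≤ ∑ f ∈ F, 1 := Finset.sum_le_sum fun f _ => by simp only [hc]; split_ifs <;> simp
      _ = F.card := by simp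
  · by_contra hlt
    have h0 : (∑ f ∈ F, c (x - (l * r) • f)) = 0 := by omega
    rw [h0, Nat.zero_mod, Nat.mod_eq_of_lt hl.one_lt] at hmod
    omega

theorem Tile.dilate_large {l : ℕ} (hl : l.Prime) {F : Finset G} (hF : F.card < l) (hF0 : F.Nonempty)
    {r : ℕ} {g : G → ℝ} (hg : ZeroOne g) (h : Tile F r g) : Tile F (l * r) g := by
  intro x
  obtain ⟨m, h1, h2, h3, h4⟩ := exists_dilate_sum hl
    (fun hd => absurd (Nat.le_of_dvd hF0.card_pos hd) (by omega)) hg h x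
  rw [Nat.mod_eq_of_lt (by omega), Nat.mod_eq_of_lt hl.one_lt] at h3
  rw [h4, h3, Nat.cast_one]

/-- A tiling remains a tiling after dilating the cluster by a number without small prime factors. -/
theorem Tile.dilate {F : Finset G} (hF0 : F.Nonempty) {g : G → ℝ} (hg : ZeroOne g)
    (h : Tile F 1 g) {r : ℕ} (hr : r ≠ 0) (hr' : ∀ l : ℕ, l.Prime → l ∣ r → F.card < l) :
    Tile F r g := by
  induction r using Nat.strong_induction_on with
  | _ r ih =>
    by_cases h1 : r = 1
    · rwa [h1]
    have hp := Nat.minFac_prime h1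
    obtain ⟨s, hs⟩ := Nat.minFac_dvd r
    have hs0 : s ≠ 0 := by rintro rfl; simp at hs; exact hr hs
    rw [hs]
    refine Tile.dilate_large hp (hr' _ hp (Nat.minFac_dvd r)) hF0 hg (ih s ?_ hs0 fun l hl hd => ?_)
    · have := hp.two_le
      have : 0 < s := Nat.pos_of_ne_zero hs0
      nlinarith
    · exact hr' l hl (hs ▸ Dvd.dvd.mul_left hd _)

theorem Tile.dilate_one_add {F : Finset G} (hF0 : F.Nonempty) {g : G → ℝ} (hg : ZeroOne g)
    (h : Tile F 1 g) {m : ℕ} (hm : F.card.factorial ∣ m) : Tile F (1 + m) g := by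
  refine h.dilate hF0 hg (by omega) fun l hl hd => ?_
  by_contra hle
  have h1 : l ∣ m := ((Nat.dvd_factorial hl.pos (by omega)).trans hm)
  have := (Nat.dvd_add_left h1).1 hd
  exact hl.one_lt.ne' (Nat.dvd_one.1 this)

/-- A tiling density computation: a full mean of a tile indicator is `1 / |F|`. -/
theorem gmean_tile {F : Finset G} {r : ℕ} {g : G → ℝ} (hb : Bdd g) (h : Tile F r g) {L : List G}
    (hL : AddSubgroup.closure {w | w ∈ L} = ⊤) (x : G) : F.card * gmean L g x = 1 := by
  have hinv : ∀ x y, gmean L g x = gmean L g y := fun x y => by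
    have := closure_le_periods_gmean L hb (show x - y ∈ _ by rw [hL]; trivial) y
    rw [← this]; congr 1; abel
  have h1 := gmean_sum L F (φ := fun f y => g (y + -(r • f))) fun f _ => hb.comp _
  have h2 : (fun x => ∑ f ∈ F, g (x + -(r • f))) = fun _ => (1 : ℝ) := by
    funext y
    simpa [sub_eq_add_neg] using h y
  rw [h2, gmean_const] at h1
  have h3 := congrFun h1 x
  simp only [gmean_translate] at h3
  rw [h3, Finset.sum_congr rfl fun f _ => hinv _ x]
  simp

/-- There are tilings which remain tilings under dilation of the cluster by any number up to a
given bound that is coprime to `|F|`. -/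
theorem exists_tile_dilate {F : Finset G} {L : List G}
    (hL : AddSubgroup.closure {w | w ∈ L} = ⊤) {g : G → ℝ} (hg : ZeroOne g) (h : Tile F 1 g) (R : ℕ) :
    ∃ g' : G → ℝ, ZeroOne g' ∧ ∀ r, 0 < r → r ≤ R → r.Coprime F.card → Tile F r g' := by
  induction R with
  | zero => exact ⟨g, hg, fun r h1 h2 => by omega⟩
  | succ R ih =>
    obtain ⟨g₁, hg₁, ht⟩ := ih
    by_cases hR0 : R = 0
    · refine ⟨g, hg, fun r h1 h2 _ => ?_⟩
      obtain rfl : r = 1 := by omega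
      exact h
    by_cases hco : (R + 1).Coprime F.card
    swap
    · refine ⟨g₁, hg₁, fun r h1 h2 h3 => ht r h1 ?_ h3⟩
      rcases Nat.lt_or_eq_of_le h2 with h4 | h4
      · omega
      · exact absurd (h4 ▸ h3) hco
    have h1 : R + 1 ≠ 1 := by omega
    have hp := Nat.minFac_prime h1
    obtain ⟨s, hs⟩ := Nat.minFac_dvd (R + 1)
    set l := (R + 1).minFac
    have hs0 : 0 < s := by
      rcases Nat.eq_zero_or_pos s with rfl | h
      · simp at hs
      · exact h
    have hsR : s ≤ R := by
      have := hp.two_le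
      nlinarith
    have hsco : s.Coprime F.card := Nat.Coprime.coprime_dvd_left ⟨l, by rw [hs]; ring⟩ hco
    have hlF : ¬ l ∣ F.card := fun hd =>
      hp.one_lt.ne' (Nat.eq_one_of_dvd_coprimes hco (Nat.minFac_dvd _) hd)
    have hts := ht s hs0 hsR hsco
    have hex := exists_dilate_sum hp hlF hg₁ hts
    rw [← hs] at hex
    -- the excess multiplicity, a function with zero mean
    set e : G → ℝ := fun x => ∑ f ∈ F, g₁ (x + -((R + 1) • f)) - 1 with he
    have hbs : Bdd (fun x => ∑ f ∈ F, g₁ (x + -((R + 1) • f))) :=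
      Bdd.sum F fun f _ => hg₁.bdd.comp _
    have hbe : Bdd e := hbs.sub (Bdd.const 1)
    have hme : ∀ y, gmean L e y = 0 := by
      intro y
      rw [he, gmean_sub L hbs (Bdd.const 1), gmean_const, gmean_sum L F fun f _ => hg₁.bdd.comp _]
      simp only [gmean_translate]
      have hden := gmean_tile hg₁.bdd hts hL
      have hF0 : (F.card : ℝ) ≠ 0 := fun h0 => by simpa [h0] using hden 0
      have : ∀ x, gmean L g₁ x = 1 / F.card := fun x => by
        rw [eq_div_iff hF0, mul_comm]; exact hden x
      simp only [this]
      simp [hF0]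
    obtain ⟨𝒱, -, h𝒱⟩ := exists_ultrafilter L (fun y x => e (x + y))
      (fun y x => by
        obtain ⟨m, -, hm1, -, hm2⟩ := hex (x + y)
        simp only [sub_eq_add_neg] at hm2
        simp only [he, hm2]
        rcases Nat.lt_or_eq_of_le hm1 with h5 | h5
        · right
          have : (2 : ℝ) ≤ m := by exact_mod_cast h5
          linarith
        · left
          simp [← h5])
      (fun y => hbe.comp _) (fun y => by rw [gmean_translate]; exact hme _)
    refine ⟨ulim 𝒱 g₁, hg₁.ulim 𝒱, fun r h2 h3 h4 => ?_⟩
    rcases Nat.lt_or_eq_of_le h3 with h5 | h5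
    · exact (ht r h2 (by omega) h4).ulim hg₁.bdd 𝒱
    subst h5
    intro x
    have h6 : Tendsto (fun b => ∑ f ∈ F, g₁ (x - (R + 1) • f + b)) 𝒱
        (𝓝 (∑ f ∈ F, ulim 𝒱 g₁ (x - (R + 1) • f))) :=
      tendsto_finsetSum F fun f _ => tendsto_ulim 𝒱 hg₁.bdd _
    refine tendsto_nhds_unique h6 (tendsto_const_nhds.congr' ?_)
    filter_upwards [h𝒱 x] with b hb
    rw [he] at hb
    rw [← sub_eq_zero.1 hb]
    refine Finset.sum_congr rfl fun f _ => ?_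
    congr 1
    abel

end Tile

/-! ### Vanishing sums of monomials and divisibility of class sizes -/

theorem exists_sum_pow_prime_eq {R : Type*} [CommRing R] {p : ℕ} (hp : p.Prime) {ι : Type*}
    (s : Finset ι) (x : ι → R) : ∃ r, (∑ i ∈ s, x i) ^ p = ∑ i ∈ s, x i ^ p + p * r := by
  classical
  induction s using Finset.induction_on with
  | empty => exact ⟨0, by simp [hp.ne_zero]⟩
  | insert a s ha ih =>
    obtain ⟨r, hr⟩ := ih
    obtain ⟨r', hr'⟩ := exists_add_pow_prime_eq hp (x a) (∑ i ∈ s, x i)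
    rw [Finset.sum_insert ha, Finset.sum_insert ha, hr', hr]
    exact ⟨r + x a * (∑ i ∈ s, x i) * r', by ring⟩

/-- A vanishing sum of `p`-th roots of unity in characteristic zero has a number of terms divisible
by `p`: modulo `p` the sum is a `p`-th root of the number of its terms. -/
theorem dvd_card_of_sum_roots_eq_zero {K : Type*} [Field K] [CharZero K] {p : ℕ} (hp : p.Prime)
    {ι : Type*} (s : Finset ι) (x : ι → K) (hx : ∀ i ∈ s, x i ^ p = 1) (h : ∑ i ∈ s, x i = 0) :
    p ∣ s.card := by
  classical
  have hIntl : ∀ i : s, IsIntegral ℤ (x i) := fun i =>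
    IsIntegral.of_pow hp.pos (by rw [hx i i.2]; exact isIntegral_one)
  obtain ⟨r, hr⟩ := exists_sum_pow_prime_eq hp Finset.univ
    fun i : s => (⟨x i, hIntl i⟩ : integralClosure ℤ K)
  have hr' := congrArg (fun y : integralClosure ℤ K => (y : K)) hr
  simp only [AddSubmonoidClass.coe_finsetSum, SubmonoidClass.coe_pow, AddMemClass.coe_add,
    MulMemClass.coe_mul] at hr'
  rw [Finset.sum_coe_sort s x, Finset.sum_coe_sort s (fun i => x i ^ p), h,
    Finset.sum_congr rfl hx, zero_pow hp.ne_zero] at hr'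
  have hp0 : (p : K) ≠ 0 := by exact_mod_cast hp.ne_zero
  have hcast : ((p : integralClosure ℤ K) : K) = (p : K) := by simp
  rw [hcast] at hr'
  have hr2 : (r : K) = algebraMap ℚ K (-(s.card : ℚ) / p) := by
    simp only [map_div₀, map_neg, map_natCast]
    rw [eq_div_iff hp0]
    simp at hr'
    linear_combination -hr'
  have hri : IsIntegral ℤ (algebraMap ℚ K (-(s.card : ℚ) / p)) := hr2 ▸ r.2
  rw [isIntegral_algebraMap_iff (algebraMap ℚ K).injective, IsIntegrallyClosed.isIntegral_iff] at hri
  obtain ⟨m, hm⟩ := hri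
  have hpq : (p : ℚ) ≠ 0 := by exact_mod_cast hp.ne_zero
  rw [eq_div_iff hpq] at hm
  have : (s.card : ℤ) = p * (-m) := by
    have h3 : (s.card : ℚ) = p * (-(m : ℚ)) := by
      simp only [algebraMap_int_eq, eq_intCast] at hm
      linarith
    exact_mod_cast h3
  exact Int.natCast_dvd_natCast.1 ⟨-m, this⟩

/-- If `∑ ε_f ^ (1 + p k)` vanishes for sufficiently many `k`, then by a Vandermonde argument the
sum of the `ε_f` with a given value of `ε_f ^ p` vanishes; hence `p` divides the number of these. -/
theorem dvd_card_class {K : Type*} [Field K] [CharZero K] {p : ℕ} (hp : p.Prime)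
    {ι : Type*} [DecidableEq K] (F : Finset ι) (ε : ι → K) (hε : ∀ i, ε i ≠ 0)
    (h : ∀ k < F.card, ∑ f ∈ F, ε f ^ (1 + p * k) = 0) {f₀ : ι} (hf₀ : f₀ ∈ F) :
    p ∣ (F.filter fun f => ε f ^ p = ε f₀ ^ p).card := by
  classical
  set Y := (F.image fun f => ε f ^ p).erase (ε f₀ ^ p) with hY
  set q : Polynomial K := ∏ y ∈ Y, (Polynomial.X - Polynomial.C y) with hq
  have hdeg : q.natDegree < F.card := by
    rw [hq, Polynomial.natDegree_finsetProd_X_sub_C_eq_card, hY,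
      Finset.card_erase_of_mem (Finset.mem_image_of_mem _ hf₀)]
    have h1 : (F.image fun f => ε f ^ p).card ≤ F.card := Finset.card_image_le
    have h2 : 0 < F.card := Finset.card_pos.2 ⟨f₀, hf₀⟩
    omega
  have hsum : ∑ f ∈ F, ε f * q.eval (ε f ^ p) = 0 := by
    simp_rw [Polynomial.eval_eq_sum_range' hdeg, Finset.mul_sum]
    rw [Finset.sum_comm]
    refine Finset.sum_eq_zero fun k hk => ?_
    have := h k (Finset.mem_range.1 hk)
    calc _ = q.coeff k * ∑ f ∈ F, ε f ^ (1 + p * k) := by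
          rw [Finset.mul_sum]
          refine Finset.sum_congr rfl fun f _ => ?_
          rw [pow_add, pow_mul]; ring
      _ = 0 := by rw [this, mul_zero]
  have hq0 : q.eval (ε f₀ ^ p) ≠ 0 := by
    rw [hq, Polynomial.eval_prod, Finset.prod_ne_zero_iff]
    intro y hy
    rw [Polynomial.eval_sub, Polynomial.eval_X, Polynomial.eval_C, sub_ne_zero]
    exact (Finset.ne_of_mem_erase hy).symm
  have hq1 : ∀ f ∈ F, ε f ^ p ≠ ε f₀ ^ p → q.eval (ε f ^ p) = 0 := by
    intro f hf hne
    rw [hq, Polynomial.eval_prod]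
    refine Finset.prod_eq_zero (i := ε f ^ p) ?_ (by simp)
    exact Finset.mem_erase.2 ⟨hne, Finset.mem_image_of_mem (fun f => ε f ^ p) hf⟩
  have hcl : ∑ f ∈ F.filter (fun f => ε f ^ p = ε f₀ ^ p), ε f = 0 := by
    have h3 : ∑ f ∈ F, ε f * q.eval (ε f ^ p) =
        (∑ f ∈ F.filter (fun f => ε f ^ p = ε f₀ ^ p), ε f) * q.eval (ε f₀ ^ p) := by
      rw [Finset.sum_mul, Finset.sum_filter]
      refine Finset.sum_congr rfl fun f hf => ?_
      split_ifs with h4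
      · rw [h4]
      · rw [hq1 f hf h4, mul_zero]
    rw [hsum] at h3
    exact (mul_eq_zero.1 h3.symm).resolve_right hq0
  apply dvd_card_of_sum_roots_eq_zero hp _ (fun f => ε f / ε f₀)
  · intro f hf
    rw [div_pow, (Finset.mem_filter.1 hf).2, div_self (pow_ne_zero _ (hε _))]
  · rw [← Finset.sum_div, hcl, zero_div]

section Ann
variable {G : Type*} [AddCommGroup G]

/-- The annihilator of a function in the real group algebra. -/
noncomputable def annIdeal (φ : G → ℝ) : Ideal (AddMonoidAlgebra ℝ G) where
  carrier := {a | act ℝ G a φ = 0}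
  zero_mem' := by simp
  add_mem' := by
    intro a b ha hb
    simp only [Set.mem_ofPred_eq] at *
    rw [map_add, LinearMap.add_apply, ha, hb, add_zero]
  smul_mem' := by
    intro c a ha
    simp only [Set.mem_ofPred_eq] at *
    rw [smul_eq_mul, map_mul, Module.End.mul_apply, ha, map_zero]

theorem mem_annIdeal {φ : G → ℝ} {a : AddMonoidAlgebra ℝ G} :
    a ∈ annIdeal φ ↔ act ℝ G a φ = 0 := Iff.rfl

/-- The monomials congruent to `1` modulo an ideal of the group algebra. -/
noncomputable def idealPeriods (P : Ideal (AddMonoidAlgebra ℝ G)) : AddSubgroup G where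
  carrier := {u | Ideal.Quotient.mk P (AddMonoidAlgebra.single u 1) = 1}
  zero_mem' := by
    simp [← AddMonoidAlgebra.one_def]
  add_mem' := by
    intro a b ha hb
    simp only [Set.mem_ofPred_eq] at *
    rw [← one_mul (1 : ℝ), ← AddMonoidAlgebra.single_mul_single, map_mul, ha, hb, one_mul]
  neg_mem' := by
    intro a ha
    simp only [Set.mem_ofPred_eq] at *
    have : Ideal.Quotient.mk P (AddMonoidAlgebra.single (-a) 1 * AddMonoidAlgebra.single a 1) = 1 := by
      rw [AddMonoidAlgebra.single_mul_single, neg_add_cancel, one_mul, ← AddMonoidAlgebra.one_def,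
        map_one]
    rwa [map_mul, ha, mul_one] at this

theorem mem_idealPeriods {P : Ideal (AddMonoidAlgebra ℝ G)} {u : G} :
    u ∈ idealPeriods P ↔ Ideal.Quotient.mk P (AddMonoidAlgebra.single u 1) = 1 := Iff.rfl

/-- Apply `dvd_card_class` to the images of the monomials in the fraction field of the group algebra
modulo a prime ideal `P` containing the annihilator of the balanced tiling function: the tiling
identities for the dilates `1 + p k` become the vanishing power sums. -/
theorem dvd_card_idealPeriods {p : ℕ} (hp : p.Prime) {F : Finset G} {g : G → ℝ}
    (ht : ∀ k < F.card, Tile F (1 + p * k) g) {P : Ideal (AddMonoidAlgebra ℝ G)} (hP : P.IsPrime)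
    (hI : annIdeal (fun x => g x - 1 / F.card) ≤ P) {f₀ : G} (hf₀ : f₀ ∈ F)
    [DecidablePred fun f => p • (f - f₀) ∈ idealPeriods P] :
    p ∣ (F.filter fun f => p • (f - f₀) ∈ idealPeriods P).card := by
  classical
  have hF0 : (F.card : ℝ) ≠ 0 := by
    exact_mod_cast (Finset.card_pos.2 ⟨f₀, hf₀⟩).ne'
  let D := AddMonoidAlgebra ℝ G ⧸ P
  have : CharZero D := algebraRat.charZero D
  let K := FractionRing D
  have : CharZero K := charZero_of_injective_algebraMap (IsFractionRing.injective D K)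
  let ε : G → K := fun f => algebraMap D K (Ideal.Quotient.mk P (AddMonoidAlgebra.single (-f) 1))
  have hinj : Function.Injective (algebraMap D K) := IsFractionRing.injective D K
  have hmul : ∀ u v : G, Ideal.Quotient.mk P (AddMonoidAlgebra.single (u + v) 1) =
      Ideal.Quotient.mk P (AddMonoidAlgebra.single u 1) *
        Ideal.Quotient.mk P (AddMonoidAlgebra.single v 1) := fun u v => by
    rw [← map_mul, AddMonoidAlgebra.single_mul_single, one_mul]
  have hinv : ∀ u : G, Ideal.Quotient.mk P (AddMonoidAlgebra.single u 1) *
      Ideal.Quotient.mk P (AddMonoidAlgebra.single (-u) 1) = 1 := fun u => by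
    rw [← hmul, add_neg_cancel, ← AddMonoidAlgebra.one_def, map_one]
  have hε0 : ∀ f, ε f ≠ 0 := by
    intro f h0
    have h1 : Ideal.Quotient.mk P (AddMonoidAlgebra.single (-f) 1) = 0 := by
      apply hinj
      rw [map_zero]
      exact h0
    have := hinv f
    rw [h1, mul_zero] at this
    exact zero_ne_one this
  have hpow : ∀ f (r : ℕ), ε f ^ r =
      algebraMap D K (Ideal.Quotient.mk P (AddMonoidAlgebra.single (-(r • f)) 1)) := by
    intro f r
    simp only [ε]
    rw [← map_pow, ← map_pow, AddMonoidAlgebra.single_pow, one_pow, smul_neg]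
  have hsum : ∀ k < F.card, ∑ f ∈ F, ε f ^ (1 + p * k) = 0 := by
    intro k hk
    simp only [hpow]
    rw [← map_sum, ← map_sum, Ideal.Quotient.eq_zero_iff_mem.2, map_zero]
    apply hI
    rw [mem_annIdeal, map_sum]
    funext x
    simp only [LinearMap.sum_apply, Finset.sum_apply, act_single, ← sub_eq_add_neg,
      Finset.sum_sub_distrib, ht k hk x, Pi.zero_apply]
    simp [hF0]
  have := dvd_card_class hp F ε hε0 hsum hf₀
  convert this using 2
  refine Finset.filter_congr fun f _ => ?_
  rw [hpow, hpow, hinj.eq_iff, mem_idealPeriods]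
  have e1 : p • (f - f₀) = p • f + -(p • f₀) := by rw [smul_sub, sub_eq_add_neg]
  rw [e1, hmul]
  constructor
  · intro h1
    have h2 := hinv (p • f)
    have h3 := congrArg
      (· * Ideal.Quotient.mk P (AddMonoidAlgebra.single (-(p • f)) (1 : ℝ))) h1
    simp only [one_mul] at h3
    rw [← h3, mul_right_comm, h2, one_mul]
  · intro h1
    rw [← h1, hinv]

end Ann

/-! ### Clusters of prime square size: one line and finitely many planes -/

open Matrix in
/-- The functional `u ↦ n ⬝ u` on `ℤ³`. -/
def dotHom (n : Fin 3 → ℤ) : (Fin 3 → ℤ) →+ ℤ where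
  toFun u := n ⬝ᵥ u
  map_zero' := by simp
  map_add' := by simp [dotProduct_add]

theorem dotHom_apply (n u : Fin 3 → ℤ) : dotHom n u = n 0 * u 0 + n 1 * u 1 + n 2 * u 2 := by
  simp [dotHom, dotProduct, Fin.sum_univ_three]

/-- Every nonzero functional is an integer multiple of one with value `1` somewhere. -/
theorem exists_primitive {G : Type*} [AddCommGroup G] (ρ : G →+ ℤ) (h : ∃ u, ρ u ≠ 0) :
    ∃ (π : G →+ ℤ) (t : G), π t = 1 ∧ ∀ u, π u = 0 ↔ ρ u = 0 := by
  obtain ⟨a, ha⟩ := Int.subgroup_cyclic ρ.range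
  have hdvd : ∀ u, a ∣ ρ u := by
    intro u
    have : ρ u ∈ ρ.range := ⟨u, rfl⟩
    rw [ha, AddSubgroup.mem_closure_singleton] at this
    obtain ⟨k, hk⟩ := this
    exact ⟨k, by rw [← hk, smul_eq_mul, mul_comm]⟩
  have ha0 : a ≠ 0 := by
    rintro rfl
    obtain ⟨u, hu⟩ := h
    exact hu (zero_dvd_iff.1 (hdvd u))
  obtain ⟨t, ht⟩ : a ∈ ρ.range := by
    rw [ha]; exact AddSubgroup.subset_closure rfl
  refine ⟨{ toFun := fun u => ρ u / a, map_zero' := by simp, map_add' := fun u v => by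
              rw [map_add, Int.add_ediv_of_dvd_left (hdvd u)] }, t, ?_, fun u => ?_⟩
  · show ρ t / a = 1
    rw [ht, Int.ediv_self ha0]
  · show ρ u / a = 0 ↔ ρ u = 0
    obtain ⟨k, hk⟩ := hdvd u
    rw [hk, Int.mul_ediv_cancel_left _ ha0]
    simp [ha0]

/-- The cluster is contained in a single level set of a primitive functional. -/
def Planar (F : Finset (Fin 3 → ℤ)) : Prop :=
  ∃ (π : (Fin 3 → ℤ) →+ ℤ) (t : Fin 3 → ℤ), π t = 1 ∧ ∀ f ∈ F, ∀ f' ∈ F, π f = π f'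

section Cross
open Matrix

theorem planar_of_cross {F : Finset (Fin 3 → ℤ)} {n : Fin 3 → ℤ} (hn : n ≠ 0) {f₀ : Fin 3 → ℤ}
    (h : ∀ f ∈ F, dotHom n (f - f₀) = 0) : Planar F := by
  obtain ⟨i, hi⟩ := Function.ne_iff.1 hn
  obtain ⟨π, t, ht, hk⟩ := exists_primitive (dotHom n) ⟨Pi.single i 1, by simpa [dotHom] using hi⟩
  refine ⟨π, t, ht, fun f hf f' hf' => ?_⟩
  have h1 := (hk _).2 (h f hf)
  have h2 := (hk _).2 (h f' hf')
  rw [map_sub, sub_eq_zero] at h1 h2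
  rw [h1, h2]

/-- Each class of the cluster modulo `Λ` has a size divisible by `p`. -/
def Fat (p : ℕ) (F : Finset (Fin 3 → ℤ)) (Λ : AddSubgroup (Fin 3 → ℤ)) : Prop :=
  ∀ f₀ ∈ F, ∀ C : Finset (Fin 3 → ℤ), (∀ f, f ∈ C ↔ f ∈ F ∧ f - f₀ ∈ Λ) → p ∣ C.card

/-- Each class of the cluster modulo `Λ` is contained in a line, of a direction independent of the
class. -/
def Thin (F : Finset (Fin 3 → ℤ)) (Λ : AddSubgroup (Fin 3 → ℤ)) : Prop :=
  ∀ f₁ ∈ F, ∀ f₂ ∈ F, f₁ - f₂ ∈ Λ → ∀ f₃ ∈ F, ∀ f₄ ∈ F, f₃ - f₄ ∈ Λ →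
    (f₁ - f₂) ⨯₃ (f₃ - f₄) = 0

theorem dot_cross_eq_zero_right {d b w : Fin 3 → ℤ} (h : w ⨯₃ d = 0) : dotHom (d ⨯₃ b) w = 0 := by
  have h0 := congrFun h 0
  have h1 := congrFun h 1
  have h2 := congrFun h 2
  simp [cross_apply] at h0 h1 h2
  simp [dotHom_apply, cross_apply]
  linear_combination b 0 * h0 + b 1 * h1 + b 2 * h2

theorem dot_cross_eq_zero_left {d b w : Fin 3 → ℤ} (h : w ⨯₃ b = 0) : dotHom (d ⨯₃ b) w = 0 := by
  have h0 := congrFun h 0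
  have h1 := congrFun h 1
  have h2 := congrFun h 2
  simp [cross_apply] at h0 h1 h2
  simp [dotHom_apply, cross_apply]
  linear_combination - d 0 * h0 - d 1 * h1 - d 2 * h2

theorem smul_eq_of_cross_eq_zero {d b : Fin 3 → ℤ} (h : d ⨯₃ b = 0) (i : Fin 3) : d i • b = b i • d := by
  have h0 := congrFun h 0
  have h1 := congrFun h 1
  have h2 := congrFun h 2
  simp [cross_apply] at h0 h1 h2
  funext j
  fin_cases i <;> fin_cases j <;> simp <;> linarith

theorem cross_eq_zero_trans {d b w : Fin 3 → ℤ} (hw : w ≠ 0) (h1 : w ⨯₃ d = 0) (h2 : w ⨯₃ b = 0) :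
    d ⨯₃ b = 0 := by
  obtain ⟨i, hi⟩ := Function.ne_iff.1 hw
  have key : (w i • d) ⨯₃ (w i • b) = 0 := by
    rw [smul_eq_of_cross_eq_zero h1 i, smul_eq_of_cross_eq_zero h2 i, map_smul, LinearMap.map_smul₂,
      cross_self, smul_zero, smul_zero]
  rw [map_smul, LinearMap.map_smul₂] at key
  have hi' : w i ≠ 0 := hi
  exact (smul_eq_zero_iff_right hi').1 ((smul_eq_zero_iff_right hi').1 key)

/-- A subgroup containing `d` and `e` contains a fixed multiple of the plane orthogonal to `d ⨯₃ e`. -/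
theorem norm_smul_mem {Λ : AddSubgroup (Fin 3 → ℤ)} {d e u : Fin 3 → ℤ} (hd : d ∈ Λ) (he : e ∈ Λ)
    (hu : dotHom (d ⨯₃ e) u = 0) : (dotHom (d ⨯₃ e) (d ⨯₃ e)) • u ∈ Λ := by
  have : (dotHom (d ⨯₃ e) (d ⨯₃ e)) • u =
      (dotHom (d ⨯₃ e) (u ⨯₃ e)) • d + (dotHom (d ⨯₃ e) (d ⨯₃ u)) • e := by
    simp [dotHom_apply, cross_apply] at hu
    funext j
    fin_cases j <;> simp [dotHom_apply, cross_apply]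
    · linear_combination (d 1 * e 2 - d 2 * e 1) * hu
    · linear_combination (d 2 * e 0 - d 0 * e 2) * hu
    · linear_combination (d 0 * e 1 - d 1 * e 0) * hu
  rw [this]
  exact add_mem (zsmul_mem hd _) (zsmul_mem he _)

open Classical in
/-- The points of the cluster congruent to `f₀` modulo `Λ`. -/
noncomputable def cls (F : Finset (Fin 3 → ℤ)) (Λ : AddSubgroup (Fin 3 → ℤ)) (f₀ : Fin 3 → ℤ) :
    Finset (Fin 3 → ℤ) := F.filter fun f => f - f₀ ∈ Λ

theorem mem_cls {F : Finset (Fin 3 → ℤ)} {Λ : AddSubgroup (Fin 3 → ℤ)} {f₀ f : Fin 3 → ℤ} :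
    f ∈ cls F Λ f₀ ↔ f ∈ F ∧ f - f₀ ∈ Λ := by simp [cls]

theorem Fat.le_card {p : ℕ} {F : Finset (Fin 3 → ℤ)} {Λ : AddSubgroup (Fin 3 → ℤ)} (h : Fat p F Λ)
    {f₀ : Fin 3 → ℤ} (hf₀ : f₀ ∈ F) : p ≤ (cls F Λ f₀).card := by
  refine Nat.le_of_dvd (Finset.card_pos.2 ⟨f₀, ?_⟩) (h f₀ hf₀ _ fun f => mem_cls)
  exact mem_cls.2 ⟨hf₀, by simp⟩

theorem Fat.exists_ne {p : ℕ} (hp : p.Prime) {F : Finset (Fin 3 → ℤ)} {Λ : AddSubgroup (Fin 3 → ℤ)}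
    (h : Fat p F Λ) (hF : F.Nonempty) : ∃ f ∈ F, ∃ f' ∈ F, f - f' ∈ Λ ∧ f - f' ≠ 0 := by
  obtain ⟨f₀, hf₀⟩ := hF
  have h1 : 1 < (cls F Λ f₀).card := lt_of_lt_of_le hp.one_lt (h.le_card hf₀)
  obtain ⟨f, hf, hne⟩ := Finset.exists_mem_ne h1 f₀
  rw [mem_cls] at hf
  exact ⟨f, hf.1, f₀, hf₀, hf.2, sub_ne_zero.2 hne⟩

/-- Two fat and thin subgroups of different directions force the cluster into a plane: the `p`
points of a line in one direction each carry `p` points on a line of the other direction. -/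
theorem parallel_of_thin {p : ℕ} {F : Finset (Fin 3 → ℤ)} (hF : F.card = p ^ 2)
    (hpl : ¬ Planar F) {Λ₁ Λ₂ : AddSubgroup (Fin 3 → ℤ)} (hf1 : Fat p F Λ₁) (hf2 : Fat p F Λ₂)
    (ht1 : Thin F Λ₁) (ht2 : Thin F Λ₂) {a₁ a₂ c₁ c₂ : Fin 3 → ℤ} (ha₁ : a₁ ∈ F) (ha₂ : a₂ ∈ F)
    (hc₁ : c₁ ∈ F) (hc₂ : c₂ ∈ F) (hb : a₁ - a₂ ∈ Λ₁) (hd : c₁ - c₂ ∈ Λ₂) :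
    (c₁ - c₂) ⨯₃ (a₁ - a₂) = 0 := by
  classical
  by_contra hne
  set b := a₁ - a₂ with hb'
  set d := c₁ - c₂ with hd'
  set U := (cls F Λ₁ a₁).biUnion fun c => cls F Λ₂ c with hU
  have hdisj : ∀ x ∈ cls F Λ₁ a₁, ∀ y ∈ cls F Λ₁ a₁, x ≠ y → Disjoint (cls F Λ₂ x) (cls F Λ₂ y) := by
    intro x hx y hy hxy
    rw [Finset.disjoint_left]
    intro z hz hz'
    rw [mem_cls] at hx hy hz hz'
    have h1 : x - y ∈ Λ₂ := by
      have := sub_mem hz'.2 hz.2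
      rwa [show z - y - (z - x) = x - y by abel] at this
    have h2 : x - y ∈ Λ₁ := by
      have := sub_mem hx.2 hy.2
      rwa [show x - a₁ - (y - a₁) = x - y by abel] at this
    exact hne (cross_eq_zero_trans (sub_ne_zero.2 hxy) (ht2 x hx.1 y hy.1 h1 c₁ hc₁ c₂ hc₂ hd)
      (ht1 x hx.1 y hy.1 h2 a₁ ha₁ a₂ ha₂ hb))
  have hcard : F.card ≤ U.card := by
    rw [hU, Finset.card_biUnion hdisj, hF, sq]
    calc p * p ≤ (cls F Λ₁ a₁).card * p := Nat.mul_le_mul_right p (hf1.le_card ha₁)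
      _ = ∑ c ∈ cls F Λ₁ a₁, p := by simp
      _ ≤ _ := Finset.sum_le_sum fun c hc => hf2.le_card (mem_cls.1 hc).1
  have hsub : U ⊆ F := Finset.biUnion_subset.2 fun c _ f hf => (mem_cls.1 hf).1
  have hUF : U = F := Finset.eq_of_subset_of_card_le hsub hcard
  refine hpl (planar_of_cross (n := d ⨯₃ b) hne (f₀ := a₁) fun f hf => ?_)
  rw [← hUF, hU, Finset.mem_biUnion] at hf
  obtain ⟨c, hc, hfc⟩ := hf
  rw [mem_cls] at hc hfc
  have h1 := dot_cross_eq_zero_right (b := b) (ht2 f hfc.1 c hc.1 hfc.2 c₁ hc₁ c₂ hc₂ hd)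
  have h2 := dot_cross_eq_zero_left (d := d) (ht1 c hc.1 a₁ ha₁ hc.2 a₁ ha₁ a₂ ha₂ hb)
  rw [show f - a₁ = (f - c) + (c - a₁) by abel, map_add, h1, h2, add_zero]

/-- A plane: the kernel of a primitive functional. -/
def IsPlane (K : AddSubgroup (Fin 3 → ℤ)) : Prop :=
  ∃ (π : (Fin 3 → ℤ) →+ ℤ) (t : Fin 3 → ℤ), π t = 1 ∧ K = π.ker

theorem dvd_smul_mem {Λ : AddSubgroup (Fin 3 → ℤ)} {z : ℤ} {q : ℕ} {u : Fin 3 → ℤ} (hu : z • u ∈ Λ)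
    (hz : z ≠ 0) {B : ℕ} (hB : z.natAbs ≤ B) (hq : B.factorial = q) : q • u ∈ Λ := by
  have h1 : (z.natAbs : ℤ) ∣ B.factorial :=
    Int.natCast_dvd_natCast.2 (Nat.dvd_factorial (Int.natAbs_pos.2 hz) hB)
  rw [Int.natAbs_dvd] at h1
  obtain ⟨k, hk⟩ := h1
  rw [← hq, ← natCast_zsmul, hk, mul_comm, mul_smul]
  exact zsmul_mem hu k

/-- For a nonplanar cluster of size `p ^ 2` there are a line `ℤ b` and finitely many planes not
containing it such that every fat subgroup contains, up to a bounded multiple, the line or one of the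
planes: the thin fat subgroups share the direction of `b`, and a fat subgroup which is not thin
contains a plane spanned by two differences of points of `F`. -/
theorem exists_line_and_planes {p : ℕ} (hp : p.Prime) {F : Finset (Fin 3 → ℤ)} (hF : F.card = p ^ 2)
    (hpl : ¬ Planar F) : ∃ (b : Fin 3 → ℤ) (q : ℕ) (𝒦 : Finset (AddSubgroup (Fin 3 → ℤ))),
      b ≠ 0 ∧ 0 < q ∧ (∀ K ∈ 𝒦, IsPlane K ∧ b ∉ K) ∧
      ∀ Λ, Fat p F Λ → q • b ∈ Λ ∨ ∃ K ∈ 𝒦, ∀ u ∈ K, q • u ∈ Λ := by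
  classical
  have hF0 : F.Nonempty := Finset.card_pos.1 (by rw [hF]; exact pow_pos hp.pos 2)
  obtain ⟨b, hb0, hb⟩ : ∃ b : Fin 3 → ℤ, b ≠ 0 ∧ ∀ Λ, Fat p F Λ → Thin F Λ →
      ∀ c₁ ∈ F, ∀ c₂ ∈ F, c₁ - c₂ ∈ Λ → (c₁ - c₂) ⨯₃ b = 0 := by
    by_cases hex : ∃ Λ, Fat p F Λ ∧ Thin F Λ
    · obtain ⟨Λ₁, hf1, ht1⟩ := hex
      obtain ⟨a₁, ha₁, a₂, ha₂, hm, hne⟩ := hf1.exists_ne hp hF0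
      exact ⟨a₁ - a₂, hne, fun Λ hf ht c₁ hc₁ c₂ hc₂ hd =>
        parallel_of_thin hF hpl hf1 hf ht1 ht ha₁ ha₂ hc₁ hc₂ hm hd⟩
    · exact ⟨Pi.single 0 1, by simp, fun Λ hf ht => absurd ⟨Λ, hf, ht⟩ hex⟩
  set D : Finset (Fin 3 → ℤ) := (F ×ˢ F).image fun x => x.1 - x.2 with hD
  have hmemD : ∀ f ∈ F, ∀ f' ∈ F, f - f' ∈ D := fun f hf f' hf' =>
    Finset.mem_image.2 ⟨(f, f'), by simp [hf, hf'], rfl⟩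
  set B : ℕ := ∑ x ∈ D, ∑ i, (x i).natAbs +
    ∑ x ∈ D ×ˢ D, (dotHom (x.1 ⨯₃ x.2) (x.1 ⨯₃ x.2)).natAbs with hB
  have hB1 : ∀ x ∈ D, ∀ i, (x i).natAbs ≤ B := by
    intro x hx i
    calc (x i).natAbs ≤ ∑ i, (x i).natAbs :=
          Finset.single_le_sum (f := fun i => (x i).natAbs) (fun _ _ => Nat.zero_le _) (Finset.mem_univ i)
      _ ≤ ∑ x ∈ D, ∑ i, (x i).natAbs :=
          Finset.single_le_sum (f := fun x : Fin 3 → ℤ => ∑ i, (x i).natAbs)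
            (fun _ _ => Nat.zero_le _) hx
      _ ≤ B := Nat.le_add_right _ _
  have hB2 : ∀ x ∈ D, ∀ y ∈ D, (dotHom (x ⨯₃ y) (x ⨯₃ y)).natAbs ≤ B := by
    intro x hx y hy
    calc _ ≤ ∑ x ∈ D ×ˢ D, (dotHom (x.1 ⨯₃ x.2) (x.1 ⨯₃ x.2)).natAbs :=
          Finset.single_le_sum
            (f := fun x : (Fin 3 → ℤ) × (Fin 3 → ℤ) => (dotHom (x.1 ⨯₃ x.2) (x.1 ⨯₃ x.2)).natAbs)
            (fun _ _ => Nat.zero_le _) (Finset.mk_mem_product hx hy)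
      _ ≤ B := Nat.le_add_left _ _
  refine ⟨b, B.factorial, ((D ×ˢ D).filter fun x => dotHom (x.1 ⨯₃ x.2) b ≠ 0).image
    fun x => (dotHom (x.1 ⨯₃ x.2)).ker, hb0, Nat.factorial_pos _, ?_, ?_⟩
  · intro K hK
    obtain ⟨x, hx, rfl⟩ := Finset.mem_image.1 hK
    have hxb := (Finset.mem_filter.1 hx).2
    refine ⟨?_, hxb⟩
    obtain ⟨π, t, ht, hk⟩ := exists_primitive _ ⟨b, hxb⟩
    refine ⟨π, t, ht, ?_⟩
    ext u
    exact (hk u).symm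
  · intro Λ hΛ
    by_cases hth : Thin F Λ
    · left
      obtain ⟨c₁, hc₁, c₂, hc₂, hm, hne⟩ := hΛ.exists_ne hp hF0
      obtain ⟨i, hi⟩ := Function.ne_iff.1 hne
      have := smul_eq_of_cross_eq_zero (hb Λ hΛ hth c₁ hc₁ c₂ hc₂ hm) i
      exact dvd_smul_mem (this ▸ zsmul_mem hm _) hi (hB1 _ (hmemD _ hc₁ _ hc₂) i) rfl
    · unfold Thin at hth
      push Not at hth
      obtain ⟨f₁, h1, f₂, h2, h12, f₃, h3, f₄, h4, h34, hne⟩ := hth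
      have hD1 := hmemD _ h1 _ h2
      have hD2 := hmemD _ h3 _ h4
      set d := f₁ - f₂
      set e := f₃ - f₄
      have hn0 : dotHom (d ⨯₃ e) (d ⨯₃ e) ≠ 0 := by
        intro h0
        apply hne
        have : (d ⨯₃ e) ⬝ᵥ (d ⨯₃ e) = 0 := h0
        exact dotProduct_self_eq_zero.1 this
      have hmem : ∀ u, dotHom (d ⨯₃ e) u = 0 → B.factorial • u ∈ Λ := fun u hu =>
        dvd_smul_mem (norm_smul_mem h12 h34 hu) hn0 (hB2 _ hD1 _ hD2) rfl
      by_cases hbd : dotHom (d ⨯₃ e) b = 0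
      · exact Or.inl (hmem b hbd)
      · refine Or.inr ⟨(dotHom (d ⨯₃ e)).ker, Finset.mem_image.2 ⟨(d, e), ?_, rfl⟩, fun u hu => hmem u hu⟩
        exact Finset.mem_filter.2 ⟨Finset.mk_mem_product hD1 hD2, hbd⟩

end Cross

/-! ### Decomposition of a tiling into periodic summands -/

section
variable {G : Type*} [AddCommGroup G]

/-- The element of the group algebra acting as the difference operator in direction `w`. -/
noncomputable def diffOp (w : G) : AddMonoidAlgebra ℝ G := AddMonoidAlgebra.single w 1 - 1

theorem act_diffOp (w : G) (φ : G → ℝ) (x : G) : act ℝ G (diffOp w) φ x = φ (x + w) - φ x := by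
  simp [diffOp, act_single]

theorem bdd_act (c : AddMonoidAlgebra ℝ G) {φ : G → ℝ} (h : Bdd φ) : Bdd (act ℝ G c φ) := by
  induction c using AddMonoidAlgebra.induction_linear with
  | zero => rw [map_zero]; exact Bdd.const (0 : ℝ)
  | add a b ha hb => rw [map_add]; exact ha.add hb
  | single u r =>
    have h1 : AddMonoidAlgebra.single u r = r • (AddMonoidAlgebra.single u (1 : ℝ)) := by simp
    have h2 : act ℝ G (AddMonoidAlgebra.single u r) φ = fun x => r * φ (x + u) := by
      funext x
      rw [h1, map_smul, LinearMap.smul_apply, Pi.smul_apply, act_single, smul_eq_mul]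
    rw [h2]
    exact (Bdd.const r).mul (h.comp _)

/-- A bounded function with vanishing second difference has vanishing first difference. -/
theorem diffOp_mem_of_sq {φ : G → ℝ} (h : Bdd φ) {w : G} {c : AddMonoidAlgebra ℝ G}
    (h2 : diffOp w * (diffOp w * c) ∈ annIdeal φ) : diffOp w * c ∈ annIdeal φ := by
  rw [mem_annIdeal] at h2 ⊢
  set ψ := act ℝ G c φ with hψ
  have hψb : Bdd ψ := bdd_act c h
  have e1 : act ℝ G (diffOp w * c) φ = act ℝ G (diffOp w) ψ := by rw [map_mul]; rfl
  have e2 : act ℝ G (diffOp w * (diffOp w * c)) φ = act ℝ G (diffOp w) (act ℝ G (diffOp w) ψ) := by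
    rw [map_mul, map_mul]; rfl
  rw [e1]
  rw [e2] at h2
  funext x
  have hstep : ∀ n : ℕ, ψ (x + (n + 1) • w) - ψ (x + n • w) = ψ (x + w) - ψ x := by
    intro n
    induction n with
    | zero => simp
    | succ n ih =>
      have := congrFun h2 (x + n • w)
      simp only [act_diffOp, Pi.zero_apply] at this
      rw [← ih]
      rw [show x + n • w + w = x + (n + 1) • w by rw [succ_nsmul]; abel,
        show x + (n + 1) • w + w = x + (n + 1 + 1) • w by rw [succ_nsmul _ (n + 1)]; abel] at this
      linarith
  have hlin : ∀ n : ℕ, ψ (x + n • w) = ψ x + n * (ψ (x + w) - ψ x) := by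
    intro n
    induction n with
    | zero => simp
    | succ n ih =>
      have := hstep n
      push_cast
      linarith
  obtain ⟨C, hC⟩ := hψb
  rw [act_diffOp, Pi.zero_apply]
  by_contra hne
  have hpos : 0 < |ψ (x + w) - ψ x| := abs_pos.2 hne
  obtain ⟨n, hn⟩ := exists_nat_gt ((2 * C) / |ψ (x + w) - ψ x|)
  rw [div_lt_iff₀ hpos] at hn
  have h3 := hlin n
  have h4 : (n : ℝ) * |ψ (x + w) - ψ x| = |ψ (x + n • w) - ψ x| := by
    rw [h3, add_sub_cancel_left, abs_mul, Nat.abs_cast]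
  have h5 := abs_sub (ψ (x + n • w)) (ψ x)
  have h6 := hC (x + n • w)
  have h7 := hC x
  rw [Real.norm_eq_abs] at h6 h7
  linarith

theorem diffOp_mem_of_pow {φ : G → ℝ} (h : Bdd φ) {w : G} {c : AddMonoidAlgebra ℝ G} {M : ℕ}
    (hM : diffOp w ^ M * c ∈ annIdeal φ) : diffOp w * c ∈ annIdeal φ := by
  induction M with
  | zero => exact Ideal.mul_mem_left _ _ (by simpa using hM)
  | succ M ih =>
    rcases M with _ | M
    · simpa using hM
    · refine ih ?_
      rw [pow_succ', mul_assoc]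
      refine diffOp_mem_of_sq h ?_
      rw [← mul_assoc, ← mul_assoc, ← pow_two, ← pow_add, add_comm 2 M]
      exact hM

theorem prod_diffOp_mem_of_pow {ι : Type*} {φ : G → ℝ} (h : Bdd φ) (s : Finset ι) (w : ι → G) {M : ℕ}
    {c : AddMonoidAlgebra ℝ G} (hM : (∏ i ∈ s, diffOp (w i)) ^ M * c ∈ annIdeal φ) :
    (∏ i ∈ s, diffOp (w i)) * c ∈ annIdeal φ := by
  classical
  induction s using Finset.induction_on generalizing c with
  | empty => simpa using hM
  | insert a s ha ih =>
    rw [Finset.prod_insert ha] at hM ⊢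
    rw [mul_pow, mul_assoc] at hM
    have h1 := diffOp_mem_of_pow h hM
    rw [mul_left_comm] at h1
    have h2 := ih h1
    rwa [mul_left_comm, ← mul_assoc] at h2

theorem gmean_act_prod {ι : Type*} (L : List G) {φ : G → ℝ} (h : Bdd φ) (s : Finset ι) (w : ι → G) :
    gmean L (act ℝ G (∏ i ∈ s, diffOp (w i)) φ) = act ℝ G (∏ i ∈ s, diffOp (w i)) (gmean L φ) := by
  classical
  induction s using Finset.induction_on with
  | empty => simp
  | insert a s ha ih =>
    rw [Finset.prod_insert ha, map_mul, Module.End.mul_apply, Module.End.mul_apply, ← ih]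
    have hb := bdd_act (∏ i ∈ s, diffOp (w i)) h
    set ψ := act ℝ G (∏ i ∈ s, diffOp (w i)) φ
    have e : act ℝ G (diffOp (w a)) ψ = fun x => ψ (x + w a) - ψ x := funext fun x => act_diffOp _ _ _
    rw [e, gmean_sub L (hb.comp _) hb, gmean_translate]
    funext x
    rw [act_diffOp]

/-- If products of difference operators, one from each of finitely many finitely generated groups,
annihilate a bounded function, then the function is a sum of bounded functions invariant under
these groups. The summands are found by averaging. -/
theorem exists_decomposition {ι : Type*} (L : ι → List G) (s : Finset ι) {φ : G → ℝ} (h : Bdd φ)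
    (hs : ∀ w : ι → G, (∀ i ∈ s, w i ∈ AddSubgroup.closure {u | u ∈ L i}) →
      ∏ i ∈ s, diffOp (w i) ∈ annIdeal φ) :
    ∃ χ : ι → G → ℝ, (∀ i ∈ s, Bdd (χ i) ∧ AddSubgroup.closure {u | u ∈ L i} ≤ periods (χ i)) ∧
      ∀ x, φ x = ∑ i ∈ s, χ i x := by
  classical
  induction s using Finset.induction_on generalizing φ with
  | empty =>
    have := hs (fun _ => 0) (by simp)
    rw [Finset.prod_empty, mem_annIdeal, map_one, Module.End.one_apply] at this
    exact ⟨fun _ _ => 0, by simp, fun x => by simp [this]⟩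
  | insert a s ha ih =>
    have hb := bdd_gmean (L a) h
    obtain ⟨χ, h1, h2⟩ := ih (φ := fun x => φ x - gmean (L a) φ x) (h.sub hb) (by
      intro w hw
      set c := ∏ i ∈ s, diffOp (w i) with hc
      have hinv : AddSubgroup.closure {u | u ∈ L a} ≤ periods (act ℝ G c φ) := by
        intro u hu x
        have h3 := hs (Function.update w a u) (by
          intro i hi
          by_cases hia : i = a
          · subst hia; simpa using hu
          · rw [Function.update_of_ne hia]
            exact hw i (Finset.mem_of_mem_insert_of_ne hi hia))
        rw [Finset.prod_insert ha, Function.update_self,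
          Finset.prod_congr rfl (g := fun i => diffOp (w i)) (fun i hi => by
            rw [Function.update_of_ne (ne_of_mem_of_not_mem hi ha)]), mem_annIdeal, map_mul,
            Module.End.mul_apply] at h3
        have h4 := congrFun h3 x
        rw [act_diffOp, Pi.zero_apply] at h4
        linarith
      have h5 := gmean_eq_self _ hinv
      rw [gmean_act_prod _ h] at h5
      rw [mem_annIdeal, show (fun x => φ x - gmean (L a) φ x) = φ - gmean (L a) φ from rfl, map_sub,
        h5, sub_self])
    refine ⟨Function.update χ a (gmean (L a) φ), ?_, fun x => ?_⟩
    · intro i hi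
      by_cases hia : i = a
      · subst hia
        rw [Function.update_self]
        exact ⟨hb, closure_le_periods_gmean _ h⟩
      · rw [Function.update_of_ne hia]
        exact h1 i (Finset.mem_of_mem_insert_of_ne hi hia)
    · rw [Finset.sum_insert ha, Function.update_self,
        Finset.sum_congr rfl (g := fun i => χ i x) (fun i hi => by
            rw [Function.update_of_ne (ne_of_mem_of_not_mem hi ha)]), ← h2 x]
      ring
end

theorem exists_list (K : AddSubgroup (Fin 3 → ℤ)) :
    ∃ L : List (Fin 3 → ℤ), AddSubgroup.closure {u | u ∈ L} = K := by
  have h : (AddSubgroup.toIntSubmodule K).FG := IsNoetherian.noetherian _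
  rw [Submodule.fg_iff_addSubgroup_fg] at h
  obtain ⟨S, hS⟩ := h
  exact ⟨S.toList, by simpa using hS⟩

/-- `g` is a sum of a bounded `q • b`-periodic function and of bounded functions invariant under
`q • K`, one for each plane `K ∈ 𝒦`. -/
def Decomp (b : Fin 3 → ℤ) (q : ℕ) (𝒦 : Finset (AddSubgroup (Fin 3 → ℤ))) (g : (Fin 3 → ℤ) → ℝ) : Prop :=
  ∃ (h : (Fin 3 → ℤ) → ℝ) (k : AddSubgroup (Fin 3 → ℤ) → (Fin 3 → ℤ) → ℝ),
    Bdd h ∧ q • b ∈ periods h ∧ (∀ K ∈ 𝒦, Bdd (k K) ∧ ∀ u ∈ K, q • u ∈ periods (k K)) ∧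
    ∀ x, g x = h x + ∑ K ∈ 𝒦, k K x

/-- Some tiling by a nonplanar cluster of size `p ^ 2` has a decomposition into a summand periodic
along a line and summands invariant under planes. Every prime containing the annihilator of the
balanced tiling function has a fat group of periods up to a factor `p`, so `exists_line_and_planes`
puts products of difference operators into the radical of the annihilator; boundedness removes the
radical, and `exists_decomposition` applies. -/
theorem exists_decomp {p : ℕ} (hp : p.Prime) {F : Finset (Fin 3 → ℤ)} (hF : F.card = p ^ 2)
    (hpl : ¬ Planar F) {g₀ : (Fin 3 → ℤ) → ℝ} (hg₀ : ZeroOne g₀) (ht₀ : Tile F 1 g₀) :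
    ∃ (b : Fin 3 → ℤ) (q : ℕ) (𝒦 : Finset (AddSubgroup (Fin 3 → ℤ))) (g : (Fin 3 → ℤ) → ℝ),
      b ≠ 0 ∧ 0 < q ∧ (∀ K ∈ 𝒦, IsPlane K ∧ b ∉ K) ∧ ZeroOne g ∧ Tile F 1 g ∧ Decomp b q 𝒦 g := by
  classical
  obtain ⟨b, q, 𝒦, hb, hq, hK, hfat⟩ := exists_line_and_planes hp hF hpl
  obtain ⟨L, hL⟩ := exists_list ⊤
  obtain ⟨g, hg, ht⟩ := exists_tile_dilate hL hg₀ ht₀ (1 + p * F.card)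
  have ht' : ∀ k < F.card, Tile F (1 + p * k) g := by
    intro k hk
    refine ht _ (by omega) ?_ ?_
    · have := Nat.mul_le_mul_left p hk.le
      omega
    · rw [hF]
      refine Nat.Coprime.pow_right 2 ?_
      simp
  have ht1 : Tile F 1 g := by
    have := ht' 0 (by rw [hF]; exact pow_pos hp.pos 2)
    simpa using this
  set φ : (Fin 3 → ℤ) → ℝ := fun x => g x - 1 / F.card with hφ
  have hφb : Bdd φ := hg.bdd.sub (Bdd.const _)
  have hprime : ∀ P : Ideal (AddMonoidAlgebra ℝ (Fin 3 → ℤ)), P.IsPrime → annIdeal φ ≤ P →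
      (q * p) • b ∈ idealPeriods P ∨ ∃ K ∈ 𝒦, ∀ u ∈ K, (q * p) • u ∈ idealPeriods P := by
    intro P hP hI
    have := hfat ((idealPeriods P).comap (nsmulAddMonoidHom p)) (by
      intro f₀ hf₀ C hC
      have h1 := dvd_card_idealPeriods hp ht' hP hI hf₀
      convert h1 using 2
      ext f
      rw [hC, Finset.mem_filter]
      rfl)
    have hcm : ∀ u : Fin 3 → ℤ, q • u ∈ (idealPeriods P).comap (nsmulAddMonoidHom p) →
        (q * p) • u ∈ idealPeriods P := by
      intro u hu
      rw [mul_nsmul]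
      exact hu
    exact this.imp (hcm b) fun ⟨K, hK, hu⟩ => ⟨K, hK, fun u h => hcm u (hu u h)⟩
  -- the groups to be averaged over: `none` stands for the line, `some K` for the plane `K`
  set W : Option (AddSubgroup (Fin 3 → ℤ)) → AddSubgroup (Fin 3 → ℤ) := fun i =>
    (i.elim (AddSubgroup.zmultiples b) id).map (nsmulAddMonoidHom (q * p)) with hW
  choose Ls hLs using fun i => exists_list (W i)
  obtain ⟨χ, h1, h2⟩ := exists_decomposition Ls (Finset.insertNone 𝒦) hφb (by
    intro w hw
    simp_rw [hLs] at hw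
    have hrad : ∏ i ∈ Finset.insertNone 𝒦, diffOp (w i) ∈ (annIdeal φ).radical := by
      rw [Ideal.radical_eq_sInf, Submodule.mem_sInf]
      rintro P ⟨hI, hP⟩
      have hmem : ∀ u, u ∈ idealPeriods P → diffOp u ∈ P := by
        intro u hu
        rw [mem_idealPeriods] at hu
        rw [← Ideal.Quotient.eq_zero_iff_mem, diffOp, map_sub, hu, map_one, sub_self]
      suffices h : ∃ i ∈ Finset.insertNone 𝒦, diffOp (w i) ∈ P by
        obtain ⟨i, hi, hiP⟩ := h
        exact Ideal.mem_of_dvd P (Finset.dvd_prod_of_mem _ hi) hiP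
      rcases hprime P hP hI with h | ⟨K, hKm, h⟩
      · refine ⟨none, by simp, hmem _ ?_⟩
        obtain ⟨u, hu, hu'⟩ := hw none (by simp)
        obtain ⟨n, rfl⟩ := AddSubgroup.mem_zmultiples_iff.1 hu
        rw [← hu']
        change (q * p) • (n • b) ∈ _
        rw [smul_comm]
        exact zsmul_mem h n
      · refine ⟨some K, by simpa using hKm, hmem _ ?_⟩
        obtain ⟨u, hu, hu'⟩ := hw (some K) (by simpa using hKm)
        rw [← hu']
        exact h u hu
    obtain ⟨M, hM⟩ := hrad
    have := prod_diffOp_mem_of_pow hφb (Finset.insertNone 𝒦) w (M := M) (c := 1) (by simpa using hM)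
    simpa using this)
  refine ⟨b, q * p, 𝒦, g, hb, Nat.mul_pos hq hp.pos, hK, hg, ht1, fun x => χ none x + 1 / F.card,
    fun K => χ (some K), ?_, ?_, ?_, fun x => ?_⟩
  · exact (h1 none (by simp)).1.add (Bdd.const _)
  · intro x
    have := (h1 none (by simp)).2 (x := (q * p) • b) (by
      rw [hLs]; exact ⟨b, AddSubgroup.mem_zmultiples b, rfl⟩) x
    simp only [this]
  · intro K hKm
    have h3 := h1 (some K) (by simpa using hKm)
    refine ⟨h3.1, fun u hu => h3.2 ?_⟩
    rw [hLs]
    exact ⟨u, hu, rfl⟩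
  · have := h2 x
    rw [Finset.sum_insertNone, hφ] at this
    simp only at this
    linarith

/-! ### Rounding of sequences with constant sum -/

/-- The fractional part of the sequence `a` is constant. -/
def IntSeq (a : ℤ → ℝ) : Prop := ∀ n, ∃ m : ℤ, a n = a 0 + m

theorem IntSeq.zeroOne {a : ℤ → ℝ} (h : IntSeq a) (ha : ∀ n, a n ∈ Set.Icc (0 : ℝ) 1) {k : ℤ}
    (hk : a k ≠ a 0) : ZeroOne a := by
  have h01 : a 0 = 0 ∨ a 0 = 1 := by
    obtain ⟨m, hm⟩ := h k
    have h1 := ha k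
    have h0 := ha 0
    rcases lt_trichotomy m 0 with hm0 | rfl | hm0
    · have : (m : ℝ) ≤ -1 := by exact_mod_cast Int.le_sub_one_of_lt hm0
      right; linarith [h1.1, h0.2]
    · simp [hm] at hk
    · have : (1 : ℝ) ≤ m := by exact_mod_cast hm0
      left; linarith [h1.2, h0.1]
  intro n
  obtain ⟨m, hm⟩ : ∃ m : ℤ, a n = m := by
    obtain ⟨m, hm⟩ := h n
    rcases h01 with h0 | h0
    · exact ⟨m, by rw [hm, h0, zero_add]⟩
    · exact ⟨1 + m, by rw [hm, h0]; push_cast; ring⟩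
  have h1 := ha n
  rw [hm] at h1 ⊢
  have h2 : 0 ≤ m := by exact_mod_cast h1.1
  have h3 : m ≤ 1 := by exact_mod_cast h1.2
  rcases (by omega : m = 0 ∨ m = 1) with rfl | rfl <;> simp

/-- Rounding a finite family of sequences of constant sum `σ ≤ 1`: if one of the sequences is not
constant, then `σ = 1`, the constant ones vanish, and at a generic time `n₀` exactly one of the
sequences exceeds `1/2`. -/
theorem rounding {ι : Type*} (s : Finset ι) (A : ι → ℤ → ℝ)
    (hA : ∀ i n, A i n ∈ Set.Icc (0 : ℝ) 1) {σ : ℝ} (hσ : ∀ n, ∑ i ∈ s, A i n = σ) (hσ1 : σ ≤ 1)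
    (hdich : ∀ i ∈ s, IntSeq (A i) ∨ mean (A i) = 1 / 2) {n₀ : ℤ}
    (hgen : ∀ i ∈ s, ¬ IntSeq (A i) → A i n₀ ≠ 1 / 2)
    (hgen' : ∀ i ∈ s, mean (A i) = 0 → A i n₀ ≠ 1)
    (hne : ∃ i ∈ s, ∃ n, A i n ≠ A i 0) :
    σ = 1 ∧ (∀ i ∈ s, (∀ n, A i n = A i 0) → A i 0 = 0) ∧
      ∑ i ∈ s, (if 1 / 2 < A i n₀ then (1 : ℝ) else 0) = 1 := by
  classical
  have hb : ∀ i, Bdd (A i) := fun i => Bdd.of_mem_Icc (hA i)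
  by_cases hI : ∃ i ∈ s, ¬ IntSeq (A i)
  · obtain ⟨i, hi, hni⟩ := hI
    -- the fractional parts of the sequences add up to a constant, so there is a second one
    obtain ⟨j, hj, hji, hnj⟩ : ∃ j ∈ s, j ≠ i ∧ ¬ IntSeq (A j) := by
      by_contra hcon
      push Not at hcon
      apply hni
      intro n
      have h1 : ∀ j ∈ s.erase i, ∃ m : ℤ, A j n = A j 0 + m := fun j hj =>
        hcon j (Finset.mem_of_mem_erase hj) (Finset.ne_of_mem_erase hj) n
      choose! m hm using h1
      refine ⟨- ∑ j ∈ s.erase i, m j, ?_⟩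
      have h2 := hσ n
      have h3 := hσ 0
      rw [← Finset.add_sum_erase s _ hi] at h2 h3
      rw [Finset.sum_congr rfl hm, Finset.sum_add_distrib] at h2
      push_cast
      linarith
    have hsub : ({i, j} : Finset ι) ⊆ s := by
      intro x hx
      simp only [Finset.mem_insert, Finset.mem_singleton] at hx
      rcases hx with rfl | rfl <;> assumption
    have hsplit : ∀ f : ι → ℝ, ∑ x ∈ s, f x = f i + f j + ∑ x ∈ s \ {i, j}, f x := by
      intro f
      rw [← Finset.sum_sdiff hsub, Finset.sum_pair hji.symm]
      ring
    have hmean : ∑ x ∈ s, mean (A x) = σ := by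
      rw [← mean_sum s (fun x _ => hb x)]
      simp_rw [hσ]
      exact mean_const σ
    have hmi := (hdich i hi).resolve_left hni
    have hmj := (hdich j hj).resolve_left hnj
    have hnn : ∀ x ∈ s \ {i, j}, 0 ≤ mean (A x) := fun x _ => mean_nonneg (hb x) fun n => (hA x n).1
    have hrest := Finset.sum_nonneg hnn
    rw [hsplit, hmi, hmj] at hmean
    have hσ' : σ = 1 := by linarith
    have hz : ∀ x ∈ s \ {i, j}, mean (A x) = 0 :=
      (Finset.sum_eq_zero_iff_of_nonneg hnn).1 (by linarith)
    have hzc : ∀ x ∈ s \ {i, j}, (∀ n, A x n = A x 0) → A x 0 = 0 := by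
      intro x hx hc
      rw [← hz x hx, funext hc, mean_const]
    have hz0 : ∀ x ∈ s \ {i, j}, A x n₀ = 0 := by
      intro x hx
      have hxs := (Finset.mem_sdiff.1 hx).1
      have hIntl : IntSeq (A x) := (hdich x hxs).resolve_right (by rw [hz x hx]; norm_num)
      by_cases hc : ∀ n, A x n = A x 0
      · rw [hc]; exact hzc x hx hc
      · push Not at hc
        obtain ⟨k, hk⟩ := hc
        exact (hIntl.zeroOne (hA x) hk n₀).resolve_right (hgen' x hxs (hz x hx))
    refine ⟨hσ', ?_, ?_⟩
    · intro x hx hc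
      by_cases hx' : x ∈ ({i, j} : Finset ι)
      · exfalso
        have : IntSeq (A x) := fun n => ⟨0, by simp [hc n]⟩
        simp only [Finset.mem_insert, Finset.mem_singleton] at hx'
        rcases hx' with rfl | rfl
        · exact hni this
        · exact hnj this
      · exact hzc x (Finset.mem_sdiff.2 ⟨hx, hx'⟩) hc
    · have h1 := hσ n₀
      rw [hsplit, Finset.sum_eq_zero hz0] at h1
      rw [hsplit, Finset.sum_eq_zero (s := s \ {i, j}) (fun x hx => by
        rw [hz0 x hx]; norm_num)]
      have h2 := hgen i hi hni
      rcases lt_or_gt_of_ne h2 with h3 | h3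
      · rw [if_neg (by linarith), if_pos (by linarith)]; ring
      · rw [if_pos (by linarith), if_neg (by linarith)]; ring
  · push Not at hI
    obtain ⟨i, hi, k, hk⟩ := hne
    have hzo := (hI i hi).zeroOne (hA i) hk
    obtain ⟨n, hn⟩ : ∃ n, A i n = 1 := by
      rcases hzo 0 with h0 | h0
      · exact ⟨k, (hzo k).resolve_left (by rwa [h0] at hk)⟩
      · exact ⟨0, h0⟩
    have h1 := hσ n
    rw [← Finset.add_sum_erase s _ hi, hn] at h1
    have hnn : ∀ x ∈ s.erase i, 0 ≤ A x n := fun x _ => (hA x n).1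
    have hrest := Finset.sum_nonneg hnn
    have hz := (Finset.sum_eq_zero_iff_of_nonneg hnn).1 (by linarith)
    have hσ' : σ = 1 := by linarith
    have hc0 : ∀ x ∈ s, (∀ n, A x n = A x 0) → A x 0 = 0 := by
      intro x hx hc
      have hxi : x ≠ i := by
        rintro rfl
        exact hk (hc k)
      rw [← hc n]
      exact hz x (Finset.mem_erase.2 ⟨hxi, hx⟩)
    refine ⟨hσ', hc0, ?_⟩
    refine (Finset.sum_congr rfl fun x hx => ?_).trans ((hσ n₀).trans hσ')
    have : A x n₀ = 0 ∨ A x n₀ = 1 := by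
      by_cases hc : ∀ n, A x n = A x 0
      · left; rw [hc]; exact hc0 x hx hc
      · push Not at hc
        obtain ⟨k', hk'⟩ := hc
        exact (hI x hx).zeroOne (hA x) hk' n₀
    rcases this with h | h <;> rw [h] <;> norm_num

section
variable {G : Type*} [AddCommGroup G]

/-- A sum of functions `χ i` invariant under `e i`, restricted to a progression whose step `z` is
congruent to each `e i` modulo the periods of the sum, is a polynomial sequence: each difference in
direction `e i` kills one summand. -/
theorem PolySeq.of_sum {ι H : Type*} [AddCommGroup H] (s : Finset ι) {z : G} (e : ι → G)
    (χ : ι → G → H) (hχ : ∀ i ∈ s, e i ∈ periods (χ i)) (ψ : G → H)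
    (hψ : ∀ x, ψ x = ∑ i ∈ s, χ i x) (hz : ∀ i ∈ s, z - e i ∈ periods ψ) (y : G) :
    PolySeq s.card (fun n => ψ (y + n • z)) := by
  classical
  induction s using Finset.induction_on generalizing χ ψ with
  | empty => intro n; simp [hψ]
  | insert a s ha ih =>
    rw [Finset.card_insert_of_notMem ha]
    intro h
    have hza : ∀ x, ψ (x + h • z) = ψ (x + h • e a) := by
      intro x
      have := zsmul_mem (hz a (Finset.mem_insert_self _ _)) h (x + h • e a)
      rw [← this, smul_sub]
      congr 1
      abel
    have := ih (fun i x => χ i (x + h • e a) - χ i x) (fun i hi x => by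
        have h1 := hχ i (Finset.mem_insert_of_mem hi)
        simp only
        rw [add_right_comm, h1, h1])
      (fun x => ψ (x + h • z) - ψ x) (fun x => by
        rw [hza, hψ, hψ, Finset.sum_insert ha, Finset.sum_insert ha, Finset.sum_sub_distrib,
          zsmul_mem (hχ a (Finset.mem_insert_self _ _)) h x]
        abel) (fun i hi x => by
        have h1 := hz i (Finset.mem_insert_of_mem hi)
        simp only
        rw [add_right_comm, h1, h1])
    convert this using 2 with n
    simp only [add_smul, add_assoc]

/-- A function invariant under `q • ker π` and under some `h ∉ ker π` is invariant under `N • G` for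
suitable `N`. -/
theorem smul_mem_periods {α : Type*} {χ : G → α} {π : G →+ ℤ} {q : ℕ} {N : ℤ} {h : G}
    (hq : ∀ u, π u = 0 → q • u ∈ periods χ) (hh : h ∈ periods χ)
    (hN : (q : ℤ) * π h ∣ N) (u : G) : N • u ∈ periods χ := by
  obtain ⟨k, rfl⟩ := hN
  have h1 := hq ((k * π h) • u - (k * π u) • h) (by simp; ring)
  have h2 : ((q : ℤ) * π h * k) • u = q • ((k * π h) • u - (k * π u) • h) + (q * k * π u) • h := by
    rw [← natCast_zsmul, smul_sub, ← mul_smul, ← mul_smul]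
    rw [show (q : ℤ) * π h * k = q * (k * π h) by ring, show (q : ℤ) * k * π u = q * (k * π u) by ring]
    abel
  rw [h2]
  exact add_mem h1 (zsmul_mem hh _)

end

/-! ### Uniform moduli and generic sampling -/

theorem exists_classes {N : ℕ} (hN : 0 < N) :
    ∃ R : Finset (Fin 3 → ℤ), ∀ y, ∃ r ∈ R, ∃ u, y = r + (N : ℤ) • u := by
  refine ⟨Fintype.piFinset fun _ => Finset.Ico (0 : ℤ) N, fun y =>
    ⟨fun i => y i % N, ?_, fun i => y i / N, ?_⟩⟩
  · rw [Fintype.mem_piFinset]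
    intro i
    rw [Finset.mem_Ico]
    exact ⟨Int.emod_nonneg _ (by positivity), Int.emod_lt_of_pos _ (by positivity)⟩
  · funext i
    simp only [Pi.add_apply, Pi.smul_apply, smul_eq_mul]
    exact (Int.emod_add_mul_ediv _ _).symm

section
variable {v : (Fin 3 → ℤ) → ℝ} {π : (Fin 3 → ℤ) →+ ℤ} {t : Fin 3 → ℤ}

/-- Modulo the periods of `v` in `ker π`, a translation by a multiple of `N` moves only along `t`. -/
theorem shift_eq (ht : π t = 1) {q : ℕ} (hq : ∀ u, π u = 0 → q • u ∈ periods v) {N : ℕ} (hqN : q ∣ N)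
    (x u : Fin 3 → ℤ) : v (x + (N : ℤ) • u) = v (x + π u • ((N : ℤ) • t)) := by
  obtain ⟨k, rfl⟩ := hqN
  have h1 := hq ((k : ℤ) • (u - π u • t)) (by
    rw [map_zsmul, map_sub, map_zsmul, ht]; simp)
  rw [← h1 (x + π u • (((q * k : ℕ) : ℤ) • t))]
  congr 1
  rw [← natCast_zsmul, Nat.cast_mul]
  simp only [smul_sub, ← mul_smul]
  rw [show π u * ((q : ℤ) * k) = q * (k * π u) by ring]
  abel

/-- The dichotomy `unit_seq_dichotomy` for the restrictions of `v` to progressions of direction `t`,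
with a step `N` independent of the progression: up to periods there are finitely many of these. -/
theorem exists_uniform (ht : π t = 1) {q : ℕ} (hq : ∀ u, π u = 0 → q • u ∈ periods v)
    (hv : ∀ x, v x ∈ Set.Icc (0 : ℝ) 1) {N₀ : ℕ} (hN₀ : 0 < N₀) (hqN : q ∣ N₀) {k : ℕ}
    (hpoly : ∀ y, PolySeq k (fun n : ℤ => (v (y + n • ((N₀ : ℤ) • t)) : UnitAddCircle))) :
    ∃ N : ℕ, 0 < N ∧ N₀ ∣ N ∧ ∀ y, IntSeq (fun n => v (y + n • ((N : ℤ) • t))) ∨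
      (mean (fun n => v (y + n • ((N : ℤ) • t))) = 1 / 2 ∧
        mean (fun n => if v (y + n • ((N : ℤ) • t)) = 1 / 2 then (1 : ℝ) else 0) = 0) := by
  classical
  obtain ⟨R, hR⟩ := exists_classes hN₀
  have hd := fun y => unit_seq_dichotomy (fun n => hv _) (hpoly y)
  have hQ : ∀ r, ∃ Q : ℕ, 0 < Q ∧ ((∀ n : ℤ, (v (r + (n + Q) • ((N₀ : ℤ) • t)) : UnitAddCircle) =
      v (r + n • ((N₀ : ℤ) • t))) ∨ ∀ Q r' : ℤ, Q ≠ 0 →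
        mean (fun n => v (r + (Q * n + r') • ((N₀ : ℤ) • t))) = 1 / 2 ∧
        mean (fun n => if v (r + (Q * n + r') • ((N₀ : ℤ) • t)) = 1 / 2 then (1 : ℝ) else 0) = 0) := by
    intro r
    rcases hd r with ⟨Q, hQ, h⟩ | h
    · exact ⟨Q, hQ, Or.inl h⟩
    · exact ⟨1, one_pos, Or.inr h⟩
  choose Q hQ0 hQ using hQ
  set M := ∏ r ∈ R, Q r with hM
  have hM0 : 0 < M := Finset.prod_pos fun r _ => hQ0 r
  refine ⟨N₀ * M, Nat.mul_pos hN₀ hM0, Dvd.intro _ rfl, fun y => ?_⟩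
  obtain ⟨r, hr, u, rfl⟩ := hR y
  have hseq : ∀ n : ℤ, v (r + (N₀ : ℤ) • u + n • (((N₀ * M : ℕ) : ℤ) • t)) =
      v (r + (M * n + π u) • ((N₀ : ℤ) • t)) := by
    intro n
    rw [add_right_comm, shift_eq ht hq hqN, add_assoc, ← mul_smul, ← mul_smul, ← mul_smul, ← add_smul]
    congr 3
    push_cast
    ring
  simp only [hseq]
  rcases hQ r with h | h
  · left
    intro n
    have hper : Function.Periodic (fun n : ℤ => (v (r + n • ((N₀ : ℤ) • t)) : UnitAddCircle)) (Q r : ℤ) := h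
    obtain ⟨c, hc⟩ : Q r ∣ M := Finset.dvd_prod_of_mem Q hr
    have h1 := hper.int_mul (c * n) (π u)
    have h2 : ((v (r + (M * n + π u) • ((N₀ : ℤ) • t)) : ℝ) : UnitAddCircle) =
        v (r + π u • ((N₀ : ℤ) • t)) := by
      rw [← h1, hc]
      congr 4
      push_cast
      ring
    rw [← sub_eq_zero, ← AddCircle.coe_sub, AddCircle.coe_eq_zero_iff] at h2
    obtain ⟨m, hm⟩ := h2
    refine ⟨m, ?_⟩
    simp only [zsmul_eq_mul, mul_one, mul_zero, zero_add] at hm ⊢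
    linarith
  · right
    exact h M (π u) (by exact_mod_cast Nat.pos_iff_ne_zero.1 hM0)

/-- There is a time at which no sequence of `v` along `t` has an exceptional value. -/
theorem exists_generic {N : ℕ} (hN : 0 < N) (ht : π t = 1) (hv : ∀ x, v x ∈ Set.Icc (0 : ℝ) 1)
    (hs : ∀ x u, v (x + (N : ℤ) • u) = v (x + π u • ((N : ℤ) • t)))
    (hd : ∀ y, IntSeq (fun n => v (y + n • ((N : ℤ) • t))) ∨
      (mean (fun n => v (y + n • ((N : ℤ) • t))) = 1 / 2 ∧
        mean (fun n => if v (y + n • ((N : ℤ) • t)) = 1 / 2 then (1 : ℝ) else 0) = 0)) :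
    ∃ n₀ : ℤ, ∀ y, 0 ≤ π y → π y < N →
      (¬ IntSeq (fun n => v (y + n • ((N : ℤ) • t))) → v (y + n₀ • ((N : ℤ) • t)) ≠ 1 / 2) ∧
      (mean (fun n => v (y + n • ((N : ℤ) • t))) = 0 → v (y + n₀ • ((N : ℤ) • t)) ≠ 1) := by
  classical
  obtain ⟨R, hR⟩ := exists_classes hN
  set a : (Fin 3 → ℤ) → ℤ → ℝ := fun y n => v (y + n • ((N : ℤ) • t)) with ha
  set ν : (Fin 3 → ℤ) → (Fin 3 → ℤ) := fun r => r - (π r / N) • ((N : ℤ) • t) with hν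
  have hNpos : (0 : ℤ) < N := by exact_mod_cast hN
  have hπν : ∀ r, π (ν r) = π r % N := by
    intro r
    simp only [hν, map_sub, map_zsmul, ht, smul_eq_mul, mul_one]
    have := Int.emod_add_mul_ediv (π r) N
    linarith
  have hrep : ∀ y, 0 ≤ π y → π y < N → ∃ r ∈ R, a y = a (ν r) := by
    intro y h0 h1
    obtain ⟨r, hr, u, rfl⟩ := hR y
    refine ⟨r, hr, ?_⟩
    have hu : π u + π r / N = 0 := by
      have h2 := Int.emod_add_mul_ediv (π r) N
      have h3 := Int.emod_nonneg (π r) hNpos.ne'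
      have h4 := Int.emod_lt_of_pos (π r) hNpos
      simp only [map_add, map_zsmul, smul_eq_mul] at h0 h1
      have h5 : (N : ℤ) * (π u + π r / N) < N * 1 := by linarith
      have h6 : (N : ℤ) * (-1) < N * (π u + π r / N) := by linarith
      have h7 := lt_of_mul_lt_mul_left h5 hNpos.le
      have h8 := lt_of_mul_lt_mul_left h6 hNpos.le
      omega
    funext n
    simp only [ha, hν]
    rw [show r + (N : ℤ) • u + n • ((N : ℤ) • t) = r + n • ((N : ℤ) • t) + (N : ℤ) • u by abel, hs,
      eq_neg_of_add_eq_zero_left hu, neg_smul]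
    congr 1
    abel
  have hab : ∀ y, Bdd (a y) := fun y => Bdd.of_mem_Icc fun n => hv _
  set β : (Fin 3 → ℤ) → ℤ → ℝ := fun y n => if ¬ IntSeq (a y) ∧ a y n = 1 / 2 then 1 else 0 with hβ
  set γ : (Fin 3 → ℤ) → ℤ → ℝ := fun y n => if mean (a y) = 0 ∧ a y n = 1 then 1 else 0 with hγ
  have hb1 : ∀ y, Bdd (β y) := fun y => Bdd.of_mem_Icc (a := 0) (b := 1) fun n => by
    simp only [hβ]; split_ifs <;> simp
  have hb2 : ∀ y, Bdd (γ y) := fun y => Bdd.of_mem_Icc (a := 0) (b := 1) fun n => by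
    simp only [hγ]; split_ifs <;> simp
  have hβ0 : ∀ y, mean (β y) = 0 := by
    intro y
    by_cases hy : IntSeq (a y)
    · simp [hβ, hy, mean_const]
    · have := ((hd y).resolve_left hy).2
      simp only [hβ, hy, not_false_eq_true, true_and]
      exact this
  have hγ0 : ∀ y, mean (γ y) = 0 := by
    intro y
    by_cases hy : mean (a y) = 0
    · refine le_antisymm ?_ (mean_nonneg (hb2 y) fun n => by simp only [hγ]; split_ifs <;> simp)
      rw [← hy]
      refine mean_mono (hb2 y) (hab y) fun n => ?_
      simp only [hγ]
      split_ifs with h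
      · exact h.2.ge
      · exact (hv _).1
    · simp [hγ, hy, mean_const]
  by_contra hcon
  push Not at hcon
  have hbad : ∀ n, (1 : ℝ) ≤ ∑ r ∈ R, (β (ν r) n + γ (ν r) n) := by
    intro n
    obtain ⟨y, h0, h1, h2⟩ := hcon n
    obtain ⟨r, hr, hay⟩ := hrep y h0 h1
    have hnn : ∀ z, 0 ≤ β z n ∧ 0 ≤ γ z n := by
      intro z
      simp only [hβ, hγ]
      constructor <;> split_ifs <;> simp
    refine le_trans ?_ (Finset.single_le_sum (f := fun r => β (ν r) n + γ (ν r) n)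
      (fun r _ => add_nonneg (hnn _).1 (hnn _).2) hr)
    by_cases h3 : ¬ IntSeq (a y) ∧ a y n = 1 / 2
    · have : β (ν r) n = 1 := by simp only [hβ]; rw [← hay, if_pos h3]
      linarith [(hnn (ν r)).2]
    · have h4 := h2 fun h5 h6 => h3 ⟨h5, h6⟩
      have : γ (ν r) n = 1 := by simp only [hγ]; rw [← hay, if_pos h4]
      linarith [(hnn (ν r)).1]
  have h1 := mean_mono (Bdd.const 1) (Bdd.sum R fun r _ => (hb1 (ν r)).add (hb2 (ν r))) hbad
  rw [mean_const, mean_sum R fun r _ => (hb1 (ν r)).add (hb2 (ν r)),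
    Finset.sum_eq_zero fun r _ => by rw [mean_add (hb1 _) (hb2 _), hβ0, hγ0, add_zero]] at h1
  linarith

/-- `v` is constant along the progression `y + ℤ τ`. -/
def Fixed (v : (Fin 3 → ℤ) → ℝ) (τ y : Fin 3 → ℤ) : Prop := ∀ n : ℤ, v (y + n • τ) = v y

/-- The non-constant part of a fractional tiling `v` can be rounded to a fully periodic `0`-`1`
function `κ`. Any tiling `ψ` vanishing where `v` does remains a tiling when it is replaced by `κ` at
the places where `v` is not constant along `N • t`. -/
theorem exists_rounded {F : Finset (Fin 3 → ℤ)} {N : ℕ} (hN : 0 < N) (ht : π t = 1)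
    (hv : ∀ x, v x ∈ Set.Icc (0 : ℝ) 1)
    (hs : ∀ x u, v (x + (N : ℤ) • u) = v (x + π u • ((N : ℤ) • t)))
    (hd : ∀ y, IntSeq (fun n => v (y + n • ((N : ℤ) • t))) ∨
      (mean (fun n => v (y + n • ((N : ℤ) • t))) = 1 / 2 ∧
        mean (fun n => if v (y + n • ((N : ℤ) • t)) = 1 / 2 then (1 : ℝ) else 0) = 0))
    (htile : ∀ x, ∑ f ∈ F, v (x - f) = 1)
    (hS : ∀ (c : ℤ) (x u : Fin 3 → ℤ), ∑ f ∈ F with π f = c, v (x + (N : ℤ) • u - f) =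
      ∑ f ∈ F with π f = c, v (x - f)) :
    ∃ κ : (Fin 3 → ℤ) → ℝ, ZeroOne κ ∧ (∀ u, (N : ℤ) • u ∈ periods κ) ∧
      ∀ ψ ψ' : (Fin 3 → ℤ) → ℝ, (∀ x, ∑ f ∈ F, ψ (x - f) = 1) → (∀ y, v y = 0 → ψ y = 0) →
        (∀ y, Fixed v ((N : ℤ) • t) y → ψ' y = ψ y) →
        (∀ y, ¬ Fixed v ((N : ℤ) • t) y → ψ' y = κ y) → ∀ x, ∑ f ∈ F, ψ' (x - f) = 1 := by
  classical
  obtain ⟨n₀, hn₀⟩ := exists_generic hN ht hv hs hd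
  have hNpos : (0 : ℤ) < N := by exact_mod_cast hN
  set τ := (N : ℤ) • t with hτ
  -- each place is sampled at the translate by a multiple of `τ` which has a given height mod `N`
  set κ : (Fin 3 → ℤ) → ℝ := fun y => if 1 / 2 < v (y + (n₀ - π y / N) • τ) then 1 else 0 with hκ
  refine ⟨κ, fun y => ?_, fun u y => ?_, ?_⟩
  · simp only [hκ]; split_ifs <;> simp
  · simp only [hκ]
    have : v (y + (N : ℤ) • u + (n₀ - π (y + (N : ℤ) • u) / N) • τ) = v (y + (n₀ - π y / N) • τ) := by
      rw [add_right_comm, hs, map_add, map_zsmul, smul_eq_mul, Int.add_mul_ediv_left _ _ hNpos.ne',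
        add_assoc, ← add_smul]
      congr 3
      ring
    rw [this]
  · intro ψ ψ' hψ hψ0 hfix hnfix x
    by_cases hall : ∀ f ∈ F, Fixed v τ (x - f)
    · rw [← hψ x]
      exact Finset.sum_congr rfl fun f hf => hfix _ (hall f hf)
    push Not at hall
    obtain ⟨f₀, hf₀, hnf⟩ := hall
    set c := π f₀ with hc
    set s := F.filter fun f => π f = c with hs'
    set A : (Fin 3 → ℤ) → ℤ → ℝ := fun f n => v (x - f + n • τ) with hA
    set m := (π x - c) / N with hm
    have hAb : ∀ f, Bdd (A f) := fun f => Bdd.of_mem_Icc fun n => hv _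
    have hconst : ∀ n, ∑ f ∈ s, A f n = ∑ f ∈ s, v (x - f) := by
      intro n
      rw [← hS c x (n • t)]
      refine Finset.sum_congr rfl fun f _ => ?_
      simp only [hA]
      rw [hτ, smul_comm n (N : ℤ) t]
      congr 1
      abel
    have hone : ∀ n, ∑ f ∈ F, A f n = 1 := by
      intro n
      rw [← htile (x + n • τ)]
      refine Finset.sum_congr rfl fun f _ => ?_
      simp only [hA]
      congr 1
      abel
    have hle : ∑ f ∈ s, v (x - f) ≤ 1 := by
      rw [← htile x]
      exact Finset.sum_le_sum_of_subset_of_nonneg (Finset.filter_subset _ _) fun f _ _ => (hv _).1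
    have hπs : ∀ f ∈ s, π (x - f) = π x - c := fun f hf => by
      rw [map_sub, (Finset.mem_filter.1 hf).2]
    -- genericity of the sampling time, at the representative of height in `[0, N)`
    have hgen : ∀ f ∈ s, (¬ IntSeq (A f) → A f (n₀ - m) ≠ 1 / 2) ∧
        (mean (A f) = 0 → A f (n₀ - m) ≠ 1) := by
      intro f hf
      have e : π (x - f + (-m) • τ) = (π x - c) % N := by
        have := Int.emod_add_mul_ediv (π x - c) N
        rw [map_add, hπs f hf, hτ, map_zsmul, map_zsmul, ht]
        simp only [smul_eq_mul, mul_one]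
        linarith
      have h1 := hn₀ (x - f + (-m) • τ) (by rw [e]; exact Int.emod_nonneg _ hNpos.ne')
        (by rw [e]; exact Int.emod_lt_of_pos _ hNpos)
      have e2 : ∀ n : ℤ, v (x - f + (-m) • τ + n • τ) = A f (n - m) := by
        intro n
        simp only [hA]
        rw [add_assoc, ← add_smul]
        congr 3
        ring
      simp only [e2] at h1
      refine ⟨fun h2 => h1.1 fun h3 => h2 fun n => ?_, fun h2 => h1.2 ?_⟩
      · obtain ⟨i, hi⟩ := h3 (n + m)
        obtain ⟨j, hj⟩ := h3 m
        simp only [add_sub_cancel_right, sub_self] at hi hj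
        exact ⟨i - j, by rw [hi, hj]; push_cast; ring⟩
      · rw [← h2]
        exact mean_shift (hAb f) (-m)
    obtain ⟨h1, h2, h3⟩ := rounding s A (fun f n => hv _) hconst hle
      (fun f _ => (hd (x - f)).imp id And.left) (fun f hf => (hgen f hf).1)
      (fun f hf => (hgen f hf).2) (by
        refine ⟨f₀, Finset.mem_filter.2 ⟨hf₀, rfl⟩, ?_⟩
        unfold Fixed at hnf
        push Not at hnf
        obtain ⟨n, hn⟩ := hnf
        exact ⟨n, by simpa [hA] using hn⟩)
    have hout : ∀ f ∈ F, f ∉ s → ∀ n, A f n = 0 := by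
      intro f hf hfs n
      have h4 : ∑ f ∈ F \ s, A f n = 0 := by
        have h5 := Finset.sum_sdiff (f := fun f => A f n) (Finset.filter_subset (fun f => π f = c) F)
        rw [hone n] at h5
        have h6 := hconst n
        rw [h1] at h6
        rw [← hs', h6] at h5
        linarith
      exact (Finset.sum_eq_zero_iff_of_nonneg fun f _ => (hv _).1).1 h4 f (Finset.mem_sdiff.2 ⟨hf, hfs⟩)
    have hA0 : ∀ f, A f 0 = v (x - f) := fun f => by simp [hA]
    rw [← h3]
    rw [← Finset.sum_subset (Finset.filter_subset (fun f => π f = c) F)]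
    · refine Finset.sum_congr rfl fun f hf => ?_
      by_cases hfx : Fixed v τ (x - f)
      · have hcst : ∀ n, A f n = A f 0 := fun n => by rw [hA0]; exact hfx n
        have h4 := h2 f hf hcst
        rw [hfix _ hfx, hψ0 _ (by rw [← hA0, h4]), hcst, h4, if_neg (by norm_num)]
      · rw [hnfix _ hfx]
        simp only [hκ, hA]
        rw [hπs f hf]
    · intro f hf hfs
      have h4 := hout f hf hfs
      have hfx : Fixed v τ (x - f) := fun n => by
        rw [← hA0, h4 0]; exact h4 n
      rw [hfix _ hfx]
      exact hψ0 _ (by rw [← hA0, h4])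

end

/-! ### Elimination of planes -/

theorem exists_mem_plane {K : AddSubgroup (Fin 3 → ℤ)} (hK : IsPlane K) {π : (Fin 3 → ℤ) →+ ℤ}
    {t : Fin 3 → ℤ} (ht : π t = 1) (hne : K ≠ π.ker) : ∃ w ∈ K, π w ≠ 0 := by
  obtain ⟨π', t', ht', rfl⟩ := hK
  by_contra hcon
  push Not at hcon
  have h1 : ∀ x, π x = π' x * π t' := by
    intro x
    have := hcon (x - π' x • t') (by
      rw [AddMonoidHom.mem_ker, map_sub, map_zsmul, ht', smul_eq_mul, mul_one, sub_self])
    rw [map_sub, map_zsmul, smul_eq_mul] at this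
    linarith
  have h2 : π t' ≠ 0 := by
    intro h0
    have := h1 t
    rw [ht, h0, mul_zero] at this
    exact one_ne_zero this
  apply hne
  ext x
  rw [AddMonoidHom.mem_ker, AddMonoidHom.mem_ker, h1 x, mul_eq_zero_iff_right h2]

/-- The part of a tiling identity carried by one level of `π` is `N • ℤ³`-invariant: average the
identities for the dilates `1 + q' k`, recentred at a point of the level. -/
theorem level_sum_invariant {F : Finset (Fin 3 → ℤ)} {v : (Fin 3 → ℤ) → ℝ} (hv : Bdd v)
    {π : (Fin 3 → ℤ) →+ ℤ} {q : ℕ} (hq : ∀ u, π u = 0 → q • u ∈ periods v) {q' N : ℕ} (hqq : q ∣ q')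
    (htile : ∀ (m : ℕ) x, ∑ f ∈ F, v (x - (1 + q' * m) • f) = 1)
    (hN : ∀ f ∈ F, ∀ f' ∈ F, π (f - f') ≠ 0 → (q : ℤ) * (q' * π (f - f')) ∣ N)
    (c : ℤ) (x u : Fin 3 → ℤ) : ∑ f ∈ F with π f = c, v (x + (N : ℤ) • u - f) =
      ∑ f ∈ F with π f = c, v (x - f) := by
  classical
  by_cases hex : ∃ f₀ ∈ F, π f₀ = c
  swap
  · rw [Finset.filter_false_of_mem fun f hf h => hex ⟨f, hf, h⟩]
    simp
  obtain ⟨f₀, hf₀, hc⟩ := hex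
  set M : (Fin 3 → ℤ) → (Fin 3 → ℤ) → ℝ := fun f x =>
    mean fun k : ℤ => v (x - f - k • (q' • (f - f₀))) with hM
  have hsum : ∀ x, ∑ f ∈ F, M f x = 1 := by
    intro x
    simp only [hM]
    rw [← mean_sum F fun f _ => hv.comp _, ← mean_const (1 : ℝ)]
    refine mean_congr fun k => ?_
    rw [← htile k (x + (q' * k) • f₀)]
    refine Finset.sum_congr rfl fun f _ => ?_
    congr 1
    rw [add_smul, one_smul, natCast_zsmul, ← mul_nsmul, smul_sub]
    abel
  have hlevel : ∀ x, ∀ f ∈ F, π f = c → M f x = v (x - f) := by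
    intro x f _ hfc
    simp only [hM]
    have : ∀ k : ℤ, v (x - f - k • (q' • (f - f₀))) = v (x - f) := by
      intro k
      obtain ⟨d, rfl⟩ := hqq
      have h1 := hq (d • (f - f₀)) (by rw [map_nsmul, map_sub, hfc, hc]; simp)
      have h2 := neg_mem (zsmul_mem h1 k) (x - f)
      rw [← h2, mul_nsmul', sub_eq_add_neg (x - f)]
    simp only [this, mean_const]
  have hinv : ∀ f ∈ F, π f ≠ c → (N : ℤ) • u ∈ periods (M f) := by
    intro f hf hfc
    refine smul_mem_periods (π := π) (q := q) (h := q' • (f - f₀)) ?_ ?_ ?_ u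
    · intro u hu y
      simp only [hM]
      congr 1
      funext k
      rw [show y + q • u - f - k • (q' • (f - f₀)) = y - f - k • (q' • (f - f₀)) + q • u by abel]
      exact hq u hu _
    · intro y
      have := mean_shift (hv.comp fun k : ℤ => y - f - k • (q' • (f - f₀))) (-1)
      simp only [hM]
      rw [← this]
      congr 1
      funext k
      congr 1
      rw [add_smul, neg_smul, one_smul]
      abel
    · rw [map_nsmul, nsmul_eq_mul]
      refine hN f hf f₀ hf₀ ?_
      rw [map_sub, hc]
      exact sub_ne_zero.2 hfc
  have key : ∀ x, ∑ f ∈ F with π f = c, v (x - f) = 1 - ∑ f ∈ F with π f ≠ c, M f x := by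
    intro x
    rw [← hsum x, ← Finset.sum_filter_add_sum_filter_not F (fun f => π f = c), add_sub_cancel_right]
    refine Finset.sum_congr rfl fun f hf => ?_
    rw [Finset.mem_filter] at hf
    exact (hlevel x f hf.1 hf.2).symm
  rw [key, key]
  congr 1
  refine Finset.sum_congr rfl fun f hf => ?_
  rw [Finset.mem_filter] at hf
  exact hinv f hf.1 hf.2 x

theorem gmean_tile_apply {F : Finset (Fin 3 → ℤ)} {r : ℕ} {g : (Fin 3 → ℤ) → ℝ} (hb : Bdd g)
    (h : Tile F r g) (L : List (Fin 3 → ℤ)) : Tile F r (gmean L g) := by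
  intro x
  have h1 := gmean_sum L F (φ := fun f y => g (y + -(r • f))) fun f _ => hb.comp _
  simp only [gmean_translate] at h1
  have h2 : (fun x => ∑ f ∈ F, g (x + -(r • f))) = fun _ => (1 : ℝ) := by
    funext y
    rw [← h y]
    simp only [sub_eq_add_neg]
  rw [h2, gmean_const] at h1
  have h3 := congrFun h1 x
  simp only [sub_eq_add_neg]
  exact h3.symm

/-- Elimination of the plane `l = ker π` from the decomposition of a tiling. The mean `v` of `g` over
`q • l` is a fractional tiling, polynomial modulo `1` transversally to `l`. Where `v` is constant along
the transversal, the summand `k l` is fully periodic there and may be absorbed in the summand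
attached to the line; elsewhere `g` is replaced by a rounding of `v`. -/
theorem eliminate {F : Finset (Fin 3 → ℤ)} (hF0 : F.Nonempty) {b : Fin 3 → ℤ} {q : ℕ} (hq0 : 0 < q)
    {𝒦 : Finset (AddSubgroup (Fin 3 → ℤ))} (h𝒦 : ∀ K ∈ 𝒦, IsPlane K ∧ b ∉ K)
    {g : (Fin 3 → ℤ) → ℝ} (hg : ZeroOne g) (hT : Tile F 1 g) (hdec : Decomp b q 𝒦 g)
    {l : AddSubgroup (Fin 3 → ℤ)} (hl : l ∈ 𝒦) [DecidableEq (AddSubgroup (Fin 3 → ℤ))] :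
    ∃ (q' : ℕ) (g' : (Fin 3 → ℤ) → ℝ), 0 < q' ∧ ZeroOne g' ∧ Tile F 1 g' ∧
      Decomp b q' (𝒦.erase l) g' := by
  classical
  obtain ⟨h, k, hhb, hhp, hk, hsum⟩ := hdec
  obtain ⟨⟨π, t, ht, hlπ⟩, hbl⟩ := h𝒦 l hl
  have hw : ∀ K ∈ 𝒦.erase l, ∃ w ∈ K, π w ≠ 0 := fun K hK =>
    exists_mem_plane (h𝒦 K (Finset.mem_of_mem_erase hK)).1 ht
      (hlπ ▸ Finset.ne_of_mem_erase hK)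
  choose! w hwK hwπ using hw
  -- the remaining summands, `none` standing for the one attached to the line
  set s := Finset.insertNone (𝒦.erase l) with hs
  set χ : Option (AddSubgroup (Fin 3 → ℤ)) → (Fin 3 → ℤ) → ℝ := fun i => i.elim h k with hχ
  set d : Option (AddSubgroup (Fin 3 → ℤ)) → (Fin 3 → ℤ) := fun i => i.elim b w with hd
  have hdπ : ∀ i ∈ s, π (d i) ≠ 0 := by
    rintro (_ | K) hi
    · intro h0
      rw [hlπ] at hbl
      exact hbl h0
    · exact hwπ K (by simpa [hs] using hi)
  have hχb : ∀ i ∈ s, Bdd (χ i) := by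
    rintro (_ | K) hi
    · exact hhb
    · exact (hk K (Finset.mem_of_mem_erase (by simpa only [hs, Finset.some_mem_insertNone] using hi))).1
  have hχd : ∀ i ∈ s, q • d i ∈ periods (χ i) := by
    rintro (_ | K) hi
    · exact hhp
    · have hi' : K ∈ 𝒦.erase l := by simpa only [hs, Finset.some_mem_insertNone] using hi
      exact (hk K (Finset.mem_of_mem_erase hi')).2 _ (hwK K hi')
  have hkl := hk l hl
  have hklp : ∀ u, π u = 0 → q • u ∈ periods (k l) := fun u hu => hkl.2 u (by rw [hlπ]; exact hu)
  have hgsum : ∀ x, g x = k l x + ∑ i ∈ s, χ i x := by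
    intro x
    rw [hsum x, hs, Finset.sum_insertNone, ← Finset.add_sum_erase 𝒦 _ hl]
    simp only [hχ, Option.elim]
    ring
  obtain ⟨L, hL⟩ := exists_list (π.ker.map (nsmulAddMonoidHom q))
  have hLmem : ∀ u, π u = 0 → q • u ∈ AddSubgroup.closure {w | w ∈ L} := by
    intro u hu
    rw [hL]
    exact ⟨u, hu, rfl⟩
  have hLk : AddSubgroup.closure {w | w ∈ L} ≤ periods (k l) := by
    rw [hL]
    rintro _ ⟨u, hu, rfl⟩
    exact hklp u hu
  set v := gmean L g with hv
  have hvI : ∀ x, v x ∈ Set.Icc (0 : ℝ) 1 := gmean_mem_Icc L hg.mem_Icc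
  have hvq : ∀ u, π u = 0 → q • u ∈ periods v := fun u hu =>
    closure_le_periods_gmean L hg.bdd (hLmem u hu)
  have hvsum : ∀ x, v x = k l x + ∑ i ∈ s, gmean L (χ i) x := by
    intro x
    rw [hv, funext hgsum, gmean_add L hkl.1 (Bdd.sum s hχb), gmean_sum L s hχb, gmean_eq_self L hLk]
  -- the modulus
  set q₁ := q * F.card.factorial with hq₁
  set B : ℕ := ∑ i ∈ s, (π (d i)).natAbs + ∑ x ∈ F ×ˢ F, (π (x.1 - x.2)).natAbs with hB
  have hBdvd : ∀ z : ℤ, z ≠ 0 → z.natAbs ≤ B → z ∣ (B.factorial : ℤ) := fun z hz hzB => by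
    rw [← Int.natAbs_dvd]
    exact Int.natCast_dvd_natCast.2 (Nat.dvd_factorial (Int.natAbs_pos.2 hz) hzB)
  set N₀ := q * q₁ * B.factorial with hN₀
  have hN₀pos : 0 < N₀ := by
    have := Nat.factorial_pos F.card
    have := Nat.factorial_pos B
    positivity
  have hqN₀ : q ∣ N₀ := ⟨q₁ * B.factorial, by rw [hN₀]; ring⟩
  have hdvd1 : ∀ i ∈ s, (q : ℤ) * (q * π (d i)) ∣ N₀ := by
    intro i hi
    have h1 := hBdvd _ (hdπ i hi) ((Finset.single_le_sum (f := fun i => (π (d i)).natAbs)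
      (fun _ _ => Nat.zero_le _) hi).trans (Nat.le_add_right _ _))
    rw [hN₀, hq₁]
    push_cast
    rw [mul_assoc, mul_assoc]
    exact mul_dvd_mul_left _ (mul_dvd_mul_left _ (h1.mul_left _))
  have hdvd2 : ∀ f ∈ F, ∀ f' ∈ F, π (f - f') ≠ 0 → (q : ℤ) * (q₁ * π (f - f')) ∣ N₀ := by
    intro f hf f' hf' hne
    have h1 := hBdvd _ hne ((Finset.single_le_sum (f := fun x : (Fin 3 → ℤ) × (Fin 3 → ℤ) =>
      (π (x.1 - x.2)).natAbs) (fun _ _ => Nat.zero_le _)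
      (Finset.mk_mem_product hf hf')).trans (Nat.le_add_left _ _))
    rw [hN₀]
    push_cast
    rw [mul_assoc]
    exact mul_dvd_mul_left _ (mul_dvd_mul_left _ h1)
  have hpoly : ∀ y, PolySeq s.card
      (fun n : ℤ => (v (y + n • ((N₀ : ℤ) • t)) : UnitAddCircle)) := by
    have hc : ∀ i ∈ s, ∃ c : ℤ, (N₀ : ℤ) = q * (c * π (d i)) := by
      intro i hi
      obtain ⟨c, hc⟩ := hdvd1 i hi
      exact ⟨q * c, by rw [hc]; ring⟩
    choose! c hc using hc
    refine PolySeq.of_sum s (fun i => (c i) • (q • d i))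
      (fun i x => ((gmean L (χ i) x - χ i x : ℝ) : UnitAddCircle)) ?_
      (fun x => (v x : UnitAddCircle)) ?_ ?_
    · intro i hi x
      have h1 := zsmul_mem (hχd i hi) (c i)
      simp only
      rw [h1, periods_le_gmean L _ h1]
    · intro x
      have h1 : (v x : ℝ) = g x + ∑ i ∈ s, (gmean L (χ i) x - χ i x) := by
        rw [Finset.sum_sub_distrib, hgsum x, hvsum x]
        ring
      have h2 : ((g x : ℝ) : UnitAddCircle) = 0 := by
        rcases hg x with h0 | h0 <;> rw [h0]
        · simp
        · exact AddCircle.coe_period 1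
      have h3 : ∀ f : Option (AddSubgroup (Fin 3 → ℤ)) → ℝ,
          ((∑ i ∈ s, f i : ℝ) : UnitAddCircle) = ∑ i ∈ s, (f i : UnitAddCircle) := fun f =>
        map_sum (QuotientAddGroup.mk' (AddSubgroup.zmultiples (1 : ℝ))) f s
      rw [h1, AddCircle.coe_add, h2, zero_add, h3]
    · intro i hi x
      have h1 := hvq (c i • (π (d i) • t - d i)) (by
        rw [map_zsmul, map_sub, map_zsmul, ht]; simp) x
      simp only
      rw [← h1, hc i hi]
      congr 3
      rw [← natCast_zsmul, ← natCast_zsmul]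
      simp only [smul_sub, ← mul_smul]
      rw [mul_comm (c i) (q : ℤ)]
  obtain ⟨N, hN, ⟨N₁, hNN⟩, hdich⟩ := exists_uniform ht hvq hvI hN₀pos hqN₀ hpoly
  have hN₀N : (N₀ : ℤ) ∣ N := by rw [hNN]; push_cast; exact Dvd.intro _ rfl
  have hqN : q ∣ N := hqN₀.trans ⟨N₁, hNN⟩
  have hshift := shift_eq ht hvq hqN
  have hρ : ∀ i ∈ s, ∀ u, (N : ℤ) • u ∈ periods (gmean L (χ i)) := by
    intro i hi u
    refine smul_mem_periods (π := π) (q := q) (h := q • d i) (fun u hu => ?_)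
      (periods_le_gmean L _ (hχd i hi)) ?_ u
    · exact closure_le_periods_gmean L (hχb i hi) (hLmem u hu)
    · rw [map_nsmul, nsmul_eq_mul]
      exact (hdvd1 i hi).trans hN₀N
  have hvT : ∀ m, Tile F (1 + q₁ * m) v := fun m => gmean_tile_apply hg.bdd
    (hT.dilate_one_add hF0 hg ⟨q * m, by rw [hq₁]; ring⟩) L
  obtain ⟨κ, hκ01, hκp, hκ⟩ := exists_rounded (F := F) hN ht hvI hshift hdich
    (fun x => by simpa [Tile] using hvT 0 x)
    (level_sum_invariant (Bdd.of_mem_Icc hvI) hvq (Dvd.intro _ rfl) hvT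
      fun f hf f' hf' hne => (hdvd2 f hf f' hf' hne).trans hN₀N)
  -- a limit of translates of the tiling in which the null places of `v` are empty
  obtain ⟨𝒱, h𝒱, h𝒱0⟩ := exists_ultrafilter (ι := {y // v y = 0}) L (fun y x => g (x + y))
    (fun y x => (hg _).imp id fun h => h.ge) (fun y => hg.bdd.comp _) (fun y => by
      rw [gmean_translate]
      show gmean L g (0 + (y : Fin 3 → ℤ)) = 0
      rw [zero_add]
      exact y.2)
  set G := ulim 𝒱 g with hG
  have hG01 : ZeroOne G := hg.ulim 𝒱
  have hGT : Tile F 1 G := hT.ulim hg.bdd 𝒱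
  have hG0 : ∀ y, v y = 0 → G y = 0 := fun y hy =>
    ulim_eq_of_eventually 𝒱 ((h𝒱0 ⟨y, hy⟩).mono fun b hb => by rw [add_comm]; exact hb)
  have hGsum : ∀ x, G x = k l x + ∑ i ∈ s, ulim 𝒱 (χ i) x := by
    intro x
    rw [hG, funext hgsum, ulim_add 𝒱 hkl.1 (Bdd.sum s hχb), ulim_sum 𝒱 s hχb,
      ulim_eq_self 𝒱 (h𝒱.mono fun b hb => hLk hb)]
  set τ := (N : ℤ) • t with hτ
  have hfix : ∀ y u, Fixed v τ y → Fixed v τ (y + (N : ℤ) • u) := by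
    intro y u hy n
    rw [hshift y u, add_right_comm, hshift, add_assoc, ← add_smul, hy, hy]
  have hfix' : ∀ y u, Fixed v τ (y + (N : ℤ) • u) ↔ Fixed v τ y := by
    intro y u
    refine ⟨fun h => ?_, hfix y u⟩
    have := hfix _ (-u) h
    rwa [smul_neg, add_neg_cancel_right] at this
  set θ : (Fin 3 → ℤ) → ℝ := fun y => if Fixed v τ y then 1 else 0 with hθ
  have hθp : ∀ u, (N : ℤ) • u ∈ periods θ := by
    intro u y
    simp only [hθ, hfix']
  have hθb : Bdd θ := Bdd.of_mem_Icc (a := 0) (b := 1) fun y => by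
    simp only [hθ]; split_ifs <;> simp
  have hθk : ∀ u, (N : ℤ) • u ∈ periods (fun y => θ y * k l y) := by
    intro u y
    simp only
    rw [hθp u y]
    by_cases hy : Fixed v τ y
    · have h1 := hvsum (y + (N : ℤ) • u)
      rw [Finset.sum_congr rfl fun i hi => hρ i hi u y, hshift, hy, hvsum y] at h1
      rw [add_right_cancel h1]
    · simp [hθ, hy]
  refine ⟨N * q, fun y => if Fixed v τ y then G y else κ y, Nat.mul_pos hN hq0, ?_, ?_,
    fun y => θ y * ulim 𝒱 h y + θ y * k l y + (1 - θ y) * κ y,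
    fun K y => θ y * ulim 𝒱 (k K) y, ?_, ?_, ?_, ?_⟩
  · intro y
    simp only
    split_ifs
    · exact hG01 y
    · exact hκ01 y
  · intro x
    simp only [one_smul]
    exact hκ G (fun y => if Fixed v τ y then G y else κ y) (fun x => by simpa [Tile] using hGT x) hG0
      (fun y hy => if_pos hy) (fun y hy => if_neg hy) x
  · exact ((hθb.mul (bdd_ulim 𝒱 hhb)).add (hθb.mul hkl.1)).add (((Bdd.const 1).sub hθb).mul hκ01.bdd)
  · intro y
    have e : (N * q) • b = (N : ℤ) • (q • b) := by rw [natCast_zsmul, mul_nsmul']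
    have h1 := hθp (q • b) y
    have h2 := hθk (q • b) y
    have h3 := hκp (q • b) y
    have h4 := zsmul_mem (periods_le_ulim 𝒱 h hhp) N y
    simp only at h2 ⊢
    rw [e, h2, h3, h4, h1]
  · intro K hK
    have hK' := hk K (Finset.mem_of_mem_erase hK)
    refine ⟨hθb.mul (bdd_ulim 𝒱 hK'.1), fun u hu y => ?_⟩
    have e : (N * q) • u = (N : ℤ) • (q • u) := by rw [natCast_zsmul, mul_nsmul']
    have h1 := hθp (q • u) y
    have h4 := zsmul_mem (periods_le_ulim 𝒱 (k K) (hK'.2 u hu)) N y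
    simp only
    rw [e, h4, h1]
  · intro y
    by_cases hy : Fixed v τ y
    · simp only [hθ, if_pos hy]
      rw [hGsum, hs, Finset.sum_insertNone]
      simp only [hχ, Option.elim]
      ring_nf
    · simp [hθ, hy]

/-- Eliminating the planes one by one leaves a single summand, periodic along the line. -/
theorem exists_periodic_of_decomp {F : Finset (Fin 3 → ℤ)} (hF0 : F.Nonempty) {b : Fin 3 → ℤ}
    (hb : b ≠ 0) (n : ℕ) {q : ℕ} (hq0 : 0 < q)
    {𝒦 : Finset (AddSubgroup (Fin 3 → ℤ))} (hn : 𝒦.card = n) (h𝒦 : ∀ K ∈ 𝒦, IsPlane K ∧ b ∉ K)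
    {g : (Fin 3 → ℤ) → ℝ} (hg : ZeroOne g) (hT : Tile F 1 g) (hdec : Decomp b q 𝒦 g) :
    ∃ g' : (Fin 3 → ℤ) → ℝ, ZeroOne g' ∧ Tile F 1 g' ∧ ∃ w ≠ 0, w ∈ periods g' := by
  classical
  induction n generalizing q 𝒦 g with
  | zero =>
    obtain rfl := Finset.card_eq_zero.1 hn
    obtain ⟨h, k, -, hp, -, hsum⟩ := hdec
    refine ⟨g, hg, hT, q • b, smul_ne_zero hq0.ne' hb, ?_⟩
    have : g = h := funext fun x => by simpa using hsum x
    rwa [this]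
  | succ n ih =>
    obtain ⟨l, hl⟩ := Finset.card_pos.1 (by rw [hn]; exact Nat.succ_pos n)
    obtain ⟨q', g', h1, h2, h3, h4⟩ := eliminate hF0 hq0 h𝒦 hg hT hdec hl
    exact ih h1 (by rw [Finset.card_erase_of_mem hl, hn]; rfl)
      (fun K hK => h𝒦 K (Finset.mem_of_mem_erase hK)) h2 h3 h4

/-- A tiling by a planar cluster is made periodic by repeating one of its layers. -/
theorem exists_periodic_of_planar {F : Finset (Fin 3 → ℤ)} (hF : Planar F) (hF0 : F.Nonempty)
    {g : (Fin 3 → ℤ) → ℝ} (hg : ZeroOne g) (hT : Tile F 1 g) :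
    ∃ g' : (Fin 3 → ℤ) → ℝ, ZeroOne g' ∧ Tile F 1 g' ∧ ∃ w ≠ 0, w ∈ periods g' := by
  obtain ⟨π, t, ht, hc⟩ := hF
  obtain ⟨f₀, hf₀⟩ := hF0
  refine ⟨fun x => g (x - π x • t), fun x => hg _, fun x => ?_, t, ?_, fun x => ?_⟩
  · rw [← hT (x - (π x - π f₀) • t)]
    refine Finset.sum_congr rfl fun f hf => ?_
    simp only [one_smul, map_sub]
    rw [hc f hf f₀ hf₀]
    congr 1
    abel
  · rintro rfl
    simp at ht
  · simp only
    rw [map_add, ht, add_smul, one_smul]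
    congr 1
    abel

/-- A cluster of size `p ^ 2` that tiles has a tiling with a nonzero period. -/
theorem exists_periodic_tile {p : ℕ} (hp : p.Prime) {F : Finset (Fin 3 → ℤ)} (hF : F.card = p ^ 2)
    {g : (Fin 3 → ℤ) → ℝ} (hg : ZeroOne g) (hT : Tile F 1 g) :
    ∃ g' : (Fin 3 → ℤ) → ℝ, ZeroOne g' ∧ Tile F 1 g' ∧ ∃ w ≠ 0, w ∈ periods g' := by
  have hF0 : F.Nonempty := Finset.card_pos.1 (by rw [hF]; exact pow_pos hp.pos 2)
  by_cases hpl : Planar F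
  · exact exists_periodic_of_planar hpl hF0 hg hT
  · obtain ⟨b, q, 𝒦, g₁, hb, hq, hK, hg₁, hT₁, hdec⟩ := exists_decomp hp hF hpl hg hT
    exact exists_periodic_of_decomp hF0 hb _ hq rfl hK hg₁ hT₁ hdec

/-! ### From indicator functions to tilings -/

open Classical in
/-- A sum of values of an indicator function is `1` iff exactly one term is nonzero. -/
theorem isTiling_iff_tile (F : Finset (Fin 3 → ℤ)) (T : Set (Fin 3 → ℤ)) :
    IsTiling F T ↔ Tile F 1 (fun x => if x ∈ T then (1 : ℝ) else 0) := by
  unfold IsTiling Tile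
  refine forall_congr' fun q => ?_
  simp only [one_smul, Finset.sum_boole, Nat.cast_eq_one, Finset.card_eq_one]
  constructor
  · rintro ⟨⟨a, t⟩, ⟨ha, ht, hq⟩, hu⟩
    refine ⟨a, Finset.ext fun f => ?_⟩
    rw [Finset.mem_filter, Finset.mem_singleton]
    constructor
    · rintro ⟨hf, hfT⟩
      exact congrArg Prod.fst (hu (f, q - f) ⟨hf, hfT, by simp⟩)
    · rintro rfl
      exact ⟨ha, by rw [hq]; simpa using ht⟩
  · rintro ⟨a, ha⟩
    have h1 := ha ▸ Finset.mem_singleton_self a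
    rw [Finset.mem_filter] at h1
    refine ⟨(a, q - a), ⟨h1.1, h1.2, by simp⟩, ?_⟩
    rintro ⟨f, t⟩ ⟨hf, ht, hq⟩
    have h2 : f ∈ ({a} : Finset (Fin 3 → ℤ)) := by
      rw [← ha, Finset.mem_filter]
      exact ⟨hf, by rw [hq]; simpa using ht⟩
    rw [Finset.mem_singleton] at h2
    subst h2
    simp [hq]

theorem exists_weakly_periodic_tiling_of_card_prime_sq
    (p : ℕ) (hp : p.Prime) (F : Set (Fin 3 → ℤ)) (hF : F.Finite)
    (hcard : F.ncard = p ^ 2) (hexact : ∃ T, IsTiling F T) :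
    ∃ T : Set (Fin 3 → ℤ), IsTiling F T ∧ WeaklyPeriodic T := by
  classical
  lift F to Finset (Fin 3 → ℤ) using hF
  rw [Set.ncard_coe_finset] at hcard
  obtain ⟨T, hT⟩ := hexact
  obtain ⟨g, hg, hgT, w, hw, hwg⟩ := exists_periodic_tile hp hcard
    (fun x => by by_cases h : x ∈ T <;> simp [h]) ((isTiling_iff_tile F T).1 hT)
  have hg' : g = fun x => if x ∈ {x | g x = 1} then (1 : ℝ) else 0 := by
    funext x
    rcases hg x with h | h <;> simp [h]
  refine ⟨{x | g x = 1}, (isTiling_iff_tile F _).2 ?_, 1, fun _ => {x | g x = 1},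
    fun i j hij => absurd (Subsingleton.elim i j) hij, Set.iUnion_const _, fun _ =>
    ⟨Submodule.span ℤ {w}, ?_, fun v hv => ?_⟩⟩
  · convert hgT using 1
    exact hg'.symm
  · rw [← (LinearEquiv.toSpanNonzeroSingleton ℤ _ w hw).finrank_eq, Module.finrank_self]
  · obtain ⟨c, rfl⟩ := Submodule.mem_span_singleton.1 hv
    have h1 := zsmul_mem hwg c
    ext x
    constructor
    · rintro ⟨y, hy, rfl⟩
      show g (c • w + y) = 1
      rw [add_comm, h1 y]
      exact hy
    · intro hx
      refine ⟨-(c • w) + x, ?_, by simp⟩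
      show g (-(c • w) + x) = 1
      rw [add_comm, neg_mem h1 x]
      exact hx
end

section
/- Let F ⊆ ℤ be an exact cluster. Then there is a positive integer n such that n + T = T for every F-tiling T of ℤ; in particular every F-tiling of ℤ is periodic. -/
/-!
Let `m` and `M` be the minimum and maximum of `F`, and `D = M - m`. Whether `s` lies in a tiling
`T` is decided by the `D` points before `s` (look at how `s + m` is covered), and equally by the
`D` points after `s` (look at how `s + M` is covered); see `IsTilingZ.mem_iff`. So two positions
around which `T` shows the same window of length `D + 1` differ by a period of `T`
(`IsTilingZ.shift_invariant`). There are only `N = 2 ^ (D + 1)` windows, so by the pigeonhole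
principle every tiling has a positive period that is at most `N`, and `N !` is a period of all of
them.
-/

/-- `T` is an `F`-tiling of `ℤ`: every point of `ℤ` is uniquely expressible as `a + t`
with `a ∈ F`, `t ∈ T`. -/
def IsTilingZ (F T : Set ℤ) : Prop :=
  ∀ q : ℤ, ∃! p : ℤ × ℤ, p.1 ∈ F ∧ p.2 ∈ T ∧ q = p.1 + p.2

/-- For any fixed `c ∈ F`, the point `s` belongs to the tiling exactly when no other element of `F`
covers `s + c`. -/
lemma IsTilingZ.mem_iff {F T : Set ℤ} (h : IsTilingZ F T) {c : ℤ} (hc : c ∈ F) (s : ℤ) :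
    s ∈ T ↔ ∀ a ∈ F, a ≠ c → s + c - a ∉ T := by
  obtain ⟨⟨a₀, t₀⟩, ⟨ha₀, ht₀, hq⟩, huniq⟩ := h (s + c)
  simp only at ha₀ ht₀ hq
  constructor
  · intro hs a ha hac hT
    have h₁ := huniq (c, s) ⟨hc, hs, by simp; ring⟩
    have h₂ := huniq (a, s + c - a) ⟨ha, hT, by simp⟩
    exact hac (congrArg Prod.fst (h₂.trans h₁.symm))
  · intro hall
    by_cases hac : a₀ = c
    · have : s = t₀ := by linarith
      exact this ▸ ht₀
    · have : s + c - a₀ = t₀ := by linarith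
      exact absurd (this ▸ ht₀) (hall a₀ ha₀ hac)

/-- If a tiling looks the same in the windows of length `M - m + 1` starting at `x` and at `y`,
then it is invariant under translation by `y - x`. -/
lemma IsTilingZ.shift_invariant {F T : Set ℤ} (h : IsTilingZ F T) {m M : ℤ} (hm : m ∈ F)
    (hM : M ∈ F) (hmin : ∀ a ∈ F, m ≤ a) (hmax : ∀ a ∈ F, a ≤ M) {x y : ℤ}
    (hxy : ∀ i, 0 ≤ i → i ≤ M - m → (x + i ∈ T ↔ y + i ∈ T)) (k : ℤ) :
    x + k ∈ T ↔ y + k ∈ T := by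
  have hmM := hmin M hM
  suffices H : ∀ i, 0 ≤ i → i ≤ M - m → (x + (k + i) ∈ T ↔ y + (k + i) ∈ T) by
    simpa using H 0 le_rfl (by linarith)
  induction k using Int.induction_on with
  | zero => simpa using hxy
  | succ k ih =>
    intro i hi0 hi
    rcases hi.lt_or_eq with hlt | rfl
    · have := ih (i + 1) (by omega) (by omega)
      rwa [show (k : ℤ) + (i + 1) = k + 1 + i by ring] at this
    · rw [h.mem_iff hm, h.mem_iff hm]
      refine forall₃_congr fun a ha hne => not_congr ?_
      have h₁ := hmin a ha
      have h₂ := hmax a ha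
      have := ih (1 + M - a) (by omega) (by omega)
      convert this using 2 <;> ring
  | pred k ih =>
    intro i hi0 hi
    rcases hi0.lt_or_eq with hlt | rfl
    · have := ih (i - 1) (by omega) (by omega)
      rwa [show -(k : ℤ) + (i - 1) = -k - 1 + i by ring] at this
    · rw [h.mem_iff hM, h.mem_iff hM]
      refine forall₃_congr fun a ha hne => not_congr ?_
      have h₁ := hmin a ha
      have h₂ := hmax a ha
      have := ih (M - a - 1) (by omega) (by omega)
      convert this using 2 <;> ring

/-- Some positive period is at most the number of subsets of a window, a bound that does
not depend on the tiling. -/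
lemma IsTilingZ.exists_period_le {F T : Set ℤ} (h : IsTilingZ F T) {m M : ℤ} (hm : m ∈ F)
    (hM : M ∈ F) (hmin : ∀ a ∈ F, m ≤ a) (hmax : ∀ a ∈ F, a ≤ M) :
    ∃ p : ℕ, 0 < p ∧ p ≤ 2 ^ (Finset.Icc 0 (M - m)).card ∧
      Function.Periodic (· ∈ T) (p : ℤ) := by
  classical
  obtain ⟨i, hi, j, hj, hne, heq⟩ := Finset.exists_ne_map_eq_of_card_lt_of_maps_to
    (s := Finset.range (2 ^ (Finset.Icc 0 (M - m)).card + 1))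
    (t := (Finset.Icc 0 (M - m)).powerset)
    (f := fun n : ℕ => (Finset.Icc 0 (M - m)).filter fun r => (n : ℤ) + r ∈ T)
    (by rw [Finset.card_powerset, Finset.card_range]; exact Nat.lt_succ_self _)
    (fun n _ => Finset.mem_coe.mpr (Finset.mem_powerset.mpr (Finset.filter_subset _ _)))
  rw [Finset.mem_range] at hi hj
  wlog hij : i < j generalizing i j
  · exact this j hj i hi hne.symm heq.symm (by omega)
  refine ⟨j - i, by omega, by omega, fun z => propext ?_⟩
  have := h.shift_invariant hm hM hmin hmax (x := i) (y := j) (fun r h0 h1 => by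
    have := Finset.ext_iff.mp heq r
    simpa only [Finset.mem_filter, Finset.mem_Icc, h0, h1, true_and] using this) (z - i)
  rw [show (i : ℤ) + (z - i) = z by ring] at this
  simp only
  rw [this, Nat.cast_sub hij.le, show (j : ℤ) + (z - i) = z + (j - i) by ring]

theorem uniform_periodicity_of_one_dimensional_tilings
    (F : Set ℤ) (hF : F.Finite) (hexact : ∃ T, IsTilingZ F T) :
    ∃ n : ℕ, 0 < n ∧ ∀ T : Set ℤ, IsTilingZ F T → (fun x => (n : ℤ) + x) '' T = T := by
  obtain ⟨T₀, hT₀⟩ := hexact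
  obtain ⟨p, ⟨hp, -⟩, -⟩ := hT₀ 0
  have hne : F.Nonempty := ⟨p.1, hp⟩
  obtain ⟨m, hm, hmin⟩ := Set.exists_min_image F id hF hne
  obtain ⟨M, hM, hmax⟩ := Set.exists_max_image F id hF hne
  refine ⟨(2 ^ (Finset.Icc 0 (M - m)).card).factorial, Nat.factorial_pos _, fun T hT => ?_⟩
  obtain ⟨p, hp0, hple, hper⟩ := hT.exists_period_le hm hM hmin hmax
  obtain ⟨k, hk⟩ := Nat.dvd_factorial hp0 hple
  rw [hk]
  have hper' : Function.Periodic (· ∈ T) ((p * k : ℕ) : ℤ) := by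
    have := hper.nat_mul k
    rwa [Nat.mul_comm, Nat.cast_mul]
  ext z
  constructor
  · rintro ⟨x, hx, rfl⟩
    have := hper' x
    simp only [eq_iff_iff] at this
    simpa only [add_comm] using this.mpr hx
  · intro hz
    refine ⟨z - (p * k : ℕ), ?_, by ring⟩
    have := hper' (z - (p * k : ℕ))
    simp only [eq_iff_iff, sub_add_cancel] at this
    exact this.mp hz
end

section
/- Let F be a finite subset of ℤ³, p a prime, and g a nonzero vector in ℤ³. Assume that whenever π is a plane in ℝ³ parallel to g, the cardinality |π ∩ F| is divisible by p. Then whenever ℓ is a line in ℝ³ parallel to g, the cardinality |ℓ ∩ F| is divisible by p. -/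
/-!
Only finitely many of the infinitely many planes containing `ℓ` meet the finite set `F` outside
`ℓ`. Any other plane `π ⊇ ℓ` is parallel to `g` and satisfies `π ∩ F = ℓ ∩ F`, so divisibility
for `π` is divisibility for `ℓ`. Such a plane is `q + ker φ`, where `q ∈ ℓ` and `φ` is a linear
functional vanishing on the direction `D` of `ℓ` but not on `x - q` for any `x ∈ F` outside `ℓ`;
`φ` comes from a functional on the quotient `ℝ³ / D` that is nonzero at finitely many given
nonzero vectors (`Module.exists_dual_forall_apply_ne_zero`).
-/

/-- The canonical embedding of `ℤ³` into `ℝ³`. -/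
def coe3 (x : Fin 3 → ℤ) : Fin 3 → ℝ := fun i => (x i : ℝ)

theorem lines_divisible_of_planes_divisible
    (F : Set (Fin 3 → ℤ)) (hF : F.Finite) (p : ℕ) (hp : p.Prime)
    (g : Fin 3 → ℤ) (hg : g ≠ 0)
    (hplanes : ∀ π : AffineSubspace ℝ (Fin 3 → ℝ),
      Module.finrank ℝ π.direction = 2 → coe3 g ∈ π.direction →
        p ∣ {x ∈ F | coe3 x ∈ π}.ncard) :
    ∀ ℓ : AffineSubspace ℝ (Fin 3 → ℝ),
      Module.finrank ℝ ℓ.direction = 1 → coe3 g ∈ ℓ.direction →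
        p ∣ {x ∈ F | coe3 x ∈ ℓ}.ncard := by
  intro ℓ hℓ hgℓ
  -- The empty affine subspace has direction `⊥`, of dimension `0`.
  obtain ⟨q, hq⟩ : (ℓ : Set (Fin 3 → ℝ)).Nonempty := by
    rw [AffineSubspace.nonempty_iff_ne_bot]
    rintro rfl
    rw [AffineSubspace.direction_bot, finrank_bot] at hℓ
    exact zero_ne_one hℓ
  obtain ⟨v, hv⟩ : ∃ v, v ∉ ℓ.direction := by
    by_contra! h
    rw [(Submodule.eq_top_iff').2 h] at hℓ
    simp at hℓ
  have mem_iff (y : Fin 3 → ℝ) : y ∈ ℓ ↔ y - q ∈ ℓ.direction :=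
    (AffineSubspace.vsub_right_mem_direction_iff_mem hq y).symm
  let ι := {x // x ∈ F ∧ coe3 x ∉ ℓ}
  have : Finite ι := (hF.subset (fun x hx => hx.1) : {x | x ∈ F ∧ coe3 x ∉ ℓ}.Finite)
  -- The extra vector `v ∉ D` forces `φ ≠ 0` even when `F ⊆ ℓ`.
  let w : Option ι → Fin 3 → ℝ := fun i => i.elim v fun x => coe3 x.1 - q
  obtain ⟨f, hf⟩ := Module.exists_dual_forall_apply_ne_zero (K := ℝ)
    (fun i => ℓ.direction.mkQ (w i)) (by
      rintro (_ | x)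
      · simpa [w] using hv
      · have := x.2.2
        rw [mem_iff] at this
        rwa [Submodule.mkQ_apply, Ne, Submodule.Quotient.mk_eq_zero])
  let φ : Module.Dual ℝ (Fin 3 → ℝ) := f.comp ℓ.direction.mkQ
  have hφ : φ ≠ 0 := fun h => hf none (LinearMap.congr_fun h v)
  have hle : ∀ u ∈ ℓ.direction, φ u = 0 := fun u hu => by
    simp [φ, (Submodule.Quotient.mk_eq_zero _).2 hu]
  have hrank := Module.Dual.finrank_ker_add_one_of_ne_zero hφ
  rw [Module.finrank_fin_fun] at hrank
  have key := hplanes (AffineSubspace.mk' q (LinearMap.ker φ))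
    (by rw [AffineSubspace.direction_mk']; omega)
    (by rw [AffineSubspace.direction_mk']; exact hle _ hgℓ)
  convert key using 3
  ext x
  refine and_congr_right fun hx => ?_
  rw [AffineSubspace.mem_mk', LinearMap.mem_ker, vsub_eq_sub]
  refine ⟨fun h => hle _ ((mem_iff _).1 h), fun h => ?_⟩
  by_contra hxl
  exact hf (some ⟨x, hx, hxl⟩) h
end

section
/- Let p be a prime and F ⊆ ℤ³ a set of size p². Suppose there is a nonzero vector g ∈ ℤ³ such that every plane in ℝ³ parallel to g intersects F in a set of size divisible by p, and suppose there is a plane π′ not parallel to g such that every plane parallel to π′ intersects F in a set of size divisible by p. Then F is a prism whose foundation has size p. -/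
/-- `S ⊆ ℤ³` is a prism with a foundation of cardinality `c`: there are a rank-2 subgroup
`Λ` of `ℤ³` (the base), a nonzero vector `g` with `ℤg + Λ` of rank 3 (the axis), a vector
`h` and integers `0 = n₀, n₁, …, n_k` with
`S = ⋃ᵢ (nᵢ • g + ((h + Λ) ∩ S))`, where the foundation `(h + Λ) ∩ S` has cardinality `c`. -/
def IsPrismWithFoundationCard (S : Set (Fin 3 → ℤ)) (c : ℕ) : Prop :=
  ∃ (Λ : Submodule ℤ (Fin 3 → ℤ)) (g h : Fin 3 → ℤ) (k : ℕ) (n : Fin (k + 1) → ℤ),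
    Module.finrank ℤ Λ = 2 ∧ g ≠ 0 ∧
    Module.finrank ℤ ↥(Submodule.span ℤ {g} ⊔ Λ) = 3 ∧
    n 0 = 0 ∧
    (S = ⋃ i : Fin (k + 1),
      (fun x => n i • g + x) '' (((fun x => h + x) '' (Λ : Set (Fin 3 → ℤ))) ∩ S)) ∧
    (((fun x => h + x) '' (Λ : Set (Fin 3 → ℤ))) ∩ S).ncard = c

theorem coe3_add (x y : Fin 3 → ℤ) : coe3 (x + y) = coe3 x + coe3 y := by
  ext i; simp [coe3]

theorem coe3_sub (x y : Fin 3 → ℤ) : coe3 (x - y) = coe3 x - coe3 y := by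
  ext i; simp [coe3]

theorem coe3_zsmul (n : ℤ) (x : Fin 3 → ℤ) : coe3 (n • x) = (n : ℝ) • coe3 x := by
  ext i; simp [coe3]

theorem coe3_ne_zero {x : Fin 3 → ℤ} (hx : x ≠ 0) : coe3 x ≠ 0 := by
  intro h
  apply hx
  ext i
  have := congrFun h i
  simpa [coe3] using this

/-- The integer vectors on the real line spanned by `g` form a cyclic group: a coordinate in which
`g` does not vanish embeds this group into `ℤ`. -/
theorem exists_primitive_s3 (g : Fin 3 → ℤ) (hg : g ≠ 0) :
    ∃ g' : Fin 3 → ℤ, (∃ k : ℤ, g = k • g') ∧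
      ∀ x : Fin 3 → ℤ, coe3 x ∈ Submodule.span ℝ {coe3 g} → ∃ n : ℤ, x = n • g' := by
  obtain ⟨i, hi⟩ : ∃ i, g i ≠ 0 := by
    by_contra! h
    exact hg (funext h)
  let N : Submodule ℤ (Fin 3 → ℤ) :=
    { carrier := {x | ∀ j, g i * x j = x i * g j}
      add_mem' := by
        intro a b ha hb j
        simp only [Pi.add_apply, mul_add, add_mul, ha j, hb j]
      zero_mem' := by intro j; simp
      smul_mem' := by
        intro c x hx j
        simp only [Pi.smul_apply, smul_eq_mul]
        linear_combination c * hx j }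
  have hN : ∀ x ∈ N, ∀ j, g i * x j = x i * g j := fun x hx => hx
  obtain ⟨a, ha⟩ := (IsPrincipalIdealRing.principal (N.map (LinearMap.proj i))).principal
  obtain ⟨g', hg'N, hg'a⟩ : a ∈ N.map (LinearMap.proj i : (Fin 3 → ℤ) →ₗ[ℤ] ℤ) := by
    rw [ha]; exact Submodule.mem_span_singleton_self a
  have key : ∀ x ∈ N, ∃ n : ℤ, x = n • g' := by
    intro x hx
    have hxi : x i ∈ N.map (LinearMap.proj i : (Fin 3 → ℤ) →ₗ[ℤ] ℤ) := ⟨x, hx, rfl⟩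
    rw [ha] at hxi
    obtain ⟨n, hn⟩ := Submodule.mem_span_singleton.1 hxi
    refine ⟨n, funext fun j => ?_⟩
    have h1 := hN x hx j
    have h2 := hN g' hg'N j
    have h3 : g' i = a := hg'a
    rw [smul_eq_mul] at hn
    apply mul_left_cancel₀ hi
    simp only [Pi.smul_apply, smul_eq_mul]
    rw [h1, ← hn, ← h3]
    linear_combination -n * h2
  refine ⟨g', key g (fun j => rfl), fun x hx => key x fun j => ?_⟩
  obtain ⟨t, ht⟩ := Submodule.mem_span_singleton.1 hx
  have hc : ∀ j, t * (g j : ℝ) = x j := fun j => by simpa [coe3] using congrFun ht j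
  have : (g i : ℝ) * x j = x i * g j := by rw [← hc, ← hc]; ring
  exact_mod_cast this

/-- Some plane through the origin contains `u` but no vector of the finite set `T` outside the
line spanned by `u`. -/
theorem exists_plane_avoiding (u : Fin 3 → ℝ) (hu : u ≠ 0) (T : Finset (Fin 3 → ℝ)) :
    ∃ W : Submodule ℝ (Fin 3 → ℝ), Module.finrank ℝ W = 2 ∧ u ∈ W ∧
      ∀ w ∈ T, w ∈ W → w ∈ Submodule.span ℝ {u} := by
  classical
  let s : Finset (Submodule ℝ (Fin 3 → ℝ)) :=
    (insert u T).image fun w => Submodule.span ℝ {u, w}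
  have htop : ⊤ ∉ s := by
    intro h
    obtain ⟨w, -, hw⟩ := Finset.mem_image.1 h
    have h1 : Module.finrank ℝ (Submodule.span ℝ ({u, w} : Set (Fin 3 → ℝ))) ≤ 2 := by
      have := finrank_span_finset_le_card (R := ℝ) ({u, w} : Finset (Fin 3 → ℝ))
      have h2 := Finset.card_le_two (a := u) (b := w)
      have h3 := this.trans h2
      rwa [Finset.coe_pair] at h3
    rw [hw, finrank_top] at h1
    simp at h1
  obtain ⟨v, hv⟩ := (Set.ne_univ_iff_exists_notMem _).1
    (Subspace.biUnion_ne_univ_of_top_notMem htop)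
  have hv' : ∀ w ∈ insert u T, v ∉ Submodule.span ℝ ({u, w} : Set (Fin 3 → ℝ)) := by
    intro w hw hvw
    apply hv
    simp only [Set.mem_iUnion]
    exact ⟨_, Finset.mem_image_of_mem _ hw, hvw⟩
  have hvu : v ∉ Submodule.span ℝ {u} := by
    have := hv' u (Finset.mem_insert_self _ _)
    simpa using this
  refine ⟨Submodule.span ℝ {u, v}, ?_, Submodule.subset_span (by simp), ?_⟩
  · have hli : LinearIndependent ℝ ![u, v] := by
      rw [LinearIndependent.pair_iff' hu]
      intro a ha
      exact hvu (Submodule.mem_span_singleton.2 ⟨a, ha⟩)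
    have := finrank_span_eq_card hli
    rwa [Matrix.range_cons_cons_empty, Fintype.card_fin] at this
  · intro w hwT hw
    obtain ⟨a, b, hab⟩ := Submodule.mem_span_pair.1 hw
    by_cases hb : b = 0
    · subst hb
      exact Submodule.mem_span_singleton.2 ⟨a, by simpa using hab⟩
    · exfalso
      apply hv' w (Finset.mem_insert_of_mem hwT)
      refine Submodule.mem_span_pair.2 ⟨-(b⁻¹ * a), b⁻¹, ?_⟩
      rw [← hab, smul_add, smul_smul, smul_smul, inv_mul_cancel₀ hb, neg_smul]
      simp

theorem dvd_card_line
    (p : ℕ) (F : Set (Fin 3 → ℤ)) (hF : F.Finite) (g : Fin 3 → ℤ) (hg : g ≠ 0)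
    (hplanes : ∀ π : AffineSubspace ℝ (Fin 3 → ℝ),
      Module.finrank ℝ π.direction = 2 → coe3 g ∈ π.direction →
        p ∣ {x ∈ F | coe3 x ∈ π}.ncard) (x : Fin 3 → ℤ) :
    p ∣ {y ∈ F | coe3 (y - x) ∈ Submodule.span ℝ {coe3 g}}.ncard := by
  classical
  obtain ⟨W, hW, hgW, hT⟩ := exists_plane_avoiding (coe3 g) (coe3_ne_zero hg)
    (hF.toFinset.image fun y => coe3 (y - x))
  have h := hplanes (AffineSubspace.mk' (coe3 x) W) (by rwa [AffineSubspace.direction_mk'])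
    (by rwa [AffineSubspace.direction_mk'])
  convert h using 2
  ext y
  simp only [Set.mem_ofPred_eq, AffineSubspace.mem_mk', vsub_eq_sub, ← coe3_sub]
  refine and_congr_right fun hy => ⟨fun h => ?_, fun h => ?_⟩
  · exact (Submodule.span_singleton_le_iff_mem _ _).2 hgW h
  · exact hT _ (Finset.mem_image_of_mem _ (hF.mem_toFinset.2 hy)) h

/-- If a set of `p ^ 2` points has all nonempty fibres of `L` of size at least `p`, and through each
of its points a transversal `A x` of size at least `p` on which `L` is injective, then the fibres
have size exactly `p` and each transversal meets each of them. -/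
theorem grid_of_card {α β : Type*} [DecidableEq β] (p : ℕ) (hp : 0 < p) (F : Finset α) (L : α → β)
    (hF : F.card = p ^ 2) (A : α → Finset α) (hAF : ∀ x ∈ F, A x ⊆ F)
    (hAL : ∀ x ∈ F, Set.InjOn L (A x)) (hA : ∀ x ∈ F, p ≤ (A x).card)
    (hB : ∀ x ∈ F, p ≤ (F.filter fun y => L y = L x).card) :
    (∀ x ∈ F, ∀ y ∈ F, ∃ z ∈ A x, L z = L y) ∧
      ∀ x ∈ F, (F.filter fun y => L y = L x).card = p := by
  have hsum := Finset.card_eq_sum_card_image L F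
  have hfib : ∀ b ∈ F.image L, p ≤ (F.filter fun y => L y = b).card := by
    intro b hb
    obtain ⟨x, hx, rfl⟩ := Finset.mem_image.1 hb
    exact hB x hx
  have hle : (F.image L).card ≤ p := by
    have := Finset.card_nsmul_le_sum _ _ _ hfib
    rw [← hsum, hF, smul_eq_mul, sq] at this
    exact Nat.le_of_mul_le_mul_right this hp
  have himg : ∀ x ∈ F, (A x).image L = F.image L := by
    intro x hx
    apply Finset.eq_of_subset_of_card_le (Finset.image_subset_image (hAF x hx))
    rw [Finset.card_image_of_injOn (hAL x hx)]
    exact hle.trans (hA x hx)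
  refine ⟨fun x hx y hy => ?_, fun x hx => ?_⟩
  · have : L y ∈ (A x).image L := by
      rw [himg x hx]; exact Finset.mem_image_of_mem _ hy
    exact Finset.mem_image.1 this
  · have hcard : (F.image L).card = p := by
      apply le_antisymm hle
      rw [← himg x hx, Finset.card_image_of_injOn (hAL x hx)]
      exact hA x hx
    have := (Finset.sum_eq_sum_iff_of_le hfib).1 (by
      rw [← hsum, hF, Finset.sum_const, hcard, smul_eq_mul, sq])
    exact (this (L x) (Finset.mem_image_of_mem _ hx)).symm

theorem finrank_ker (φ : (Fin 3 → ℤ) →ₗ[ℤ] ℚ) (g : Fin 3 → ℤ) (hg : φ g ≠ 0) :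
    Module.finrank ℤ φ.ker = 2 ∧ Module.finrank ℤ ↥(Submodule.span ℤ {g} ⊔ φ.ker) = 3 := by
  have hg0 : g ≠ 0 := by rintro rfl; simp at hg
  have h1 : Module.rank ℤ φ.range = 1 := by
    apply le_antisymm
    · refine (Submodule.rank_le _).trans ?_
      rw [← IsFractionRing.rank_right_eq ℤ ℚ ℚ]; simp
    · rw [Cardinal.one_le_iff_ne_zero]
      intro h
      rw [rank_zero_iff] at h
      have := congrArg Subtype.val (h.elim ⟨φ g, g, rfl⟩ 0)
      exact hg this
  have h2 := LinearMap.rank_range_add_rank_ker φ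
  have h3 : Module.rank ℤ (Submodule.span ℤ {g}) = 1 := by
    have := rank_span_set (R := ℤ) (s := {g}) (LinearIndepOn.singleton (v := id) hg0)
    simpa using this
  have h4 := Submodule.rank_sup_add_rank_inf_eq (Submodule.span ℤ {g}) φ.ker
  have h5 : Submodule.span ℤ {g} ⊓ φ.ker = ⊥ := by
    rw [eq_bot_iff]
    rintro x ⟨hx, hx'⟩
    obtain ⟨n, rfl⟩ := Submodule.mem_span_singleton.1 hx
    have hn : φ (n • g) = 0 := hx'
    rw [map_smul, smul_eq_zero] at hn
    simp [hn.resolve_right hg]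
  rw [h5, h3] at h4
  rw [h1] at h2
  rw [h2] at h4
  simp only [rank_bot, add_zero, rank_fun', Fintype.card_fin] at h4 h2
  have h6 : Module.finrank ℤ ↥(Submodule.span ℤ {g} ⊔ φ.ker) = 3 := by
    rw [Module.finrank, h4]; simp
  refine ⟨?_, h6⟩
  rw [← Module.finrank_eq_rank] at h2
  have : 1 + Module.finrank ℤ φ.ker = 3 := by exact_mod_cast h2
  omega

/-- A finite set of integers containing `0` can be listed, possibly with repetitions, starting
with `0`. -/
theorem exists_enum (T : Set ℤ) (hT : T.Finite) (h0 : (0 : ℤ) ∈ T) :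
    ∃ (k : ℕ) (n : Fin (k + 1) → ℤ), n 0 = 0 ∧ ∀ m, m ∈ T ↔ ∃ i, n i = m := by
  refine ⟨hT.toFinset.toList.length, fun i => (0 :: hT.toFinset.toList).get i, rfl, fun m => ?_⟩
  have h : (∃ i, (0 :: hT.toFinset.toList).get i = m) ↔ m ∈ 0 :: hT.toFinset.toList :=
    List.mem_iff_get.symm
  refine Iff.trans ?_ h.symm
  simp only [List.mem_cons, Finset.mem_toList, Set.Finite.mem_toFinset]
  constructor
  · exact Or.inr
  · rintro (rfl | h)
    · exact h0
    · exact h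

/-- The prism structure of a set in which, from every point, every value of `L` on the set is
attained by translation along `g'`. -/
theorem isPrism_of_grid (F : Set (Fin 3 → ℤ)) (hF : F.Finite) (c : ℕ) (g' h : Fin 3 → ℤ)
    (hh : h ∈ F) (L : (Fin 3 → ℤ) →ₗ[ℤ] ℝ) (hL : L g' ≠ 0)
    (hgrid : ∀ x ∈ F, ∀ y ∈ F, ∃ n : ℤ, n • g' + x ∈ F ∧ L (n • g' + x) = L y)
    (hc : {y ∈ F | L y = L h}.ncard = c) :
    IsPrismWithFoundationCard F c := by
  obtain ⟨θ, hθ⟩ : ∃ θ : ℝ →ₗ[ℚ] ℚ, θ (L g') ≠ 0 := Module.Projective.exists_dual_ne_zero ℚ hL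
  let φ : (Fin 3 → ℤ) →ₗ[ℤ] ℚ := (θ.restrictScalars ℤ) ∘ₗ L
  have hφ : ∀ x, φ x = θ (L x) := fun x => rfl
  have hφg : φ g' ≠ 0 := hθ
  have hg0 : g' ≠ 0 := by rintro rfl; simp at hL
  obtain ⟨hr2, hr3⟩ := finrank_ker φ g' hφg
  have hfound : ((fun x => h + x) '' (φ.ker : Set (Fin 3 → ℤ))) ∩ F = {y ∈ F | L y = L h} := by
    ext y
    simp only [Set.mem_inter_iff, Set.mem_image, SetLike.mem_coe, LinearMap.mem_ker,
      Set.mem_ofPred_eq]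
    constructor
    · rintro ⟨⟨x, hx, rfl⟩, hy⟩
      refine ⟨hy, ?_⟩
      -- The point above `h` at the level of `h + x` differs from `h` by a multiple of `g'` killed
      -- by `φ`, so it is `h` itself.
      obtain ⟨n, -, hn⟩ := hgrid h hh _ hy
      have h1 : θ (L (n • g' + h)) = θ (L (h + x)) := by rw [hn]
      rw [← hφ, ← hφ, map_add, map_add, hx, map_smul, add_zero, add_eq_right,
        smul_eq_zero] at h1
      have hn0 : n = 0 := h1.resolve_right hφg
      rw [← hn, hn0]; simp
    · rintro ⟨hy, hyL⟩
      exact ⟨⟨y - h, by rw [hφ, map_sub, hyL]; simp, by abel⟩, hy⟩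
  have hcancel : ∀ m n : ℤ, m • L g' = n • L g' → m = n :=
    fun m n hmn => smul_left_injective ℤ hL hmn
  have hTfin : {m : ℤ | m • g' + h ∈ F}.Finite := by
    refine hF.preimage (f := fun m : ℤ => m • g' + h) ?_
    intro a _ b _ hab
    exact smul_left_injective ℤ hg0 (add_right_cancel hab)
  obtain ⟨k, n, hn0, hn⟩ := exists_enum {m : ℤ | m • g' + h ∈ F} hTfin (by simpa using hh)
  refine ⟨φ.ker, g', h, k, n, hr2, hg0, hr3, hn0, ?_, by rw [hfound]; exact hc⟩
  rw [hfound]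
  ext x
  simp only [Set.mem_iUnion, Set.mem_image, Set.mem_ofPred_eq]
  constructor
  · intro hx
    obtain ⟨a, haF, haL⟩ := hgrid x hx h hh
    obtain ⟨b, hbF, hbL⟩ := hgrid h hh x hx
    -- `a` moves `x` down to the level of `h`, and `b` moves `h` up to the level of `x`.
    have hab : b = -a := by
      apply hcancel
      rw [map_add, map_smul] at haL hbL
      rw [neg_smul]
      linear_combination hbL + haL
    obtain ⟨i, hi⟩ := (hn b).1 hbF
    refine ⟨i, a • g' + x, ⟨haF, haL⟩, ?_⟩
    rw [hi, hab, neg_smul]; abel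
  · rintro ⟨i, y, ⟨hyF, hyL⟩, rfl⟩
    have hi : n i • g' + h ∈ F := (hn (n i)).2 ⟨i, rfl⟩
    obtain ⟨b, hbF, hbL⟩ := hgrid y hyF _ hi
    have : b = n i := by
      apply hcancel
      rw [map_add, map_add, map_smul, map_smul, hyL] at hbL
      exact add_right_cancel hbL
    rwa [← this]

theorem prism_of_planes_divisible
    (p : ℕ) (hp : p.Prime) (F : Set (Fin 3 → ℤ)) (hF : F.Finite)
    (hcard : F.ncard = p ^ 2) (g : Fin 3 → ℤ) (hg : g ≠ 0)
    (hplanes : ∀ π : AffineSubspace ℝ (Fin 3 → ℝ),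
      Module.finrank ℝ π.direction = 2 → coe3 g ∈ π.direction →
        p ∣ {x ∈ F | coe3 x ∈ π}.ncard)
    (π' : AffineSubspace ℝ (Fin 3 → ℝ))
    (hπ' : Module.finrank ℝ π'.direction = 2)
    (hπ'g : coe3 g ∉ π'.direction)
    (hπ'planes : ∀ π'' : AffineSubspace ℝ (Fin 3 → ℝ),
      Module.finrank ℝ π''.direction = 2 → π''.direction = π'.direction →
        p ∣ {x ∈ F | coe3 x ∈ π''}.ncard) :
    IsPrismWithFoundationCard F p := by
  classical
  obtain ⟨f, hfg, hfker⟩ := Submodule.exists_dual_map_eq_bot_of_notMem hπ'g inferInstance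
  have hker : π'.direction = f.ker := by
    apply Submodule.eq_of_le_of_finrank_le (LinearMap.le_ker_iff_map.2 hfker)
    have h1 := LinearMap.finrank_range_add_finrank_ker f
    have h2 : 0 < Module.finrank ℝ f.range := by
      rw [Module.finrank_pos_iff_exists_ne_zero]
      exact ⟨⟨f (coe3 g), _, rfl⟩, fun h => hfg (congrArg Subtype.val h)⟩
    simp only [Module.finrank_fintype_fun_eq_card, Fintype.card_fin] at h1
    omega
  let L : (Fin 3 → ℤ) →ₗ[ℤ] ℝ :=
    { toFun := fun x => f (coe3 x)
      map_add' := fun x y => by rw [coe3_add, map_add]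
      map_smul' := fun n x => by rw [coe3_zsmul, map_smul]; simp }
  have hLdef : ∀ x, L x = f (coe3 x) := fun x => rfl
  obtain ⟨g', ⟨k, hk⟩, hg'⟩ := exists_primitive_s3 g hg
  have hLg' : L g' ≠ 0 := by
    intro h
    apply hfg
    rw [← hLdef, hk, map_smul, h, smul_zero]
  have hp0 := hp.pos
  -- A set of points of `F` containing a point and of size divisible by `p` has size at least `p`.
  have hge : ∀ (P : (Fin 3 → ℤ) → Prop) (x : Fin 3 → ℤ), x ∈ F → P x → p ∣ {y ∈ F | P y}.ncard →
      p ≤ (hF.toFinset.filter P).card := by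
    intro P x hx hPx hdvd
    have heq : {y ∈ F | P y} = (hF.toFinset.filter P : Finset (Fin 3 → ℤ)) := by
      ext y; simp
    rw [heq, Set.ncard_coe_finset] at hdvd
    exact Nat.le_of_dvd (Finset.card_pos.2 ⟨x, by simp [hx, hPx]⟩) hdvd
  obtain ⟨hgrid, hfib⟩ := grid_of_card p hp0 hF.toFinset L
    (by rw [← hcard, Set.ncard_eq_toFinset_card F hF])
    (fun x => hF.toFinset.filter fun y => coe3 (y - x) ∈ Submodule.span ℝ {coe3 g})
    (fun x _ => Finset.filter_subset _ _)
    (by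
      intro x _ y hy z hz hyz
      simp only [Finset.coe_filter, Set.mem_ofPred_eq] at hy hz
      obtain ⟨a, ha⟩ := hg' _ hy.2
      obtain ⟨b, hb⟩ := hg' _ hz.2
      have hab : a • L g' = b • L g' := by
        rw [← map_smul, ← map_smul, ← ha, ← hb, map_sub, map_sub, hyz]
      have : a = b := smul_left_injective ℤ hLg' hab
      rw [this, ← hb] at ha
      exact sub_left_injective ha)
    (fun x hx => hge _ x (hF.mem_toFinset.1 hx)
      (by rw [sub_self, show coe3 0 = 0 from funext fun i => by simp [coe3]]
          exact Submodule.zero_mem _)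
      (dvd_card_line p F hF g hg hplanes x))
    (by
      intro x hx
      refine hge _ x (hF.mem_toFinset.1 hx) rfl ?_
      have h := hπ'planes (AffineSubspace.mk' (coe3 x) π'.direction)
        (by rwa [AffineSubspace.direction_mk']) (AffineSubspace.direction_mk' _ _)
      simpa only [AffineSubspace.mem_mk', vsub_eq_sub, hker, LinearMap.mem_ker, map_sub,
        sub_eq_zero, ← hLdef] using h)
  obtain ⟨h, hh⟩ : F.Nonempty := by
    apply Set.nonempty_of_ncard_ne_zero
    rw [hcard]
    positivity
  refine isPrism_of_grid F hF p g' h hh L hLg' ?_ ?_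
  · intro x hx y hy
    obtain ⟨z, hz, hzL⟩ := hgrid x (hF.mem_toFinset.2 hx) y (hF.mem_toFinset.2 hy)
    simp only [Finset.mem_filter, Set.Finite.mem_toFinset] at hz
    obtain ⟨n, hn⟩ := hg' _ hz.2
    have hzn : n • g' + x = z := by rw [← hn]; abel
    exact ⟨n, by rw [hzn]; exact hz.1, by rw [hzn]; exact hzL⟩
  · rw [← hfib h (hF.mem_toFinset.2 hh), ← Set.ncard_coe_finset]
    congr 1
    ext y; simp
end
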